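/- arXiv:math/0112002 — 2 statements merged into one kernel-verified Lean document; each statement's English description precedes it below -/
import Mathlib

section
/- There exist absolute positive constants C₁, C₂ such that the following holds. Let d ≥ 2, s = d(d+3), and N ≤ 1/(40π√d). Then for every T ≥ 0, the Lebesgue measure of {v ∈ E(s,N) : C(v) ≥ T} is at most C₁ s e^{−C₂ T/log d} · |E(s,N)|. -/
/-!
In polar coordinates the system reads `dr/dφ = r P / (1 + Q)`, where `|P|, |Q| ≤ ‖v‖ √d` as long as
`|r| ≤ 1`, also for complex `r`. For `‖v‖ √d ≤ 1/(40π)` every periodic orbit in the disk of radius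
`1/2` is the graph of a `2π`-periodic solution of this equation (`exists_polarSol`), and distinct
orbits give distinct zeros in `(0, 1/2]` of the displacement `r ↦ u(2π) - u(0)`, `u(0) = r`.

The flow enters only through the Euler polygons of the polar equation (`eulC`, `eulR`), which are
visibly holomorphic in the starting point and measurable in `v`, and which converge to the
solutions. Two estimates are played against each other.

* Many zeros force a small displacement. The displacement is holomorphic and at most
  `M = 4π √d N` on a disk about `1/4`. Dividing out `k` zeros and applying the maximum principle
  bounds it at `1/4` by a constant multiple of `M (4/5)^k`. Interpolation at approximate zeros
  makes this work for Euler polygons (`eventually_norm_le`, `eventually_displacement_le`).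
* A small displacement at `1/4` is rare. Moving `v` in the direction of the radial field `(x, y)`
  increases the displacement at `1/4` at a definite rate, so the set of `v` with displacement at
  most `ε` is thin in that direction, and packing disjoint translates of it bounds its proportion in
  the ball by `O(d (d + 3) ε / N)` (`measure_small_displacement`).

With `ε` of order `√d N (4/5)^k` and `k = ⌈T⌉` the tail is `O(s √d (4/5)^T)`
(`measure_many_cycles`). If `√d ≤ (5/4)^(T/2)` the factor `√d` costs half of the exponent; otherwise
`T / log d` is bounded and the claimed bound exceeds the volume of the ball.
-/

open MeasureTheory Metric
open scoped ENNReal NNReal Real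

/-- Index set of coefficients: pairs `(i,k)` of nonnegative integers with `1 ≤ i+k ≤ d`. -/
def coeffIdx (d : ℕ) : Finset (ℕ × ℕ) :=
  (Finset.range (d + 1) ×ˢ Finset.range (d + 1)).filter
    fun p => 1 ≤ p.1 + p.2 ∧ p.1 + p.2 ≤ d

/-- The space `ℝ^s`, `s = d(d+3)`, of real coefficients `(a_{ki}, b_{ki})` of the pair of
polynomials `F, G` (the `inl` part indexes the `a`'s, the `inr` part the `b`'s). -/
abbrev CoefSpace (d : ℕ) := EuclideanSpace ℝ (↥(coeffIdx d) ⊕ ↥(coeffIdx d))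

/-- `F(x,y) = Σ_{1 ≤ i+k ≤ d} a_{ki} x^k y^i`, where the index pair is `p = (i,k)`. -/
noncomputable def Fpoly (d : ℕ) (v : CoefSpace d) (x y : ℝ) : ℝ :=
  ∑ p : ↥(coeffIdx d), v (Sum.inl p) * x ^ (p : ℕ × ℕ).2 * y ^ (p : ℕ × ℕ).1

/-- `G(x,y) = Σ_{1 ≤ i+k ≤ d} b_{ki} x^k y^i`. -/
noncomputable def Gpoly (d : ℕ) (v : CoefSpace d) (x y : ℝ) : ℝ :=
  ∑ p : ↥(coeffIdx d), v (Sum.inr p) * x ^ (p : ℕ × ℕ).2 * y ^ (p : ℕ × ℕ).1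

/-- The planar vector field `ẋ = -y + F(x,y)`, `ẏ = x + G(x,y)`. -/
noncomputable def vecField (d : ℕ) (v : CoefSpace d) (q : ℝ × ℝ) : ℝ × ℝ :=
  (-q.2 + Fpoly d v q.1 q.2, q.1 + Gpoly d v q.1 q.2)

/-- `Γ` is a (nonconstant) periodic orbit of the vector field `X`: the image of a
nonconstant periodic solution of `ẋ = X(x)`. -/
def IsPeriodicOrbit (X : ℝ × ℝ → ℝ × ℝ) (Γ : Set (ℝ × ℝ)) : Prop :=
  ∃ (sol : ℝ → ℝ × ℝ) (T : ℝ), 0 < T ∧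
    (∀ t, HasDerivAt sol (X (sol t)) t) ∧
    (∀ t, sol (t + T) = sol t) ∧
    (∃ t₁ t₂, sol t₁ ≠ sol t₂) ∧
    Γ = Set.range sol

/-- `Γ` is a limit cycle of `X`: a periodic orbit admitting an open neighbourhood that
meets no other periodic orbit. -/
def IsLimitCycle (X : ℝ × ℝ → ℝ × ℝ) (Γ : Set (ℝ × ℝ)) : Prop :=
  IsPeriodicOrbit X Γ ∧
    ∃ U : Set (ℝ × ℝ), IsOpen U ∧ Γ ⊆ U ∧
      ∀ Γ' : Set (ℝ × ℝ), IsPeriodicOrbit X Γ' → Γ' ≠ Γ → Γ' ∩ U = ∅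

/-- `C(v)`: the number of limit cycles of the vector field with coefficient vector `v`
contained in the closed disk `D_{1/2} = {x² + y² ≤ 1/4}` (valued in `ℝ≥0∞`). -/
noncomputable def limitCycleCount (d : ℕ) (v : CoefSpace d) : ℝ≥0∞ :=
  (({Γ : Set (ℝ × ℝ) | IsLimitCycle (vecField d v) Γ ∧
      Γ ⊆ {q : ℝ × ℝ | q.1 ^ 2 + q.2 ^ 2 ≤ 1 / 4}}).encard : ℕ∞)

/-! ### The polar form of the vector field -/

/-- For `x = r cos φ`, `y = r sin φ` this is `(a F(x,y) + b G(x,y)) / r`, as a polynomial in a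
complex variable `r = z`.  The exponent `i + k - 1` is not truncated because `1 ≤ i + k`. -/
noncomputable def polC (d : ℕ) (v : CoefSpace d) (a b φ : ℝ) (z : ℂ) : ℂ :=
  ∑ p : ↥(coeffIdx d), (((a * v (Sum.inl p) + b * v (Sum.inr p)) *
    (Real.cos φ ^ (p : ℕ × ℕ).2 * Real.sin φ ^ (p : ℕ × ℕ).1) : ℝ) : ℂ) *
      z ^ ((p : ℕ × ℕ).1 + (p : ℕ × ℕ).2 - 1)

/-- The restriction of `polC` to real radii. -/
noncomputable def polR (d : ℕ) (v : CoefSpace d) (a b φ r : ℝ) : ℝ :=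
  ∑ p : ↥(coeffIdx d), ((a * v (Sum.inl p) + b * v (Sum.inr p)) *
    (Real.cos φ ^ (p : ℕ × ℕ).2 * Real.sin φ ^ (p : ℕ × ℕ).1)) *
      r ^ ((p : ℕ × ℕ).1 + (p : ℕ × ℕ).2 - 1)

/-- The right-hand side of the polar equation `dr/dφ = r P / (1 + Q)`, for a complex radius,
where `P = (cos φ F + sin φ G) / r` and `Q = (cos φ G - sin φ F) / r`. -/
noncomputable def fieldC (d : ℕ) (v : CoefSpace d) (φ : ℝ) (z : ℂ) : ℂ :=
  z * polC d v (Real.cos φ) (Real.sin φ) φ z / (1 + polC d v (-Real.sin φ) (Real.cos φ) φ z)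

/-- The right-hand side of the polar equation `dr/dφ = r P / (1 + Q)`, for a real radius. -/
noncomputable def fieldR (d : ℕ) (v : CoefSpace d) (φ r : ℝ) : ℝ :=
  r * polR d v (Real.cos φ) (Real.sin φ) φ r / (1 + polR d v (-Real.sin φ) (Real.cos φ) φ r)

lemma polC_ofReal (d : ℕ) (v : CoefSpace d) (a b φ r : ℝ) :
    polC d v a b φ (r : ℂ) = (polR d v a b φ r : ℂ) := by
  unfold polC polR; push_cast; rfl

lemma fieldC_ofReal (d : ℕ) (v : CoefSpace d) (φ r : ℝ) :
    fieldC d v φ (r : ℂ) = (fieldR d v φ r : ℂ) := by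
  unfold fieldC fieldR; rw [polC_ofReal, polC_ofReal]; push_cast; rfl

/-- `∑ c^{2k} s^{2i} ≤ d` on the unit circle: the terms with `i + k = m` sum to at most
`(c² + s²)^m = 1`. -/
lemma sum_monomial_sq_le (d : ℕ) (c s : ℝ) (h : c ^ 2 + s ^ 2 = 1) :
    ∑ p : ↥(coeffIdx d), (c ^ (p : ℕ × ℕ).2 * s ^ (p : ℕ × ℕ).1) ^ 2 ≤ d := by
  rw [Finset.sum_coe_sort (coeffIdx d) (fun p : ℕ × ℕ => (c ^ p.2 * s ^ p.1) ^ 2)]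
  have hmap : ∀ p ∈ coeffIdx d, p.1 + p.2 ∈ Finset.Icc 1 d := by
    intro p hp
    simp only [coeffIdx, Finset.mem_filter] at hp
    exact Finset.mem_Icc.2 hp.2
  rw [← Finset.sum_fiberwise_of_maps_to hmap]
  have hin : ∀ m ∈ Finset.Icc 1 d,
      ∑ p ∈ (coeffIdx d).filter (fun p => p.1 + p.2 = m), (c ^ p.2 * s ^ p.1) ^ 2 ≤ (1 : ℝ) := by
    intro m _
    calc _ ≤ ∑ p ∈ Finset.HasAntidiagonal.antidiagonal m, (c ^ p.2 * s ^ p.1) ^ 2 := by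
          apply Finset.sum_le_sum_of_subset_of_nonneg
          · intro p hp
            exact Finset.HasAntidiagonal.mem_antidiagonal.2 (Finset.mem_filter.1 hp).2
          · intros; positivity
      _ ≤ ∑ p ∈ Finset.HasAntidiagonal.antidiagonal m,
            (m.choose p.1) • ((s ^ 2) ^ p.1 * (c ^ 2) ^ p.2) := by
          apply Finset.sum_le_sum
          intro p hp
          have hc : 1 ≤ m.choose p.1 := by
            have := Finset.HasAntidiagonal.mem_antidiagonal.1 hp
            exact Nat.choose_pos (by omega)
          have : (1 : ℝ) ≤ (m.choose p.1 : ℝ) := by exact_mod_cast hc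
          have h0 : 0 ≤ (s ^ 2) ^ p.1 * (c ^ 2) ^ p.2 := by positivity
          rw [nsmul_eq_mul]
          calc (c ^ p.2 * s ^ p.1) ^ 2 = 1 * ((s ^ 2) ^ p.1 * (c ^ 2) ^ p.2) := by ring
            _ ≤ _ := by gcongr
      _ = (s ^ 2 + c ^ 2) ^ m := ((Commute.all _ _).add_pow' m).symm
      _ = 1 := by rw [add_comm, h, one_pow]
  calc _ ≤ ∑ _m ∈ Finset.Icc 1 d, (1 : ℝ) := Finset.sum_le_sum hin
    _ = d := by simp

/-- The Cauchy–Schwarz inequality with `sum_monomial_sq_le`; the power `r^{i+k-1}` is at most `1` on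
the unit disk. -/
lemma norm_polC_le (d : ℕ) (v : CoefSpace d) {a b : ℝ} (hab : a ^ 2 + b ^ 2 = 1) (φ : ℝ) {z : ℂ}
    (hz : ‖z‖ ≤ 1) : ‖polC d v a b φ z‖ ≤ ‖v‖ * √d := by
  have hvn : ‖v‖ ^ 2 = ∑ p, v (Sum.inl p) ^ 2 + ∑ p, v (Sum.inr p) ^ 2 := by
    rw [EuclideanSpace.norm_sq_eq, Fintype.sum_sum_type]; simp
  set f : ↥(coeffIdx d) → ℝ := fun p => |a * v (Sum.inl p) + b * v (Sum.inr p)| with hf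
  set g : ↥(coeffIdx d) → ℝ :=
    fun p => |Real.cos φ ^ (p : ℕ × ℕ).2 * Real.sin φ ^ (p : ℕ × ℕ).1| with hg
  have h1 : ‖polC d v a b φ z‖ ≤ ∑ p, f p * g p := by
    refine (norm_sum_le _ _).trans (Finset.sum_le_sum fun p _ => ?_)
    rw [norm_mul, Complex.norm_real, norm_pow, norm_mul]
    calc _ ≤ f p * g p * 1 := by
          simp only [hf, hg, Real.norm_eq_abs]
          gcongr
          exact pow_le_one₀ (norm_nonneg _) hz
      _ = _ := mul_one _
  have h2 : (∑ p, f p * g p) ^ 2 ≤ (∑ p, f p ^ 2) * ∑ p, g p ^ 2 :=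
    Finset.sum_mul_sq_le_sq_mul_sq _ _ _
  have h3 : ∑ p, f p ^ 2 ≤ ‖v‖ ^ 2 := by
    rw [hvn, ← Finset.sum_add_distrib]
    refine Finset.sum_le_sum fun p _ => ?_
    simp only [hf, sq_abs]
    set x := v (Sum.inl p)
    set y := v (Sum.inr p)
    have : x ^ 2 + y ^ 2 = (a * x + b * y) ^ 2 + (a * y - b * x) ^ 2 := by
      linear_combination (-(x ^ 2 + y ^ 2)) * hab
    rw [this]
    nlinarith [sq_nonneg (a * y - b * x)]
  have h4 : ∑ p, g p ^ 2 ≤ d := by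
    simp only [hg, sq_abs]
    exact sum_monomial_sq_le d _ _ (Real.cos_sq_add_sin_sq φ)
  have h5 : (∑ p, f p * g p) ^ 2 ≤ (‖v‖ * √d) ^ 2 := by
    rw [mul_pow, Real.sq_sqrt (Nat.cast_nonneg d)]
    exact h2.trans (mul_le_mul h3 h4 (Finset.sum_nonneg fun _ _ => sq_nonneg _) (sq_nonneg _))
  exact h1.trans (abs_le_of_sq_le_sq' h5 (by positivity)).2

lemma abs_polR_le (d : ℕ) (v : CoefSpace d) {a b : ℝ} (hab : a ^ 2 + b ^ 2 = 1) (φ : ℝ) {r : ℝ}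
    (hr : |r| ≤ 1) : |polR d v a b φ r| ≤ ‖v‖ * √d := by
  have := norm_polC_le d v hab φ (z := r) (by simpa using hr)
  rwa [polC_ofReal, Complex.norm_real] at this

lemma sin_cos_unit (φ : ℝ) : (-Real.sin φ) ^ 2 + Real.cos φ ^ 2 = 1 := by
  rw [neg_sq]; exact Real.sin_sq_add_cos_sq φ

/-- The smallness condition on the coefficients, in the form in which it is used. -/
def SmallCoef (d : ℕ) (v : CoefSpace d) : Prop := ‖v‖ * √d ≤ 1 / (40 * π)

lemma inv_forty_pi_le : 1 / (40 * π) ≤ (1 / 100 : ℝ) := by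
  have := Real.pi_gt_three
  rw [div_le_div_iff₀ (by positivity) (by norm_num)]; linarith

lemma one_add_polR_pos {d : ℕ} {v : CoefSpace d} (hv : SmallCoef d v) (φ : ℝ) {r : ℝ}
    (hr : |r| ≤ 1) : 1 / 2 ≤ 1 + polR d v (-Real.sin φ) (Real.cos φ) φ r ∧
      1 + polR d v (-Real.sin φ) (Real.cos φ) φ r ≤ 2 := by
  have h := abs_le.1 ((abs_polR_le d v (sin_cos_unit φ) φ hr).trans (hv.trans inv_forty_pi_le))
  constructor <;> linarith [h.1, h.2]

lemma half_le_norm_one_add_polC {d : ℕ} {v : CoefSpace d} (hv : SmallCoef d v) (φ : ℝ) {z : ℂ}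
    (hz : ‖z‖ ≤ 1) : 1 / 2 ≤ ‖1 + polC d v (-Real.sin φ) (Real.cos φ) φ z‖ := by
  have h := (norm_polC_le d v (sin_cos_unit φ) φ hz).trans (hv.trans inv_forty_pi_le)
  have h2 := norm_sub_norm_le (1 : ℂ) (-polC d v (-Real.sin φ) (Real.cos φ) φ z)
  rw [norm_neg, sub_neg_eq_add, norm_one] at h2
  linarith

lemma norm_fieldC_le {d : ℕ} {v : CoefSpace d} (hv : SmallCoef d v) (φ : ℝ) {z : ℂ}
    (hz : ‖z‖ ≤ 1) : ‖fieldC d v φ z‖ ≤ 2 * (‖v‖ * √d) := by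
  have h1 := half_le_norm_one_add_polC hv φ hz
  have h2 := norm_polC_le d v (Real.cos_sq_add_sin_sq φ) φ hz
  unfold fieldC
  rw [norm_div, norm_mul, div_le_iff₀ (by linarith)]
  have h0 : 0 ≤ ‖v‖ * √d := by positivity
  calc ‖z‖ * ‖polC d v (Real.cos φ) (Real.sin φ) φ z‖ ≤ 1 * (‖v‖ * √d) := by gcongr
    _ = 2 * (‖v‖ * √d) * (1 / 2) := by ring
    _ ≤ _ := by gcongr

lemma norm_fieldC_le' {d : ℕ} {v : CoefSpace d} (hv : SmallCoef d v) (φ : ℝ) {z : ℂ}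
    (hz : ‖z‖ ≤ 1) : ‖fieldC d v φ z‖ ≤ 1 / (20 * π) := by
  refine (norm_fieldC_le hv φ hz).trans ?_
  have : ‖v‖ * √d ≤ 1 / (40 * π) := hv
  calc 2 * (‖v‖ * √d) ≤ 2 * (1 / (40 * π)) := by gcongr
    _ = 1 / (20 * π) := by field_simp; norm_num

lemma abs_fieldR_le {d : ℕ} {v : CoefSpace d} (hv : SmallCoef d v) (φ : ℝ) {r : ℝ}
    (hr : |r| ≤ 1) : |fieldR d v φ r| ≤ 1 / (20 * π) := by
  have := norm_fieldC_le' hv φ (z := r) (by simpa using hr)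
  rwa [fieldC_ofReal, Complex.norm_real] at this

lemma differentiable_polC (d : ℕ) (v : CoefSpace d) (a b φ : ℝ) :
    Differentiable ℂ (polC d v a b φ) := by
  unfold polC; fun_prop

lemma differentiableAt_fieldC {d : ℕ} {v : CoefSpace d} (hv : SmallCoef d v) (φ : ℝ) {z : ℂ}
    (hz : ‖z‖ ≤ 1) : DifferentiableAt ℂ (fieldC d v φ) z := by
  have h1 := half_le_norm_one_add_polC hv φ hz
  unfold fieldC
  refine DifferentiableAt.div ?_ ?_ ?_
  · exact differentiableAt_id.mul (differentiable_polC d v _ _ φ z)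
  · exact (differentiable_polC d v _ _ φ z).const_add 1
  · intro h0; rw [h0, norm_zero] at h1; norm_num at h1

/-- The polar field is bounded by `1/(20π)` on the unit disk, so Cauchy's estimate on disks of
radius `1/4` gives the Lipschitz constant `1/(5π)` on the disk of radius `3/4`. -/
lemma fieldC_lipschitz {d : ℕ} {v : CoefSpace d} (hv : SmallCoef d v) (φ : ℝ) {z w : ℂ}
    (hz : ‖z‖ ≤ 3 / 4) (hw : ‖w‖ ≤ 3 / 4) :
    ‖fieldC d v φ z - fieldC d v φ w‖ ≤ 1 / (5 * π) * ‖z - w‖ := by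
  have hd : ∀ x ∈ closedBall (0 : ℂ) (3 / 4), ‖deriv (fieldC d v φ) x‖ ≤ 1 / (5 * π) := by
    intro x hx
    have hx' : ‖x‖ ≤ 3 / 4 := by simpa using hx
    have hin : ∀ y ∈ closedBall x (1 / 4), ‖y‖ ≤ 1 := by
      intro y hy
      have := norm_add_le (y - x) x
      rw [sub_add_cancel] at this
      have h2 : ‖y - x‖ ≤ 1 / 4 := by simpa [dist_eq_norm] using hy
      linarith
    have := Complex.norm_deriv_le_of_forall_mem_sphere_norm_le (c := x) (R := 1 / 4)
      (C := 1 / (20 * π)) (f := fieldC d v φ) (by norm_num) ?_ ?_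
    · refine this.trans (le_of_eq ?_)
      field_simp; norm_num
    · refine DifferentiableOn.diffContOnCl ?_
      intro y hy
      exact (differentiableAt_fieldC hv φ
        (hin y (closure_ball_subset_closedBall hy))).differentiableWithinAt
    · intro y hy
      exact norm_fieldC_le' hv φ (hin y (sphere_subset_closedBall hy))
  refine (convex_closedBall (0 : ℂ) (3 / 4)).norm_image_sub_le_of_norm_deriv_le
    (f := fieldC d v φ) ?_ hd (by simpa using hw) (by simpa using hz)
  intro x hx
  exact differentiableAt_fieldC hv φ (le_trans (by simpa using hx) (by norm_num : (3 / 4 : ℝ) ≤ 1))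

lemma fieldR_lipschitz {d : ℕ} {v : CoefSpace d} (hv : SmallCoef d v) (φ : ℝ) {r s : ℝ}
    (hr : |r| ≤ 3 / 4) (hs : |s| ≤ 3 / 4) :
    |fieldR d v φ r - fieldR d v φ s| ≤ 1 / (5 * π) * |r - s| := by
  have := fieldC_lipschitz hv φ (z := r) (w := s) (by simpa using hr) (by simpa using hs)
  rw [fieldC_ofReal, fieldC_ofReal, ← Complex.ofReal_sub, ← Complex.ofReal_sub,
    Complex.norm_real, Complex.norm_real] at this
  exact this

/-! ### Euler polygons of the polar equation -/

/-- The Euler polygon with step `h` for the polar equation, after `j` steps, as a function of a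
complex initial radius. -/
noncomputable def eulC (d : ℕ) (v : CoefSpace d) (h : ℝ) : ℕ → ℂ → ℂ
  | 0, z => z
  | j + 1, z => eulC d v h j z + h * fieldC d v (j * h) (eulC d v h j z)

/-- The Euler polygon with step `h` for the polar equation, for a real initial radius. -/
noncomputable def eulR (d : ℕ) (v : CoefSpace d) (h : ℝ) : ℕ → ℝ → ℝ
  | 0, r => r
  | j + 1, r => eulR d v h j r + h * fieldR d v (j * h) (eulR d v h j r)

lemma eulC_ofReal (d : ℕ) (v : CoefSpace d) (h : ℝ) (j : ℕ) (r : ℝ) :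
    eulC d v h j (r : ℂ) = (eulR d v h j r : ℂ) := by
  induction j with
  | zero => rfl
  | succ j ih => rw [eulC, eulR, ih, fieldC_ofReal]; push_cast; rfl

/-- As long as `j h ≤ 2π`, the polygon moves by at most `2π · 1/(20π) = 1/10` and stays in the
unit disk, where all the estimates on the field hold. -/
lemma eulC_norm {d : ℕ} {v : CoefSpace d} (hv : SmallCoef d v) {h : ℝ} (hh : 0 ≤ h) {z : ℂ}
    (hz : ‖z‖ ≤ 9 / 10) (j : ℕ) (hj : j * h ≤ 2 * π) :
    ‖eulC d v h j z - z‖ ≤ j * h * (1 / (20 * π)) ∧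
      ‖eulC d v h j z - z‖ ≤ j * h * (2 * (‖v‖ * √d)) ∧
      ‖eulC d v h j z - z‖ ≤ 1 / 10 := by
  have key : ∀ e : ℝ, (∀ φ (w : ℂ), ‖w‖ ≤ 1 → ‖fieldC d v φ w‖ ≤ e) → ∀ j : ℕ,
      (∀ i < j, ‖eulC d v h i z‖ ≤ 1) → ‖eulC d v h j z - z‖ ≤ j * h * e := by
    intro e he j
    induction j with
    | zero => intro _; simp [eulC]
    | succ j ih =>
      intro hi
      have h1 := ih fun i hij => hi i (by omega)
      have h2 := he (j * h) _ (hi j (by omega))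
      rw [eulC]
      calc ‖eulC d v h j z + h * fieldC d v (j * h) (eulC d v h j z) - z‖
          = ‖(eulC d v h j z - z) + h * fieldC d v (j * h) (eulC d v h j z)‖ := by ring_nf
        _ ≤ ‖eulC d v h j z - z‖ + ‖(h : ℂ) * fieldC d v (j * h) (eulC d v h j z)‖ :=
            norm_add_le _ _
        _ ≤ j * h * e + h * e := by
            rw [norm_mul, Complex.norm_real, Real.norm_of_nonneg hh]; gcongr
        _ = _ := by push_cast; ring
  have hpi := Real.pi_pos
  have small : ∀ j : ℕ, j * h ≤ 2 * π → ‖eulC d v h j z - z‖ ≤ j * h * (1 / (20 * π)) →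
      ‖eulC d v h j z - z‖ ≤ 1 / 10 := by
    intro j hj h1
    calc _ ≤ _ := h1
      _ ≤ 2 * π * (1 / (20 * π)) := by gcongr
      _ = 1 / 10 := by field_simp; norm_num
  have hin : ∀ j : ℕ, j * h ≤ 2 * π → ‖eulC d v h j z‖ ≤ 1 := by
    intro j
    induction j using Nat.strong_induction_on with
    | _ j ih =>
      intro hj
      have h1 := small j hj (key _ (fun φ w hw => norm_fieldC_le' hv φ hw) j fun i hij =>
        ih i hij (le_trans (by gcongr) hj))
      have := norm_add_le (eulC d v h j z - z) z
      rw [sub_add_cancel] at this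
      linarith
  have hlt : ∀ i < j, ‖eulC d v h i z‖ ≤ 1 := fun i hij => hin i (le_trans (by gcongr) hj)
  have h1 := key _ (fun φ w hw => norm_fieldC_le' hv φ hw) j hlt
  exact ⟨h1, key _ (fun φ w hw => norm_fieldC_le hv φ hw) j hlt, small j hj h1⟩

lemma eulC_differentiableAt {d : ℕ} {v : CoefSpace d} (hv : SmallCoef d v) {h : ℝ} (hh : 0 ≤ h)
    {z : ℂ} (hz : ‖z‖ ≤ 9 / 10) (j : ℕ) (hj : j * h ≤ 2 * π) :
    DifferentiableAt ℂ (eulC d v h j) z := by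
  induction j with
  | zero => exact differentiableAt_id
  | succ j ih =>
    have hj' : j * h ≤ 2 * π := le_trans (by gcongr; omega) hj
    have h1 := ih hj'
    have h2 := (eulC_norm hv hh hz j hj').2.2
    have h3 := norm_add_le (eulC d v h j z - z) z
    rw [sub_add_cancel] at h3
    have h4 := differentiableAt_fieldC hv (j * h) (z := eulC d v h j z) (by linarith)
    exact h1.add ((h4.comp z h1).const_mul _)

lemma eulR_abs {d : ℕ} {v : CoefSpace d} (hv : SmallCoef d v) {h : ℝ} (hh : 0 ≤ h) {r : ℝ}
    (hr : |r| ≤ 9 / 10) (j : ℕ) (hj : j * h ≤ 2 * π) :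
    |eulR d v h j r - r| ≤ 1 / 10 := by
  have := (eulC_norm hv hh (z := r) (by simpa using hr) j hj).2.2
  rwa [eulC_ofReal, ← Complex.ofReal_sub, Complex.norm_real] at this

/-- A solution of the polar equation is followed by its Euler polygon up to `O(ω)`, where `ω` is
the local error per unit of time. The factor `2` solves `1 + 2π L a ≤ a` for `L = 1/(5π)`. -/
lemma eulR_follows {d : ℕ} {v : CoefSpace d} (hv : SmallCoef d v) {h : ℝ} (hh : 0 ≤ h)
    {u : ℝ → ℝ} (hu : ∀ φ, |u φ| ≤ 1 / 2) {ω : ℝ} (hω : 0 ≤ ω) (n : ℕ) (hn : n * h ≤ 2 * π)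
    (hloc : ∀ j < n, |u (j * h + h) - u (j * h) - h * fieldR d v (j * h) (u (j * h))| ≤ h * ω) :
    |eulR d v h n (u 0) - u (n * h)| ≤ 2 * (n * h) * ω := by
  have hpi := Real.pi_pos
  induction n with
  | zero => simp [eulR]
  | succ n ih =>
    have hn' : n * h ≤ 2 * π := le_trans (by gcongr; omega) hn
    have h1 := ih hn' fun j hj => hloc j (by omega)
    have h2 := hloc n (by omega)
    set x := eulR d v h n (u 0) with hx
    set y := u (n * h) with hy
    have hx1 : |x| ≤ 3 / 4 := by
      have h3 := eulR_abs hv hh (r := u 0) ((hu 0).trans (by norm_num)) n hn'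
      have h4 := abs_add_le (x - u 0) (u 0)
      rw [sub_add_cancel] at h4
      linarith [hu 0]
    have h3 := fieldR_lipschitz hv (n * h) hx1 ((hu (n * h)).trans (by norm_num))
    have e : ((n + 1 : ℕ) : ℝ) * h = n * h + h := by push_cast; ring
    rw [e, eulR, ← hx]
    set A := fieldR d v (n * h) x
    set B := fieldR d v (n * h) y
    have h5 : 1 / (5 * π) * (2 * (n * h) * ω) ≤ ω := by
      calc 1 / (5 * π) * (2 * (n * h) * ω) ≤ 1 / (5 * π) * (2 * (2 * π) * ω) := by gcongr
        _ = 4 / 5 * ω := by field_simp; ring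
        _ ≤ ω := by linarith
    have h6 : |A - B| ≤ ω := by
      refine h3.trans (le_trans ?_ h5)
      gcongr
    calc |x + h * A - u (n * h + h)|
        = |(x - y) + h * (A - B) - (u (n * h + h) - y - h * B)| := by ring_nf
      _ ≤ |x - y| + |h * (A - B)| + |u (n * h + h) - y - h * B| := by
          refine (abs_sub _ _).trans ?_
          gcongr
          exact abs_add_le _ _
      _ ≤ 2 * (n * h) * ω + h * ω + h * ω := by
          rw [abs_mul, abs_of_nonneg hh]; gcongr
      _ = _ := by ring

/-- Euler polygons with `n` steps converge to solutions of the polar equation. -/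
lemma eulR_tendsto {d : ℕ} {v : CoefSpace d} (hv : SmallCoef d v) {u : ℝ → ℝ}
    (hu : ∀ φ, |u φ| ≤ 1 / 2) (hd : ∀ φ, HasDerivAt u (fieldR d v φ (u φ)) φ)
    (hc : Continuous fun φ => fieldR d v φ (u φ)) :
    Filter.Tendsto (fun n : ℕ => eulR d v (2 * π / n) n (u 0)) Filter.atTop
      (nhds (u (2 * π))) := by
  have hpi := Real.pi_pos
  rw [Metric.tendsto_atTop]
  intro ε hε
  set ω := ε / (8 * π) with hωdef
  have hω : 0 < ω := by positivity
  have huc : UniformContinuousOn (fun φ => fieldR d v φ (u φ)) (Set.Icc 0 (2 * π)) :=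
    isCompact_Icc.uniformContinuousOn_of_continuous hc.continuousOn
  obtain ⟨δ, hδ, hδω⟩ := Metric.uniformContinuousOn_iff_le.1 huc ω hω
  obtain ⟨n₀, hn₀⟩ := exists_nat_gt (2 * π / δ)
  refine ⟨n₀ + 1, fun n hn => ?_⟩
  have hn0 : (0 : ℝ) < n := by exact_mod_cast (by omega : 0 < n)
  set h := 2 * π / n with hh
  have hhpos : 0 < h := by positivity
  have hnh : n * h = 2 * π := by rw [hh]; field_simp
  have hhδ : h ≤ δ := by
    rw [hh, div_le_iff₀ hn0]
    have h1 : (n₀ : ℝ) ≤ n := by exact_mod_cast (by omega : n₀ ≤ n)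
    rw [div_lt_iff₀ hδ] at hn₀
    nlinarith
  have hfol := eulR_follows hv hhpos.le hu hω.le n hnh.le ?_
  · rw [hnh] at hfol
    rw [Real.dist_eq]
    refine hfol.trans_lt ?_
    rw [hωdef]
    calc 2 * (2 * π) * (ε / (8 * π)) = ε / 2 := by field_simp; norm_num
      _ < ε := by linarith
  · intro j hj
    have hjh : (j : ℝ) * h + h ≤ 2 * π := by
      rw [← hnh]
      have : (j : ℝ) + 1 ≤ n := by exact_mod_cast hj
      nlinarith
    have hj0 : 0 ≤ (j : ℝ) * h := by positivity
    -- mean value inequality for `u(s) - s u'(jh)` on `[jh, jh + h]`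
    have hmv := (convex_Icc ((j : ℝ) * h) (j * h + h)).norm_image_sub_le_of_norm_hasDerivWithin_le
      (f := fun s => u s - s * fieldR d v (j * h) (u (j * h)))
      (f' := fun s => fieldR d v s (u s) - fieldR d v (j * h) (u (j * h))) (C := ω)
      (x := j * h) (y := j * h + h) ?_ ?_ (by simp [hhpos.le]) (by simp [hhpos.le])
    · rw [Real.norm_eq_abs, Real.norm_eq_abs] at hmv
      rw [add_sub_cancel_left, abs_of_pos hhpos, mul_comm ω h] at hmv
      refine le_trans (le_of_eq ?_) hmv
      congr 1; ring
    · intro s _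
      have := (hd s).sub ((hasDerivAt_id s).mul_const (fieldR d v (j * h) (u (j * h))))
      rw [one_mul] at this
      exact this.hasDerivWithinAt
    · intro s hs
      refine hδω s ⟨by linarith [hs.1], by linarith [hs.2]⟩ (j * h) ⟨hj0, by linarith⟩ ?_
      rw [Real.dist_eq, abs_of_nonneg (by linarith [hs.1])]
      linarith [hs.2]

/-! ### Many zeros make a bounded holomorphic function small -/

/-- Zeros of a holomorphic function can be divided out. -/
lemma exists_factor {U : Set ℂ} (hU : IsOpen U) (Z : Finset ℂ) :
    ∀ g : ℂ → ℂ, DifferentiableOn ℂ g U → (∀ w ∈ Z, w ∈ U ∧ g w = 0) →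
      ∃ k : ℂ → ℂ, DifferentiableOn ℂ k U ∧ ∀ z, g z = (∏ w ∈ Z, (z - w)) * k z := by
  induction Z using Finset.induction_on with
  | empty => intro g hg _; exact ⟨g, hg, by simp⟩
  | insert a Z ha ih =>
    intro g hg hz
    have ha0 := hz a (Finset.mem_insert_self _ _)
    have hmul : ∀ z, g z = (z - a) * dslope g a z := by
      intro z
      have := sub_smul_dslope g a z
      rw [ha0.2, sub_zero, smul_eq_mul] at this
      exact this.symm
    obtain ⟨k, hk, hgk⟩ := ih (dslope g a)
      ((Complex.differentiableOn_dslope (hU.mem_nhds ha0.1)).2 hg) (by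
        intro w hw
        refine ⟨(hz w (Finset.mem_insert_of_mem hw)).1, ?_⟩
        have h1 := hmul w
        rw [(hz w (Finset.mem_insert_of_mem hw)).2] at h1
        have hwa : w ≠ a := fun h => ha (h ▸ hw)
        exact (mul_eq_zero.1 h1.symm).resolve_left (sub_ne_zero.2 hwa))
    refine ⟨k, hk, fun z => ?_⟩
    rw [Finset.prod_insert ha, mul_assoc, ← hgk z, hmul z]

/-- If `g` has the zeros `Z` within distance `1/4` of `1/4`, each of them contributes a factor
`(1/4) / (9/16 - 1/4) = 4/5` to the bound of `g(1/4)` in terms of the maximum over the circle of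
radius `9/16` about `1/4`. -/
lemma norm_le_of_zeros (Z : Finset ℂ) (hZ : ∀ w ∈ Z, ‖(1 / 4 : ℂ) - w‖ ≤ 1 / 4) {g : ℂ → ℂ}
    (hg : DifferentiableOn ℂ g (ball (1 / 4) (5 / 8))) (h0 : ∀ w ∈ Z, g w = 0) {M : ℝ}
    (hM : ∀ z ∈ sphere (1 / 4 : ℂ) (9 / 16), ‖g z‖ ≤ M) :
    ‖g (1 / 4)‖ ≤ M * (4 / 5) ^ Z.card := by
  obtain ⟨k, hk, hgk⟩ := exists_factor isOpen_ball Z g hg fun w hw => by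
    refine ⟨?_, h0 w hw⟩
    rw [mem_ball, dist_comm, dist_eq_norm]
    linarith [hZ w hw]
  have hM0 : 0 ≤ M := by
    refine (norm_nonneg _).trans (hM (1 / 4 + (9 / 16 : ℝ)) ?_)
    rw [mem_sphere, dist_eq_norm, add_sub_cancel_left, Complex.norm_real]
    norm_num
  have hsphere : ∀ z ∈ frontier (ball (1 / 4 : ℂ) (9 / 16)), ‖k z‖ ≤ M / (5 / 16) ^ Z.card := by
    intro z hz
    rw [frontier_ball _ (by norm_num)] at hz
    have h1 := hM z hz
    rw [hgk z, norm_mul, norm_prod] at h1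
    have h2 : (5 / 16 : ℝ) ^ Z.card ≤ ∏ w ∈ Z, ‖z - w‖ := by
      rw [← Finset.prod_const]
      refine Finset.prod_le_prod (fun _ _ => by norm_num) fun w hw => ?_
      have h3 : ‖z - 1 / 4‖ = 9 / 16 := by simpa [dist_eq_norm] using hz
      have h4 := norm_add_le (z - w) (w - 1 / 4)
      rw [sub_add_sub_cancel, h3, norm_sub_rev w] at h4
      linarith [hZ w hw]
    rw [le_div_iff₀ (by positivity), mul_comm]
    exact (mul_le_mul_of_nonneg_right h2 (norm_nonneg _)).trans h1
  have hkc : ‖k (1 / 4)‖ ≤ M / (5 / 16) ^ Z.card := by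
    refine Complex.norm_le_of_forall_mem_frontier_norm_le isBounded_ball ?_ hsphere
      (subset_closure (mem_ball_self (by norm_num)))
    refine DifferentiableOn.diffContOnCl (hk.mono ?_)
    exact closure_ball_subset_closedBall.trans (closedBall_subset_ball (by norm_num))
  rw [hgk, norm_mul, norm_prod]
  calc (∏ w ∈ Z, ‖(1 / 4 : ℂ) - w‖) * ‖k (1 / 4)‖
      ≤ (1 / 4 : ℝ) ^ Z.card * (M / (5 / 16) ^ Z.card) := by
        gcongr
        rw [← Finset.prod_const]
        exact Finset.prod_le_prod (fun _ _ => norm_nonneg _) hZ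
    _ = M * ((1 / 4 : ℝ) ^ Z.card / (5 / 16) ^ Z.card) := by ring
    _ = M * (4 / 5) ^ Z.card := by rw [← div_pow]; norm_num

/-- A version of `norm_le_of_zeros` for a sequence of functions tending to zero on `Z`: subtract
the Lagrange interpolation polynomials of the `g n` on `Z`, which tend to zero uniformly on
compact sets. -/
lemma eventually_norm_le (Z : Finset ℂ) (hZ : ∀ w ∈ Z, ‖(1 / 4 : ℂ) - w‖ ≤ 1 / 4)
    {g : ℕ → ℂ → ℂ} {M : ℝ} (hM0 : 0 < M)
    (hg : ∀ᶠ n in Filter.atTop, DifferentiableOn ℂ (g n) (ball (1 / 4) (5 / 8)) ∧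
      ∀ z ∈ sphere (1 / 4 : ℂ) (9 / 16), ‖g n z‖ ≤ M)
    (h0 : ∀ w ∈ Z, Filter.Tendsto (fun n => g n w) Filter.atTop (nhds 0)) :
    ∀ᶠ n in Filter.atTop, ‖g n (1 / 4)‖ ≤ 2 * M * (4 / 5) ^ Z.card := by
  classical
  set ℓ : ℂ → ℂ → ℂ := fun w z => (Lagrange.basis Z id w).eval z with hℓ
  have hℓd : ∀ w, Differentiable ℂ (ℓ w) := fun w => Polynomial.differentiable _
  set p : ℕ → ℂ → ℂ := fun n z => ∑ w ∈ Z, g n w * ℓ w z with hp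
  have hpd : ∀ n, Differentiable ℂ (p n) := by
    intro n
    exact Differentiable.fun_sum fun w _ => (hℓd w).const_mul _
  have hpz : ∀ n, ∀ w ∈ Z, p n w = g n w := by
    intro n w hw
    simp only [hp]
    rw [Finset.sum_eq_single w]
    · have : ℓ w w = 1 := by
        simpa [hℓ] using Lagrange.eval_basis_self (v := (id : ℂ → ℂ)) (Set.injOn_id _) hw
      rw [this, mul_one]
    · intro b _ hbw
      have : ℓ b w = 0 := by
        simpa [hℓ] using Lagrange.eval_basis_of_ne (v := (id : ℂ → ℂ)) hbw hw
      rw [this, mul_zero]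
    · intro h; exact absurd hw h
  have hbd : ∀ w, ∃ A, ∀ z ∈ closedBall (1 / 4 : ℂ) (9 / 16), ‖ℓ w z‖ ≤ A := fun w =>
    (isCompact_closedBall _ _).exists_bound_of_continuousOn (hℓd w).continuous.continuousOn
  choose A hA using hbd
  set η : ℕ → ℝ := fun n => ∑ w ∈ Z, ‖g n w‖ * A w with hη
  have hη0 : Filter.Tendsto η Filter.atTop (nhds 0) := by
    have : Filter.Tendsto η Filter.atTop (nhds (∑ w ∈ Z, 0 * A w)) :=
      tendsto_finsetSum _ fun w hw => by
        have := (h0 w hw).norm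
        rw [norm_zero] at this
        exact this.mul_const _
    simpa using this
  have hpη : ∀ n, ∀ z ∈ closedBall (1 / 4 : ℂ) (9 / 16), ‖p n z‖ ≤ η n := by
    intro n z hz
    refine (norm_sum_le _ _).trans (Finset.sum_le_sum fun w _ => ?_)
    rw [norm_mul]
    exact mul_le_mul_of_nonneg_left (hA w z hz) (norm_nonneg _)
  have hlim : Filter.Tendsto (fun n => (M + η n) * (4 / 5) ^ Z.card + η n) Filter.atTop
      (nhds ((M + 0) * (4 / 5) ^ Z.card + 0)) :=
    ((hη0.const_add M).mul_const _).add hη0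
  have hpos : 0 < M * (4 / 5 : ℝ) ^ Z.card := by positivity
  filter_upwards [hg, hlim.eventually_le_const
    (u := 2 * M * (4 / 5) ^ Z.card) (by linarith)] with n hn hle
  refine le_trans ?_ hle
  have h1 := norm_le_of_zeros Z hZ (g := fun z => g n z - p n z) (M := M + η n)
    (hn.1.sub (hpd n).differentiableOn) (fun w hw => by rw [hpz n w hw, sub_self])
    (fun z hz => (norm_sub_le _ _).trans <|
      add_le_add (hn.2 z hz) (hpη n z (sphere_subset_closedBall hz)))
  have h2 := hpη n (1 / 4) (mem_closedBall_self (by norm_num))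
  have h3 := norm_add_le (g n (1 / 4) - p n (1 / 4)) (p n (1 / 4))
  rw [sub_add_cancel] at h3
  linarith

/-! ### Monotonicity in a radial direction -/

/-- The coefficient vector of the radial field `F = x`, `G = y`. -/
noncomputable def radial (d : ℕ) : CoefSpace d :=
  WithLp.toLp 2 (Sum.elim (fun p => if (p : ℕ × ℕ) = (0, 1) then 1 else 0)
    (fun p => if (p : ℕ × ℕ) = (1, 0) then 1 else 0))

lemma mem_coeffIdx_one {d : ℕ} (hd : 1 ≤ d) : (0, 1) ∈ coeffIdx d ∧ (1, 0) ∈ coeffIdx d := by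
  simp only [coeffIdx, Finset.mem_filter, Finset.mem_product, Finset.mem_range]
  omega

lemma norm_radial_le {d : ℕ} (hd : 1 ≤ d) : ‖radial d‖ ≤ 2 := by
  have h : ‖radial d‖ ^ 2 = 2 := by
    rw [EuclideanSpace.norm_sq_eq, Fintype.sum_sum_type]
    simp only [radial, Sum.elim_inl, Sum.elim_inr]
    rw [Finset.sum_coe_sort (coeffIdx d) (fun p : ℕ × ℕ => ‖if p = (0, 1) then (1 : ℝ) else 0‖ ^ 2),
      Finset.sum_coe_sort (coeffIdx d) (fun p : ℕ × ℕ => ‖if p = (1, 0) then (1 : ℝ) else 0‖ ^ 2),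
      Finset.sum_eq_single_of_mem _ (mem_coeffIdx_one hd).1 (by intro b _ hb; simp [hb]),
      Finset.sum_eq_single_of_mem _ (mem_coeffIdx_one hd).2 (by intro b _ hb; simp [hb])]
    norm_num
  nlinarith [norm_nonneg (radial d)]

lemma polR_radial {d : ℕ} (hd : 1 ≤ d) (v : CoefSpace d) (t a b φ r : ℝ) :
    polR d (v + t • radial d) a b φ r
      = polR d v a b φ r + t * (a * Real.cos φ + b * Real.sin φ) := by
  obtain ⟨m, hm⟩ : ∃ m : ℕ × ℕ → ℝ, m = fun p =>
      (Real.cos φ ^ p.2 * Real.sin φ ^ p.1) * r ^ (p.1 + p.2 - 1) := ⟨_, rfl⟩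
  have h1 : ∑ p : ↥(coeffIdx d), (if (p : ℕ × ℕ) = (0, 1) then (1 : ℝ) else 0) * m p
      = Real.cos φ := by
    rw [Finset.sum_coe_sort (coeffIdx d) (fun p : ℕ × ℕ => (if p = (0, 1) then (1 : ℝ) else 0) *
      m p), Finset.sum_eq_single_of_mem _ (mem_coeffIdx_one hd).1 (by intro b _ hb; simp [hb])]
    simp [hm]
  have h2 : ∑ p : ↥(coeffIdx d), (if (p : ℕ × ℕ) = (1, 0) then (1 : ℝ) else 0) * m p
      = Real.sin φ := by
    rw [Finset.sum_coe_sort (coeffIdx d) (fun p : ℕ × ℕ => (if p = (1, 0) then (1 : ℝ) else 0) *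
      m p), Finset.sum_eq_single_of_mem _ (mem_coeffIdx_one hd).2 (by intro b _ hb; simp [hb])]
    simp [hm]
  have h3 : t * (a * Real.cos φ + b * Real.sin φ) = t * a * Real.cos φ + t * b * Real.sin φ := by
    ring
  rw [h3, ← h1, ← h2]
  simp only [polR]
  rw [Finset.mul_sum, Finset.mul_sum, ← Finset.sum_add_distrib, ← Finset.sum_add_distrib]
  refine Finset.sum_congr rfl fun p _ => ?_
  simp only [hm, PiLp.add_apply, PiLp.smul_apply, radial, Sum.elim_inl, Sum.elim_inr, smul_eq_mul]
  ring

/-- Adding `t` times the radial field adds `t` to `P` and leaves `Q` unchanged. -/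
lemma fieldR_radial {d : ℕ} (hd : 1 ≤ d) (v : CoefSpace d) (t φ r : ℝ) :
    fieldR d (v + t • radial d) φ r
      = fieldR d v φ r + t * (r / (1 + polR d v (-Real.sin φ) (Real.cos φ) φ r)) := by
  unfold fieldR
  rw [polR_radial hd, polR_radial hd]
  have h1 : Real.cos φ * Real.cos φ + Real.sin φ * Real.sin φ = 1 := by
    nlinarith [Real.sin_sq_add_cos_sq φ]
  have h2 : -Real.sin φ * Real.cos φ + Real.cos φ * Real.sin φ = 0 := by ring
  rw [h1, h2, mul_zero, add_zero, mul_one]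
  ring

/-- The Euler polygons grow at least linearly along the radial direction. -/
lemma eulR_radial_growth {d : ℕ} (hd : 1 ≤ d) {v : CoefSpace d} (hv : SmallCoef d v) {t : ℝ}
    (ht : 0 ≤ t) (hvt : SmallCoef d (v + t • radial d)) {h : ℝ} (hh : 0 ≤ h) (n : ℕ)
    (hn : n * h ≤ 2 * π) :
    1 / 32 * (n * h) * t ≤ eulR d (v + t • radial d) h n (1 / 4) - eulR d v h n (1 / 4) := by
  have hpi := Real.pi_pos
  induction n with
  | zero => simp [eulR]
  | succ n ih =>
    have hn' : n * h ≤ 2 * π := le_trans (by gcongr; omega) hn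
    have h1 := ih hn'
    have hq : |(1 / 4 : ℝ)| ≤ 9 / 10 := by norm_num [abs_of_pos]
    have hw := abs_le.1 (eulR_abs hvt hh hq n hn')
    have hu := abs_le.1 (eulR_abs hv hh hq n hn')
    rw [eulR, eulR, fieldR_radial hd]
    set w := eulR d (v + t • radial d) h n (1 / 4)
    set u := eulR d v h n (1 / 4)
    have hw1 : |w| ≤ 3 / 4 := abs_le.2 ⟨by linarith [hw.1], by linarith [hw.2]⟩
    have hu1 : |u| ≤ 3 / 4 := abs_le.2 ⟨by linarith [hu.1], by linarith [hu.2]⟩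
    have hQ := one_add_polR_pos hv (n * h) (hw1.trans (by norm_num))
    set Q := 1 + polR d v (-Real.sin (n * h)) (Real.cos (n * h)) (n * h) w
    have hwQ : 1 / 16 ≤ w / Q := by
      rw [le_div_iff₀ (by linarith [hQ.1])]
      linarith [hQ.2, hw.1]
    have hwu : 0 ≤ w - u := le_trans (by positivity) h1
    have hL := fieldR_lipschitz hv (n * h) hw1 hu1
    rw [abs_of_nonneg hwu] at hL
    have hL2 := (abs_le.1 hL).1
    have e : ((n + 1 : ℕ) : ℝ) * h = n * h + h := by push_cast; ring
    rw [e] at hn ⊢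
    have hLh : 1 / (5 * π) * h ≤ 2 / 5 := by
      have : h ≤ 2 * π := by
        have : 0 ≤ (n : ℝ) * h := by positivity
        linarith
      calc 1 / (5 * π) * h ≤ 1 / (5 * π) * (2 * π) := by gcongr
        _ = 2 / 5 := by field_simp
    have hLn : 1 / (5 * π) * (n * h) ≤ 2 / 5 := by
      calc 1 / (5 * π) * (n * h) ≤ 1 / (5 * π) * (2 * π) := by gcongr
        _ = 2 / 5 := by field_simp
    set L := 1 / (5 * π)
    set A := fieldR d v (n * h) w
    set B := fieldR d v (n * h) u
    have h3 : h * (A - B) ≥ -(L * h) * (w - u) := by nlinarith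
    have h4 : t * (w / Q) * h ≥ t * (1 / 16) * h := by gcongr
    have h5 : (1 - L * h) * (w - u) ≥ (1 - L * h) * (1 / 32 * (n * h) * t) :=
      mul_le_mul_of_nonneg_left h1 (by linarith)
    have h6 : L * (n * h) * (h * t) ≤ 2 / 5 * (h * t) := by gcongr
    have h7 : 0 ≤ h * t := by positivity
    nlinarith

lemma eulR_radial_gap {d : ℕ} (hd : 1 ≤ d) {v : CoefSpace d} (hv : SmallCoef d v) {t : ℝ}
    (ht : 0 ≤ t) (hvt : SmallCoef d (v + t • radial d)) (n : ℕ) (hn : 0 < n) :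
    1 / 8 * t ≤ eulR d (v + t • radial d) (2 * π / n) n (1 / 4)
      - eulR d v (2 * π / n) n (1 / 4) := by
  have hn0 : (0 : ℝ) < n := by exact_mod_cast hn
  have hnh : n * (2 * π / n) = 2 * π := by field_simp
  have hpi := Real.pi_gt_three
  have := eulR_radial_growth hd hv ht hvt (h := 2 * π / n) (by positivity) n hnh.le
  rw [hnh] at this
  refine le_trans ?_ this
  nlinarith

lemma measurable_eulR (d : ℕ) (h : ℝ) (j : ℕ) (r : ℝ) :
    Measurable fun v : CoefSpace d => eulR d v h j r := by
  have hpol : ∀ a b φ, Measurable fun q : CoefSpace d × ℝ => polR d q.1 a b φ q.2 := by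
    intro a b φ
    unfold polR
    fun_prop
  induction j with
  | zero => exact measurable_const
  | succ j ih =>
    have hf : Measurable fun q : CoefSpace d × ℝ => fieldR d q.1 (j * h) q.2 :=
      (measurable_snd.mul (hpol _ _ _)).div (measurable_const.add (hpol _ _ _))
    exact ih.add (measurable_const.mul (hf.comp (measurable_id.prodMk ih)))

/-! ### Thin sets have small measure -/

/-- A measurable subset of a ball that meets each line of direction `e` in a set of diameter less
than `τ` (in the parameter `t` of `v + t e`) is thin: its translates by multiples of `τ e` are
disjoint, and about `N / (τ D)` of them, up to a constant, fit into the concentric ball of radius `(1 + 1/D) N`, whose volume is at most `3` times as big. -/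
lemma measure_thin_le {E : Type*} [NormedAddCommGroup E] [NormedSpace ℝ E] [MeasurableSpace E]
    [BorelSpace E] [FiniteDimensional ℝ E] (μ : Measure E) [μ.IsAddHaarMeasure]
    {S : Set E} (hS : MeasurableSet S) {N : ℝ} (hN : 0 < N) (hSN : S ⊆ ball 0 N) {e : E}
    (he : ‖e‖ ≤ 2) {τ D : ℝ} (hτ : 0 < τ) (hD : 0 < D) (hfin : (Module.finrank ℝ E : ℝ) ≤ D)
    (hthin : ∀ v ∈ S, ∀ t, τ ≤ t → v + t • e ∉ S) :
    μ S ≤ ENNReal.ofReal (12 * D * τ / N) * μ (ball 0 N) := by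
  set x := N / (2 * τ * D) with hx
  have hx0 : 0 < x := by positivity
  have hxe : 12 * D * τ / N = 6 / x := by rw [hx]; field_simp; norm_num
  rw [hxe]
  rcases lt_or_ge x 1 with hx1 | hx1
  · calc μ S ≤ 1 * μ (ball 0 N) := by rw [one_mul]; exact measure_mono hSN
      _ ≤ _ := by
        gcongr
        rw [ENNReal.one_le_ofReal, le_div_iff₀ hx0]
        linarith
  set K := ⌊x⌋₊ with hK
  have hK1 : 1 ≤ K := by rw [hK]; exact Nat.le_floor (by simpa using hx1)
  have hKx : (K : ℝ) ≤ x := Nat.floor_le hx0.le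
  have hK2 : x / 2 ≤ K := by
    have h1 := Nat.lt_floor_add_one x
    have h2 : (1 : ℝ) ≤ K := by exact_mod_cast hK1
    rw [← hK] at h1
    linarith
  set V : ℕ → Set E := fun k => (fun y => y + (-((k * τ) • e))) ⁻¹' S with hV
  have hdis : Pairwise (Function.onFun Disjoint V) := by
    have key : ∀ i j : ℕ, i < j → Disjoint (V i) (V j) := by
      intro i j hij
      rw [Set.disjoint_left]
      intro y hyi hyj
      simp only [hV, Set.mem_preimage] at hyi hyj
      refine hthin _ hyj ((j - i : ℝ) * τ) ?_ ?_
      · have : (i : ℝ) + 1 ≤ j := by exact_mod_cast hij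
        nlinarith
      · convert hyi using 1
        module
    intro i j hij
    rcases lt_or_gt_of_ne hij with h | h
    · exact key i j h
    · exact (key j i h).symm
  have hVm : ∀ k, MeasurableSet (V k) := fun k => hS.preimage (by fun_prop)
  have hVμ : ∀ k, μ (V k) = μ S := fun k => measure_preimage_add_right μ _ S
  have hVsub : ∀ k ∈ Finset.range K, V k ⊆ ball 0 ((1 + 1 / D) * N) := by
    intro k hk y hy
    have h1 := hSN hy
    rw [mem_ball_zero_iff] at h1 ⊢
    have h2 := norm_add_le (y + (-((k * τ) • e))) ((k * τ) • e)
    rw [neg_add_cancel_right] at h2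
    have hkK : (k : ℝ) ≤ K := by exact_mod_cast (Finset.mem_range.1 hk).le
    have h3 : ‖((k : ℝ) * τ) • e‖ ≤ N / D := by
      rw [norm_smul, Real.norm_of_nonneg (by positivity)]
      calc (k : ℝ) * τ * ‖e‖ ≤ x * τ * 2 := by gcongr; exact hkK.trans hKx
        _ = N / D := by rw [hx]; field_simp
    calc ‖y‖ < N + N / D := by linarith
      _ = _ := by ring
  have hsum : (K : ℝ≥0∞) * μ S ≤ μ (ball 0 ((1 + 1 / D) * N)) := by
    calc (K : ℝ≥0∞) * μ S = ∑ k ∈ Finset.range K, μ (V k) := by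
          rw [Finset.sum_congr rfl fun k _ => hVμ k]; simp
      _ = μ (⋃ k ∈ Finset.range K, V k) :=
          (measure_biUnion_finset (fun i _ j _ hij => hdis hij) fun k _ => hVm k).symm
      _ ≤ _ := measure_mono (Set.iUnion₂_subset hVsub)
  have hvol : μ (ball 0 ((1 + 1 / D) * N)) ≤ ENNReal.ofReal 3 * μ (ball 0 N) := by
    rw [Measure.addHaar_ball_mul_of_pos μ 0 (by positivity)]
    gcongr
    have h1 : 1 + 1 / D ≤ Real.exp (1 / D) := by
      rw [add_comm]; exact Real.add_one_le_exp _
    calc (1 + 1 / D) ^ Module.finrank ℝ E ≤ Real.exp (1 / D) ^ Module.finrank ℝ E := by gcongr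
      _ = Real.exp (Module.finrank ℝ E * (1 / D)) := (Real.exp_nat_mul _ _).symm
      _ ≤ Real.exp 1 := by
          gcongr
          rw [mul_one_div, div_le_one hD]
          exact hfin
      _ ≤ 3 := Real.exp_one_lt_three.le
  have hKpos : (0 : ℝ) < K := by exact_mod_cast hK1
  have hfinal : ENNReal.ofReal K * μ S ≤ ENNReal.ofReal K *
      (ENNReal.ofReal (6 / x) * μ (ball 0 N)) := by
    calc ENNReal.ofReal K * μ S = (K : ℝ≥0∞) * μ S := by rw [ENNReal.ofReal_natCast]
      _ ≤ ENNReal.ofReal 3 * μ (ball 0 N) := hsum.trans hvol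
      _ ≤ ENNReal.ofReal (K * (6 / x)) * μ (ball 0 N) := by
          gcongr
          rw [mul_div_assoc', le_div_iff₀ hx0]
          linarith
      _ = _ := by rw [ENNReal.ofReal_mul hKpos.le, mul_assoc]
  exact (ENNReal.mul_le_mul_iff_right (ENNReal.ofReal_pos.2 hKpos).ne' ENNReal.ofReal_ne_top).1 hfinal

lemma card_coeffIdx_le (d : ℕ) : (coeffIdx d).card ≤ (d + 1) ^ 2 := by
  refine (Finset.card_filter_le _ _).trans ?_
  rw [Finset.card_product, Finset.card_range, sq]

lemma smallCoef_of_mem {d : ℕ} {N : ℝ} (hNd : N * √d ≤ 1 / (40 * π)) {v : CoefSpace d}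
    (hv : v ∈ ball (0 : CoefSpace d) N) : SmallCoef d v := by
  rw [mem_ball_zero_iff] at hv
  exact le_trans (by gcongr) hNd

/-- The set of coefficients for which the discrete displacement at radius `1/4` is at most `ε`
has measure `O(d (d + 3) ε / N)` relative to the ball. -/
lemma measure_small_displacement {d : ℕ} (hd : 1 ≤ d) {N : ℝ} (hN : 0 < N)
    (hNd : N * √d ≤ 1 / (40 * π)) {ε : ℝ} (hε : 0 < ε) (n : ℕ) (hn : 0 < n) :
    volume {v ∈ ball (0 : CoefSpace d) N | |eulR d v (2 * π / n) n (1 / 4) - 1 / 4| ≤ ε} ≤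
      ENNReal.ofReal (408 * (d * (d + 3)) * ε / N) * volume (ball (0 : CoefSpace d) N) := by
  have hd0 : (1 : ℝ) ≤ d := by exact_mod_cast hd
  have h := measure_thin_le (volume : Measure (CoefSpace d))
    (S := {v ∈ ball (0 : CoefSpace d) N | |eulR d v (2 * π / n) n (1 / 4) - 1 / 4| ≤ ε})
    (measurableSet_ball.inter (measurableSet_le
      ((measurable_eulR d _ n _).sub_const _).abs measurable_const)) hN
    (fun v hv => hv.1) (norm_radial_le hd) (τ := 17 * ε) (D := 2 * (d * (d + 3)))
    (by positivity) (by positivity) ?_ ?_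
  · refine h.trans (le_of_eq ?_)
    congr 2; ring
  · rw [finrank_euclideanSpace, Fintype.card_sum, Fintype.card_coe]
    have h1 : ((coeffIdx d).card : ℝ) ≤ (d + 1) ^ 2 := by exact_mod_cast card_coeffIdx_le d
    push_cast
    nlinarith
  · rintro v ⟨hv, hve⟩ t ht ⟨hv', hve'⟩
    have := eulR_radial_gap hd (smallCoef_of_mem hNd hv) (by linarith)
      (smallCoef_of_mem hNd hv') n hn
    have h1 := (abs_le.1 hve).1
    have h2 := (abs_le.1 hve').2
    linarith

/-! ### Periodic orbits in polar coordinates -/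

lemma polR_linear (d : ℕ) (v : CoefSpace d) (a b φ r : ℝ) :
    polR d v a b φ r = a * polR d v 1 0 φ r + b * polR d v 0 1 φ r := by
  unfold polR
  rw [Finset.mul_sum, Finset.mul_sum, ← Finset.sum_add_distrib]
  exact Finset.sum_congr rfl fun p _ => by ring

lemma coeffIdx_pow {d : ℕ} (p : ↥(coeffIdx d)) (r : ℝ) :
    r ^ (p : ℕ × ℕ).2 * r ^ (p : ℕ × ℕ).1
      = r * r ^ ((p : ℕ × ℕ).1 + (p : ℕ × ℕ).2 - 1) := by
  have hp := p.2
  simp only [coeffIdx, Finset.mem_filter] at hp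
  rw [← pow_add, ← pow_succ']
  congr 1
  omega

lemma Fpoly_polar (d : ℕ) (v : CoefSpace d) (φ r : ℝ) :
    Fpoly d v (r * Real.cos φ) (r * Real.sin φ) = r * polR d v 1 0 φ r := by
  unfold Fpoly polR
  rw [Finset.mul_sum]
  refine Finset.sum_congr rfl fun p _ => ?_
  rw [mul_pow, mul_pow]
  linear_combination (v (Sum.inl p) * Real.cos φ ^ (p : ℕ × ℕ).2 * Real.sin φ ^ (p : ℕ × ℕ).1) *
    coeffIdx_pow p r

lemma Gpoly_polar (d : ℕ) (v : CoefSpace d) (φ r : ℝ) :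
    Gpoly d v (r * Real.cos φ) (r * Real.sin φ) = r * polR d v 0 1 φ r := by
  unfold Gpoly polR
  rw [Finset.mul_sum]
  refine Finset.sum_congr rfl fun p _ => ?_
  rw [mul_pow, mul_pow]
  linear_combination (v (Sum.inr p) * Real.cos φ ^ (p : ℕ × ℕ).2 * Real.sin φ ^ (p : ℕ × ℕ).1) *
    coeffIdx_pow p r

lemma exists_polar_point (x y : ℝ) : ∃ r φ : ℝ, 0 ≤ r ∧ x = r * Real.cos φ ∧ y = r * Real.sin φ :=
  ⟨‖(⟨x, y⟩ : ℂ)‖, Complex.arg ⟨x, y⟩, norm_nonneg _,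
    (Complex.norm_mul_cos_arg ⟨x, y⟩).symm, (Complex.norm_mul_sin_arg ⟨x, y⟩).symm⟩

lemma continuous_polR (d : ℕ) (v : CoefSpace d) {X : Type*} [TopologicalSpace X] {a b φ r : X → ℝ}
    (ha : Continuous a) (hb : Continuous b) (hφ : Continuous φ) (hr : Continuous r) :
    Continuous fun x => polR d v (a x) (b x) (φ x) (r x) := by
  unfold polR
  fun_prop

lemma continuous_fieldR_comp {d : ℕ} {v : CoefSpace d} (hv : SmallCoef d v) {u : ℝ → ℝ}
    (hu : ∀ φ, |u φ| ≤ 1 / 2) (hc : Continuous u) : Continuous fun φ => fieldR d v φ (u φ) := by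
  unfold fieldR
  refine Continuous.div ?_ ?_ ?_
  · exact hc.mul (continuous_polR d v Real.continuous_cos Real.continuous_sin continuous_id hc)
  · exact continuous_const.add
      (continuous_polR d v Real.continuous_sin.neg Real.continuous_cos continuous_id hc)
  · intro φ
    have := (one_add_polR_pos hv φ ((hu φ).trans (by norm_num))).1
    exact (by linarith : (0 : ℝ) < _).ne'

lemma fieldR_periodic (d : ℕ) (v : CoefSpace d) (φ r : ℝ) :
    fieldR d v (φ + 2 * π) r = fieldR d v φ r := by
  simp [fieldR, polR, Real.cos_add_two_pi, Real.sin_add_two_pi]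

/-- Solutions of the polar equation with values in `(0, 1/2]`. -/
def IsPolarSol (d : ℕ) (v : CoefSpace d) (u : ℝ → ℝ) : Prop :=
  (∀ φ, 0 < u φ ∧ u φ ≤ 1 / 2) ∧ ∀ φ, HasDerivAt u (fieldR d v φ (u φ)) φ

lemma IsPolarSol.abs_le {d : ℕ} {v : CoefSpace d} {u : ℝ → ℝ} (hu : IsPolarSol d v u) (φ : ℝ) :
    |u φ| ≤ 1 / 2 := by
  rw [abs_of_pos (hu.1 φ).1]; exact (hu.1 φ).2

lemma IsPolarSol.continuous {d : ℕ} {v : CoefSpace d} {u : ℝ → ℝ} (hu : IsPolarSol d v u) :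
    Continuous u :=
  continuous_iff_continuousAt.2 fun φ => (hu.2 φ).continuousAt

lemma IsPolarSol.eq_of_eq {d : ℕ} {v : CoefSpace d} (hv : SmallCoef d v) {u w : ℝ → ℝ}
    (hu : IsPolarSol d v u) (hw : IsPolarSol d v w) {φ : ℝ} (h : u φ = w φ) : u = w := by
  have hpi := Real.pi_pos
  refine ODE_solution_unique_univ (v := fieldR d v) (s := fun _ => Set.Icc (-(3 / 4)) (3 / 4))
    (K := (1 / (5 * π)).toNNReal) (t₀ := φ) ?_ ?_ ?_ h
  · intro t
    refine LipschitzOnWith.of_dist_le_mul fun x hx y hy => ?_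
    rw [Real.coe_toNNReal _ (by positivity), Real.dist_eq, Real.dist_eq]
    exact fieldR_lipschitz hv t (_root_.abs_le.2 hx) (_root_.abs_le.2 hy)
  · exact fun t => ⟨hu.2 t, _root_.abs_le.1 ((hu.abs_le t).trans (by norm_num))⟩
  · exact fun t => ⟨hw.2 t, _root_.abs_le.1 ((hw.abs_le t).trans (by norm_num))⟩

/-- A solution of the polar equation which is periodic at all is `2π`-periodic: otherwise
`u (φ + 2π) - u φ` has constant sign, and `k ↦ u (2πk)` is strictly monotone. -/
lemma IsPolarSol.periodic {d : ℕ} {v : CoefSpace d} (hv : SmallCoef d v) {u : ℝ → ℝ}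
    (hu : IsPolarSol d v u) {m : ℕ} (hm : 0 < m) (h : u (2 * π * m) = u 0) : u (2 * π) = u 0 := by
  by_contra hne
  set w : ℝ → ℝ := fun φ => u (φ + 2 * π) with hwdef
  have hw : IsPolarSol d v w := by
    refine ⟨fun φ => hu.1 _, fun φ => ?_⟩
    have := (hu.2 (φ + 2 * π)).comp_add_const φ (2 * π)
    rwa [fieldR_periodic] at this
  have hnz : ∀ φ, w φ - u φ ≠ 0 := by
    intro φ hφ
    have heq := hw.eq_of_eq hv hu (sub_eq_zero.1 hφ)
    apply hne
    have := congrFun heq 0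
    simpa [hwdef] using this
  have hcont : Continuous fun φ => w φ - u φ := hw.continuous.sub hu.continuous
  have hstep : ∀ k : ℕ, u (2 * π * (k + 1 : ℕ)) - u (2 * π * k)
      = w (2 * π * k) - u (2 * π * k) := by
    intro k
    simp only [hwdef]
    congr 2
    push_cast; ring
  rcases lt_or_gt_of_ne (hnz 0) with h0 | h0
  · have hneg : ∀ φ, w φ - u φ < 0 := by
      intro φ
      by_contra hφ
      obtain ⟨c, hc⟩ := mem_range_of_exists_le_of_exists_ge hcont ⟨0, h0.le⟩ ⟨φ, not_lt.1 hφ⟩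
      exact hnz c hc
    have hanti : StrictAnti fun k : ℕ => u (2 * π * k) :=
      strictAnti_nat_of_succ_lt fun k => by linarith [hstep k, hneg (2 * π * k)]
    have := hanti hm
    simp only [Nat.cast_zero, mul_zero] at this
    linarith
  · have hpos : ∀ φ, 0 < w φ - u φ := by
      intro φ
      by_contra hφ
      obtain ⟨c, hc⟩ := mem_range_of_exists_le_of_exists_ge hcont ⟨φ, not_lt.1 hφ⟩ ⟨0, h0.le⟩
      exact hnz c hc
    have hmono : StrictMono fun k : ℕ => u (2 * π * k) :=
      strictMono_nat_of_lt_succ fun k => by linarith [hstep k, hpos (2 * π * k)]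
    have := hmono hm
    simp only [Nat.cast_zero, mul_zero] at this
    linarith

/-- A nonconstant solution in the disk of radius `1/2` never hits the origin: `ρ = x² + y²`
satisfies `|ρ'| ≤ ρ`, so `ρ e^{-t}` decreases and `ρ e^t` increases. -/
lemma sol_ne_zero {d : ℕ} {v : CoefSpace d} (hv : SmallCoef d v) {sol : ℝ → ℝ × ℝ}
    (hsol : ∀ t, HasDerivAt sol (vecField d v (sol t)) t)
    (hin : ∀ t, (sol t).1 ^ 2 + (sol t).2 ^ 2 ≤ 1 / 4) (hnc : ∃ t₁ t₂, sol t₁ ≠ sol t₂) (t : ℝ) :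
    sol t ≠ 0 := by
  intro h0
  set ρ : ℝ → ℝ := fun t => (sol t).1 ^ 2 + (sol t).2 ^ 2 with hρ
  set ρ' : ℝ → ℝ := fun t => 2 * (sol t).1 * (vecField d v (sol t)).1 +
    2 * (sol t).2 * (vecField d v (sol t)).2 with hρ'
  have hd : ∀ t, HasDerivAt ρ (ρ' t) t := by
    intro t
    have h1 := (hasFDerivAt_fst.comp_hasDerivAt t (hsol t)).pow 2
    have h2 := (hasFDerivAt_snd.comp_hasDerivAt t (hsol t)).pow 2
    refine (h1.add h2).congr_deriv ?_
    simp [hρ']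
  have hbound : ∀ t, |ρ' t| ≤ ρ t := by
    intro t
    obtain ⟨r, φ, hr, hx, hy⟩ := exists_polar_point (sol t).1 (sol t).2
    have hcs := Real.cos_sq_add_sin_sq φ
    have hρr : ρ t = r ^ 2 := by
      simp only [hρ]; rw [hx, hy]; linear_combination r ^ 2 * hcs
    have hr1 : |r| ≤ 1 := by
      have := hin t
      change ρ t ≤ 1 / 4 at this
      rw [hρr] at this
      rw [abs_of_nonneg hr]; nlinarith
    have hρ'r : ρ' t = 2 * r ^ 2 * polR d v (Real.cos φ) (Real.sin φ) φ r := by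
      simp only [hρ', vecField]
      rw [hx, hy, Fpoly_polar, Gpoly_polar, polR_linear d v (Real.cos φ)]
      ring
    have hP := (abs_polR_le d v hcs φ hr1).trans (hv.trans inv_forty_pi_le)
    rw [hρ'r, hρr, abs_mul, abs_of_nonneg (by positivity)]
    nlinarith [sq_nonneg r]
  have hexp : ∀ t, HasDerivAt (fun t => Real.exp t) (Real.exp t) t := Real.hasDerivAt_exp
  have hexpn : ∀ t, HasDerivAt (fun t => Real.exp (-t)) (-Real.exp (-t)) t := by
    intro t
    have := (hasDerivAt_neg t).exp
    simpa using this
  have hmono : Monotone fun t => ρ t * Real.exp t := by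
    refine monotone_of_hasDerivAt_nonneg (fun t => (hd t).mul (hexp t)) fun t => ?_
    have := (abs_le.1 (hbound t)).1
    have he := Real.exp_pos t
    simp only [Pi.zero_apply]
    nlinarith
  have hanti : Antitone fun t => ρ t * Real.exp (-t) := by
    refine antitone_of_hasDerivAt_nonpos (fun t => (hd t).mul (hexpn t)) fun t => ?_
    have := (abs_le.1 (hbound t)).2
    have he := Real.exp_pos (-t)
    simp only [Pi.zero_apply]
    nlinarith
  have hρt : ρ t = 0 := by simp [hρ, h0]
  have hall : ∀ s, sol s = 0 := by
    intro s
    have hs0 : 0 ≤ ρ s := by positivity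
    have hs : ρ s ≤ 0 := by
      rcases le_total s t with h | h
      · have := hmono h
        simp only [hρt, zero_mul] at this
        exact nonpos_of_mul_nonpos_left this (Real.exp_pos _)
      · have := hanti h
        simp only [hρt, zero_mul] at this
        exact nonpos_of_mul_nonpos_left this (Real.exp_pos _)
    have h1 : (sol s).1 ^ 2 + (sol s).2 ^ 2 = 0 := le_antisymm hs hs0
    have hx : (sol s).1 = 0 := by nlinarith [sq_nonneg (sol s).1, sq_nonneg (sol s).2]
    have hy : (sol s).2 = 0 := by nlinarith [sq_nonneg (sol s).1, sq_nonneg (sol s).2]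
    exact Prod.ext hx hy
  obtain ⟨t₁, t₂, h⟩ := hnc
  exact h (by rw [hall, hall])

/-- A periodic orbit in the disk of radius `1/2` is the graph, in polar coordinates, of a
`2π`-periodic solution of the polar equation. The angle comes from the logarithm
`ℓ = log z(0) + ∫ z'/z` of `z = x + i y`, which lifts the whole solution; its imaginary part has
derivative `1 + Q ≥ 1/2` and is therefore a diffeomorphism of the line. -/
lemma exists_polarSol {d : ℕ} {v : CoefSpace d} (hv : SmallCoef d v) {Γ : Set (ℝ × ℝ)}
    (hΓ : IsPeriodicOrbit (vecField d v) Γ)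
    (hsub : Γ ⊆ {q : ℝ × ℝ | q.1 ^ 2 + q.2 ^ 2 ≤ 1 / 4}) :
    ∃ u : ℝ → ℝ, IsPolarSol d v u ∧ u (2 * π) = u 0 ∧
      Γ = Set.range fun φ => (u φ * Real.cos φ, u φ * Real.sin φ) := by
  obtain ⟨sol, T, hT, hsol, hper, hnc, rfl⟩ := hΓ
  have hin : ∀ t, (sol t).1 ^ 2 + (sol t).2 ^ 2 ≤ 1 / 4 := fun t => hsub ⟨t, rfl⟩
  have hne := sol_ne_zero hv hsol hin hnc
  set z : ℝ → ℂ := fun t => (sol t).1 + (sol t).2 * Complex.I with hz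
  set z' : ℝ → ℂ := fun t =>
    (vecField d v (sol t)).1 + (vecField d v (sol t)).2 * Complex.I with hz'
  have hx : ∀ t, HasDerivAt (fun t => (sol t).1) (vecField d v (sol t)).1 t :=
    fun t => by have h := hasFDerivAt_fst.comp_hasDerivAt t (hsol t); exact h
  have hy : ∀ t, HasDerivAt (fun t => (sol t).2) (vecField d v (sol t)).2 t :=
    fun t => by have h := hasFDerivAt_snd.comp_hasDerivAt t (hsol t); exact h
  have hxc : Continuous fun t => (sol t).1 :=
    continuous_iff_continuousAt.2 fun t => (hx t).continuousAt
  have hyc : Continuous fun t => (sol t).2 :=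
    continuous_iff_continuousAt.2 fun t => (hy t).continuousAt
  have hzd : ∀ t, HasDerivAt z (z' t) t := fun t =>
    (hx t).ofReal_comp.add ((hy t).ofReal_comp.mul_const _)
  have hzc : Continuous z := continuous_iff_continuousAt.2 fun t => (hzd t).continuousAt
  have hz'c : Continuous z' := by
    simp only [hz', vecField, Fpoly, Gpoly]
    fun_prop
  have hz0 : ∀ t, z t ≠ 0 := by
    intro t h
    have h1 := congrArg Complex.re h
    have h2 := congrArg Complex.im h
    simp [hz] at h1 h2
    exact hne t (Prod.ext h1 h2)
  set g : ℝ → ℂ := fun t => z' t / z t with hg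
  have hgc : Continuous g := hz'c.div hzc hz0
  set ℓ : ℝ → ℂ := fun t => Complex.log (z 0) + ∫ s in (0 : ℝ)..t, g s with hℓ
  have hℓd : ∀ t, HasDerivAt ℓ (g t) t := fun t =>
    (intervalIntegral.integral_hasDerivAt_right (hgc.intervalIntegrable _ _)
      hgc.stronglyMeasurable.stronglyMeasurableAtFilter hgc.continuousAt).const_add _
  have hexp : ∀ t, Complex.exp (ℓ t) = z t := by
    have hd : ∀ t, HasDerivAt (fun t => z t * Complex.exp (-ℓ t)) 0 t := by
      intro t
      refine ((hzd t).mul (hℓd t).neg.cexp).congr_deriv ?_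
      have : z' t = g t * z t := by simp only [hg]; rw [div_mul_cancel₀ _ (hz0 t)]
      rw [this]; ring
    intro t
    have hconst := is_const_of_deriv_eq_zero (fun t => (hd t).differentiableAt)
      (fun t => (hd t).deriv) t 0
    have hℓ0 : Complex.exp (-ℓ 0) = (z 0)⁻¹ := by
      simp only [hℓ, intervalIntegral.integral_same, add_zero]
      rw [Complex.exp_neg, Complex.exp_log (hz0 0)]
    simp only [hℓ0, mul_inv_cancel₀ (hz0 0)] at hconst
    rw [Complex.exp_neg] at hconst
    exact (eq_of_mul_inv_eq_one hconst).symm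
  set r : ℝ → ℝ := fun t => Real.exp (ℓ t).re with hr
  set θ : ℝ → ℝ := fun t => (ℓ t).im with hθ
  have hrpos : ∀ t, 0 < r t := fun t => Real.exp_pos _
  have hx' : ∀ t, (sol t).1 = r t * Real.cos (θ t) := by
    intro t
    have := congrArg Complex.re (hexp t)
    rw [Complex.exp_re] at this
    simpa [hz] using this.symm
  have hy' : ∀ t, (sol t).2 = r t * Real.sin (θ t) := by
    intro t
    have := congrArg Complex.im (hexp t)
    rw [Complex.exp_im] at this
    simpa [hz] using this.symm
  have hrle : ∀ t, r t ≤ 1 / 2 := by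
    intro t
    have h1 := hin t
    rw [hx', hy'] at h1
    have h2 : r t ^ 2 ≤ 1 / 4 := by
      have := Real.cos_sq_add_sin_sq (θ t)
      calc r t ^ 2 = (r t * Real.cos (θ t)) ^ 2 + (r t * Real.sin (θ t)) ^ 2 := by
            linear_combination (-(r t) ^ 2) * this
        _ ≤ _ := h1
    nlinarith [hrpos t]
  set P : ℝ → ℝ := fun t => polR d v (Real.cos (θ t)) (Real.sin (θ t)) (θ t) (r t) with hP
  set Q : ℝ → ℝ := fun t => polR d v (-Real.sin (θ t)) (Real.cos (θ t)) (θ t) (r t) with hQ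
  have hQb : ∀ t, 1 / 2 ≤ 1 + Q t := fun t =>
    (one_add_polR_pos hv (θ t) (by
      rw [abs_of_pos (hrpos t)]; exact (hrle t).trans (by norm_num))).1
  have hgPQ : ∀ t, g t = P t + (1 + Q t) * Complex.I := by
    intro t
    simp only [hg]
    rw [div_eq_iff (hz0 t)]
    have hcs := Real.cos_sq_add_sin_sq (θ t)
    have e1 : (vecField d v (sol t)).1 = P t * (sol t).1 - (1 + Q t) * (sol t).2 := by
      simp only [vecField, hP, hQ]
      rw [hx', hy', Fpoly_polar, polR_linear d v (Real.cos (θ t)),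
        polR_linear d v (-Real.sin (θ t))]
      linear_combination (-(r t * polR d v 1 0 (θ t) (r t))) * hcs
    have e2 : (vecField d v (sol t)).2 = P t * (sol t).2 + (1 + Q t) * (sol t).1 := by
      simp only [vecField, hP, hQ]
      rw [hx', hy', Gpoly_polar, polR_linear d v (Real.cos (θ t)),
        polR_linear d v (-Real.sin (θ t))]
      linear_combination (-(r t * polR d v 0 1 (θ t) (r t))) * hcs
    simp only [hz', hz]
    rw [e1, e2]
    push_cast
    linear_combination (-((1 + Q t : ℂ) * (sol t).2)) * Complex.I_sq
  have hrd : ∀ t, HasDerivAt r (r t * P t) t := by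
    intro t
    have h1 : HasDerivAt (fun t => (ℓ t).re) (g t).re t :=
      Complex.reCLM.hasFDerivAt.comp_hasDerivAt t (hℓd t)
    have h2 : (g t).re = P t := by rw [hgPQ]; simp
    rw [h2] at h1
    exact h1.exp
  have hθd : ∀ t, HasDerivAt θ (1 + Q t) t := by
    intro t
    have h1 : HasDerivAt (fun t => (ℓ t).im) (g t).im t :=
      Complex.imCLM.hasFDerivAt.comp_hasDerivAt t (hℓd t)
    have h2 : (g t).im = 1 + Q t := by rw [hgPQ]; simp
    rwa [h2] at h1
  have hθc : Continuous θ := continuous_iff_continuousAt.2 fun t => (hθd t).continuousAt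
  have hmono : Monotone fun t => θ t - t * (1 / 2) := by
    refine monotone_of_hasDerivAt_nonneg
      (fun t => (hθd t).sub ((hasDerivAt_id t).mul_const (1 / 2))) fun t => ?_
    simp only [Pi.zero_apply]
    linarith [hQb t]
  have hθmono : StrictMono θ := by
    intro a b hab
    have := hmono hab.le
    simp only at this
    linarith
  have hθsurj : Function.Surjective θ := by
    refine hθc.surjective ?_ ?_
    · refine Filter.tendsto_atTop_mono' _ ?_ (Filter.tendsto_atTop_add_const_left _ (θ 0)
        (Filter.tendsto_id.atTop_mul_const (by norm_num : (0 : ℝ) < 1 / 2)))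
      filter_upwards [Filter.eventually_ge_atTop 0] with t ht
      have := hmono ht
      simp only [id] at this ⊢
      linarith
    · refine Filter.tendsto_atBot_mono' _ ?_ (Filter.tendsto_atBot_add_const_left _ (θ 0)
        (Filter.tendsto_id.atBot_mul_const (by norm_num : (0 : ℝ) < 1 / 2)))
      filter_upwards [Filter.eventually_le_atBot 0] with t ht
      have := hmono ht
      simp only [id] at this ⊢
      linarith
  set e := StrictMono.orderIsoOfSurjective θ hθmono hθsurj with he
  set τ : ℝ → ℝ := fun φ => e.symm φ with hτ
  have hθτ : ∀ φ, θ (τ φ) = φ := fun φ => e.apply_symm_apply φ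
  have hτθ : ∀ t, τ (θ t) = t := fun t => e.symm_apply_apply t
  have hτc : Continuous τ := e.symm.continuous
  have hτd : ∀ φ, HasDerivAt τ (1 + Q (τ φ))⁻¹ φ := fun φ =>
    HasDerivAt.of_local_left_inverse hτc.continuousAt (hθd (τ φ))
      (by linarith [hQb (τ φ)] : (0 : ℝ) < _).ne' (Filter.Eventually.of_forall hθτ)
  have hu : IsPolarSol d v (fun φ => r (τ φ)) := by
    refine ⟨fun φ => ⟨hrpos _, hrle _⟩, fun φ => ?_⟩
    refine ((hrd (τ φ)).comp φ (hτd φ)).congr_deriv ?_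
    simp only [fieldR, hP, hQ, hθτ]
    rfl
  refine ⟨fun φ => r (τ φ), hu, ?_, ?_⟩
  -- after the period `T` the angle has grown by a positive multiple of `2π`
  · have hzT : z (τ 0 + T) = z (τ 0) := by simp only [hz]; rw [hper]
    rw [← hexp, ← hexp] at hzT
    obtain ⟨m, hm⟩ := Complex.exp_eq_exp_iff_exists_int.1 hzT
    have hre : r (τ 0 + T) = r (τ 0) := by
      simp only [hr]; rw [hm]; simp
    have him : θ (τ 0 + T) = 2 * π * m := by
      have h1 : θ (τ 0 + T) = θ (τ 0) + m * (2 * π) := by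
        simp only [hθ]; rw [hm]; simp
      rw [h1, hθτ]; ring
    have hpos : 0 < θ (τ 0 + T) := by
      have := hθmono (lt_add_of_pos_right (τ 0) hT)
      rwa [hθτ] at this
    have hm0 : 0 < m := by
      rw [him] at hpos
      have := pos_of_mul_pos_right hpos (by positivity)
      exact_mod_cast this
    obtain ⟨k, rfl⟩ := Int.eq_ofNat_of_zero_le hm0.le
    refine hu.periodic hv (m := k) (by exact_mod_cast hm0) ?_
    have : (2 * π * (k : ℝ)) = θ (τ 0 + T) := by rw [him]; simp
    rw [this, hτθ, hre]
  · ext q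
    constructor
    · rintro ⟨t, rfl⟩
      refine ⟨θ t, ?_⟩
      simp only [hτθ]
      rw [← hx', ← hy']
    · rintro ⟨φ, rfl⟩
      refine ⟨τ φ, ?_⟩
      have h1 := hx' (τ φ)
      have h2 := hy' (τ φ)
      rw [hθτ] at h1 h2
      exact Prod.ext h1 h2

/-! ### The tail bound -/

/-- If there are `k` periodic orbits in the disk, the displacement at `1/4` of fine Euler polygons
is at most `2M(4/5)^k` with `M = 4π√d N`. -/
lemma eventually_displacement_le {d : ℕ} {N : ℝ} (hd : 1 ≤ d) (hN : 0 < N)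
    (hNd : N * √d ≤ 1 / (40 * π)) {v : CoefSpace d} (hvN : v ∈ ball (0 : CoefSpace d) N)
    (S : Finset (Set (ℝ × ℝ)))
    (hS : ∀ Γ ∈ S, IsPeriodicOrbit (vecField d v) Γ ∧
      Γ ⊆ {q : ℝ × ℝ | q.1 ^ 2 + q.2 ^ 2 ≤ 1 / 4}) :
    ∀ᶠ n : ℕ in Filter.atTop, |eulR d v (2 * π / n) n (1 / 4) - 1 / 4| ≤
      2 * (4 * π * √d * N) * (4 / 5) ^ S.card := by
  classical
  have hv := smallCoef_of_mem hNd hvN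
  have hvn : ‖v‖ < N := by simpa using hvN
  have hsd : 0 < √(d : ℝ) := Real.sqrt_pos.2 (by exact_mod_cast hd)
  choose! u hu hup hur using fun Γ (hΓ : Γ ∈ S) => exists_polarSol hv (hS Γ hΓ).1 (hS Γ hΓ).2
  set Z : Finset ℂ := S.image fun Γ => ((u Γ 0 : ℝ) : ℂ) with hZ
  have hcard : Z.card = S.card := by
    refine Finset.card_image_of_injOn fun Γ hΓ Γ' hΓ' h => ?_
    have h0 : u Γ 0 = u Γ' 0 := by exact_mod_cast h
    have := (hu Γ hΓ).eq_of_eq hv (hu Γ' hΓ') h0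
    rw [hur Γ hΓ, hur Γ' hΓ', this]
  have key := eventually_norm_le Z (M := 4 * π * √d * N)
    (g := fun n z => eulC d v (2 * π / n) n z - z) ?_ (by positivity) ?_ ?_
  · filter_upwards [key] with n hn
    rw [hcard] at hn
    have h1 : eulC d v (2 * π / n) n (1 / 4) - 1 / 4
        = ((eulR d v (2 * π / n) n (1 / 4) - 1 / 4 : ℝ) : ℂ) := by
      have := eulC_ofReal d v (2 * π / n) n (1 / 4)
      push_cast at this ⊢
      rw [this]
    rw [h1, Complex.norm_real, Real.norm_eq_abs] at hn
    exact hn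
  · intro w hw
    obtain ⟨Γ, hΓ, rfl⟩ := Finset.mem_image.1 hw
    have h := (hu Γ hΓ).1 0
    have h1 : ((1 / 4 : ℂ) - (u Γ 0 : ℝ)) = ((1 / 4 - u Γ 0 : ℝ) : ℂ) := by push_cast; rfl
    rw [h1, Complex.norm_real, Real.norm_eq_abs, abs_le]
    constructor <;> linarith [h.1, h.2]
  · filter_upwards [Filter.eventually_gt_atTop 0] with n hn
    have hn' : (0 : ℝ) < n := by exact_mod_cast hn
    have hh : 0 ≤ 2 * π / n := by positivity
    have hnh : (n : ℝ) * (2 * π / n) = 2 * π := by field_simp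
    have hball : ∀ z : ℂ, ‖z - 1 / 4‖ ≤ 5 / 8 → ‖z‖ ≤ 9 / 10 := by
      intro z hz
      have : ‖z‖ ≤ ‖z - 1 / 4‖ + ‖(1 / 4 : ℂ)‖ := by
        simpa using norm_add_le (z - 1 / 4) (1 / 4)
      have h4 : ‖(1 / 4 : ℂ)‖ = 1 / 4 := by norm_num
      rw [h4] at this
      linarith
    refine ⟨fun z hz => ?_, fun z hz => ?_⟩
    · have hz' := hball z (mem_ball_iff_norm.1 hz).le
      exact ((eulC_differentiableAt hv hh hz' n hnh.le).sub
        differentiableAt_id).differentiableWithinAt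
    · have hz' := hball z ((mem_sphere_iff_norm.1 hz).le.trans (by norm_num))
      refine (eulC_norm hv hh hz' n hnh.le).2.1.trans ?_
      rw [hnh]
      have := mul_le_mul_of_nonneg_right hvn.le hsd.le
      nlinarith [Real.pi_pos]
  · intro w hw
    obtain ⟨Γ, hΓ, rfl⟩ := Finset.mem_image.1 hw
    have hc := continuous_fieldR_comp hv (hu Γ hΓ).abs_le (hu Γ hΓ).continuous
    have ht := eulR_tendsto hv (hu Γ hΓ).abs_le (hu Γ hΓ).2 hc
    have ht2 := (Complex.continuous_ofReal.tendsto _).comp (ht.sub_const (u Γ 0))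
    rw [hup Γ hΓ, sub_self] at ht2
    refine ht2.congr fun n => ?_
    simp only [Function.comp]
    push_cast
    rw [eulC_ofReal]

/-- The tail estimate before the loss `√d` is traded for the factor `1 / log d`: the Euler
displacements converge only for `n → ∞`, so the set is covered by an increasing union. -/
lemma measure_many_cycles {d : ℕ} {N : ℝ} (hd : 1 ≤ d) (hN : 0 < N)
    (hNd : N * √d ≤ 1 / (40 * π)) (k : ℕ) :
    volume {v ∈ ball (0 : CoefSpace d) N | (k : ℝ≥0∞) ≤ limitCycleCount d v}
      ≤ ENNReal.ofReal (408 * (8 * π) * √d * (d * (d + 3)) * (4 / 5) ^ k) *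
          volume (ball (0 : CoefSpace d) N) := by
  have hsd : 0 < √(d : ℝ) := Real.sqrt_pos.2 (by exact_mod_cast hd)
  set ε : ℝ := 2 * (4 * π * √d * N) * (4 / 5) ^ k with hε
  set A : ℕ → Set (CoefSpace d) := fun m => {v ∈ ball (0 : CoefSpace d) N |
    ∀ n, m ≤ n → 0 < n → |eulR d v (2 * π / n) n (1 / 4) - 1 / 4| ≤ ε} with hA
  have hAm : Monotone A := fun m m' hmm v hv => ⟨hv.1, fun n hn => hv.2 n (hmm.trans hn)⟩
  have hsub : {v ∈ ball (0 : CoefSpace d) N | (k : ℝ≥0∞) ≤ limitCycleCount d v} ⊆ ⋃ m, A m := by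
    rintro v ⟨hvN, hk⟩
    have hk' : (k : ℕ∞) ≤ {Γ : Set (ℝ × ℝ) | IsLimitCycle (vecField d v) Γ ∧
        Γ ⊆ {q : ℝ × ℝ | q.1 ^ 2 + q.2 ^ 2 ≤ 1 / 4}}.encard := by
      unfold limitCycleCount at hk
      exact_mod_cast hk
    obtain ⟨S, hS, hSk⟩ := Set.exists_subset_encard_eq hk'
    have hfin : S.Finite := Set.finite_of_encard_eq_coe hSk
    have hcard : hfin.toFinset.card = k := by
      rw [hfin.encard_eq_coe_toFinset_card] at hSk
      exact_mod_cast hSk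
    have := eventually_displacement_le hd hN hNd hvN hfin.toFinset (fun Γ hΓ => by
      have := hS (hfin.mem_toFinset.1 hΓ)
      exact ⟨this.1.1, this.2⟩)
    rw [hcard] at this
    obtain ⟨m, hm⟩ := Filter.eventually_atTop.1 this
    exact Set.mem_iUnion.2 ⟨m, hvN, fun n hn _ => hm n hn⟩
  refine (measure_mono hsub).trans ?_
  rw [hAm.measure_iUnion]
  refine iSup_le fun m => ?_
  refine (measure_mono (t := {v ∈ ball (0 : CoefSpace d) N |
    |eulR d v (2 * π / (m + 1 : ℕ)) (m + 1) (1 / 4) - 1 / 4| ≤ ε}) fun v hv =>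
      ⟨hv.1, hv.2 (m + 1) m.le_succ m.succ_pos⟩).trans ?_
  refine (measure_small_displacement hd hN hNd (by positivity : 0 < ε) (m + 1)
    m.succ_pos).trans (le_of_eq ?_)
  congr 2
  rw [hε]
  field_simp
  ring

/-- [Br, Th. A]. There are absolute constants `C₁, C₂ > 0` such that for
`d ≥ 2`, `s = d(d+3)` and `N ≤ 1/(40π√d)`, for every `T ≥ 0` the Lebesgue measure of
`{v ∈ E(s,N) : C(v) ≥ T}` is at most `C₁ s e^{-C₂ T / log d} |E(s,N)|`. -/
theorem statement1 :
    ∃ C₁ C₂ : ℝ, 0 < C₁ ∧ 0 < C₂ ∧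
      ∀ d : ℕ, 2 ≤ d → ∀ N : ℝ, N ≤ 1 / (40 * π * Real.sqrt d) →
      ∀ T : ℝ, 0 ≤ T →
        volume {v ∈ ball (0 : CoefSpace d) N | ENNReal.ofReal T ≤ limitCycleCount d v}
          ≤ ENNReal.ofReal (C₁ * (d * (d + 3)) * Real.exp (-(C₂ * T / Real.log d))) *
              volume (ball (0 : CoefSpace d) N) := by
  set c : ℝ := Real.log (5 / 4) with hc
  have hcpos : 0 < c := Real.log_pos (by norm_num)
  have hlog2 : 0 < Real.log 2 := Real.log_pos (by norm_num)
  have hlog2' : Real.log 2 ≤ 1 := by linarith [Real.log_two_lt_d9]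
  have hpi := Real.pi_gt_three
  refine ⟨408 * (8 * π), c / 2 * Real.log 2, by positivity, by positivity, ?_⟩
  intro d hd N hNle T hT
  have hd2 : (2 : ℝ) ≤ d := by exact_mod_cast hd
  have hsd : 0 < √(d : ℝ) := Real.sqrt_pos.2 (by linarith)
  rcases le_or_gt N 0 with hN | hN
  · rw [ball_eq_empty.2 hN]; simp
  have hNd : N * √d ≤ 1 / (40 * π) := by
    calc N * √d ≤ 1 / (40 * π * √d) * √d := mul_le_mul_of_nonneg_right hNle hsd.le
      _ = 1 / (40 * π) := by field_simp
  have hlogd : Real.log 2 ≤ Real.log d := Real.log_le_log (by norm_num) hd2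
  have hlogd0 : 0 < Real.log d := hlog2.trans_le hlogd
  have hs : (10 : ℝ) ≤ d * (d + 3) := by nlinarith
  rcases le_or_gt (c * T) (Real.log d) with hcase | hcase
  -- few cycles: the right-hand side exceeds the volume of the whole ball
  · refine (measure_mono (Set.sep_subset _ _)).trans ?_
    refine le_mul_of_one_le_left zero_le ?_
    rw [ENNReal.one_le_ofReal]
    have h1 : c / 2 * Real.log 2 * T / Real.log d ≤ 1 := by
      rw [div_le_one hlogd0]
      nlinarith [mul_nonneg hcpos.le hT]
    have h2 : 1 / 3 ≤ Real.exp (-(c / 2 * Real.log 2 * T / Real.log d)) := by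
      have h3 : Real.exp (-1) ≤ Real.exp (-(c / 2 * Real.log 2 * T / Real.log d)) :=
        Real.exp_le_exp.2 (by linarith)
      refine le_trans ?_ h3
      rw [Real.exp_neg, one_div]
      exact inv_anti₀ (Real.exp_pos 1) (by linarith [Real.exp_one_lt_d9])
    have h4 : (3 : ℝ) ≤ 408 * (8 * π) * (d * (d + 3)) := by nlinarith
    calc (1 : ℝ) = 3 * (1 / 3) := by norm_num
      _ ≤ _ := mul_le_mul h4 h2 (by norm_num) (by linarith)
  · have hsub : {v ∈ ball (0 : CoefSpace d) N | ENNReal.ofReal T ≤ limitCycleCount d v} ⊆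
        {v ∈ ball (0 : CoefSpace d) N | ((⌈T⌉₊ : ℕ) : ℝ≥0∞) ≤ limitCycleCount d v} := by
      rintro v ⟨hv, hT'⟩
      refine ⟨hv, ?_⟩
      unfold limitCycleCount at hT' ⊢
      generalize Set.encard _ = E at hT' ⊢
      induction E using ENat.recTopCoe with
      | top => simp
      | coe m =>
        have h1 : ENNReal.ofReal T ≤ (m : ℝ≥0∞) := hT'
        rw [ENNReal.ofReal_le_natCast] at h1
        exact_mod_cast Nat.ceil_le.2 h1
    refine (measure_mono hsub).trans ((measure_many_cycles (by omega) hN hNd _).trans ?_)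
    gcongr ENNReal.ofReal ?_ * _
    have hpow : ((4 : ℝ) / 5) ^ ⌈T⌉₊ ≤ Real.exp (-(c * T)) := by
      have h1 : (4 : ℝ) / 5 = Real.exp (-c) := by
        rw [hc, Real.exp_neg, Real.exp_log (by norm_num)]; norm_num
      rw [h1, ← Real.exp_nat_mul]
      refine Real.exp_le_exp.2 ?_
      nlinarith [Nat.le_ceil T]
    have hsq : √(d : ℝ) ≤ Real.exp (c * T / 2) := by
      have h1 : √(d : ℝ) = Real.exp (Real.log d / 2) := by
        rw [Real.exp_half, Real.exp_log (by linarith)]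
      rw [h1]
      exact Real.exp_le_exp.2 (by linarith)
    have hexp : Real.exp (c * T / 2) * Real.exp (-(c * T)) ≤
        Real.exp (-(c / 2 * Real.log 2 * T / Real.log d)) := by
      rw [← Real.exp_add]
      refine Real.exp_le_exp.2 ?_
      have h1 : c / 2 * Real.log 2 * T / Real.log d ≤ c * T / 2 := by
        rw [div_le_iff₀ hlogd0]
        nlinarith [mul_nonneg hcpos.le hT]
      linarith
    calc 408 * (8 * π) * √(d : ℝ) * (d * (d + 3)) * (4 / 5) ^ ⌈T⌉₊
        = 408 * (8 * π) * (d * (d + 3)) * (√(d : ℝ) * (4 / 5) ^ ⌈T⌉₊) := by ring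
      _ ≤ 408 * (8 * π) * (d * (d + 3)) * (Real.exp (c * T / 2) * Real.exp (-(c * T))) := by
          gcongr
      _ ≤ _ := by gcongr
end

section
/- There exists an absolute positive constant c such that for every d ≥ 2, s = d(d+3), and N ≤ 1/(40π√d), the average number of limit cycles satisfies (1/|E(s,N)|) ∫_{E(s,N)} C(v) dv ≤ c (log d)². -/
/-!
In polar coordinates `ż / z = P + i (1 + Q)`, where `P`, `Q` are polynomials in the radius whose
absolute values are at most `‖v‖ √d ≤ 1/(40π)`, even for a *complex* radius in the unit disc (by
Cauchy-Schwarz, since `∑_{i+k=n} cos^{2k} sin^{2i} ≤ 1`). A periodic orbit in `D_{1/2}` therefore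
turns monotonically around the origin, and its log-radius solves `l' = K(e^l, θ)`,
`K = P / (1 + Q)`.

Writing `l = log ρ + s`, the solution `s = sol K ρ θ` is a limit of Picard iterates that are
holomorphic in `ρ` on `|ρ| < 4/5`; hence so is `h(ρ) = sol K ρ (2π)`, with
`|h| ≤ (12π/5) ‖v‖ √d`. By Cauchy's estimate the increments of `l` over successive turns never change
sign, so an orbit which closes up does so after one turn, and periodic orbits in `D_{1/2}` inject
into the zeros of `h` in `(0, 1/2]`. Moreover `h(0) = ∫ K(0, θ) dθ = (ℓ/2) ∫ dθ / (1 + Q(0, θ))` where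
`ℓ = a_{10} + b_{01}` is the trace of the linear part, so `|h(0)| ≥ (π/2) |ℓ|`. Jensen's formula gives
`C(v) ≤ log (5 N √d / |ℓ(v)|) / log (3/2)`.

For the average, the slab `|ℓ| ≤ t` meets the ball of radius `N` in `ℝ^s` in a proportion `O(s t / N)`
(disjoint translates of the slab fit in a slightly larger ball). Thus
`log (5 N √d / |ℓ|)`, bounded by the number of `n` with `2^n ≤ 5 N √d / |ℓ|`, has average `O(log d)`:
the first `O(log d)` values of `n` contribute at most `1` each, the others a geometric series. Since
`log d ≥ log 2`, this is also `O((log d)²)`.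

The main steps are `PolarKernel.sol_diff`, `PolarKernel.sol_closed`, `zeros_card_le`,
`norm_integral_polarKernel_zero`, `periodicOrbit_eq_orbitCurve`, `limitCycleCount_le` and
`measure_slab_le`.
-/

open MeasureTheory Metric
open scoped ENNReal NNReal Real

/-! ### The scalar equation in the logarithmic radius -/

/-- Truncation of an angle to `[0, 2π]`. -/
noncomputable def clampAngle (θ : ℝ) : ℝ := max 0 (min θ (2 * π))

theorem clampAngle_nonneg (θ : ℝ) : 0 ≤ clampAngle θ := le_max_left _ _

theorem clampAngle_le (θ : ℝ) : clampAngle θ ≤ 2 * π :=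
  max_le (by positivity) (min_le_right _ _)

theorem continuous_clampAngle : Continuous clampAngle := by
  unfold clampAngle; fun_prop

theorem clampAngle_of_mem {θ : ℝ} (h0 : 0 ≤ θ) (h1 : θ ≤ 2 * π) : clampAngle θ = θ := by
  unfold clampAngle; rw [min_eq_left h1, max_eq_right h0]

/-- Picard iterates for the equation `s' = K (ρ exp s) θ`, `s 0 = 0`, on `[0, 2π]`, extended to
all angles by constants. -/
noncomputable def picardIter (K : ℂ → ℝ → ℂ) : ℕ → ℂ → ℝ → ℂ
  | 0, _, _ => 0
  | n + 1, ρ, θ => ∫ φ in (0 : ℝ)..clampAngle θ, K (ρ * Complex.exp (picardIter K n ρ φ)) φ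

/-- A right-hand side `K z θ`, holomorphic in `z` on the unit disc, jointly continuous, and
bounded by a constant so small that the Picard map is a contraction. -/
structure PolarKernel (K : ℂ → ℝ → ℂ) (δ : ℝ) : Prop where
  diff : ∀ φ, DifferentiableOn ℂ (fun z => K z φ) (ball 0 1)
  bound : ∀ z ∈ ball (0 : ℂ) 1, ∀ φ, ‖K z φ‖ ≤ δ
  cont : ContinuousOn (Function.uncurry K) (ball (0 : ℂ) 1 ×ˢ Set.univ)
  small : 2 * π * δ ≤ 1 / 16

theorem mul_exp_mem_ball {ρ s : ℂ} (hρ : ρ ∈ ball (0 : ℂ) (4 / 5)) (hs : ‖s‖ ≤ 1 / 5) :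
    ρ * Complex.exp s ∈ ball (0 : ℂ) 1 := by
  rw [mem_ball_zero_iff] at *
  rw [norm_mul, Complex.norm_exp]
  have h1 : s.re ≤ 1 / 5 := (Complex.re_le_norm s).trans hs
  have h2 : Real.exp s.re ≤ 5 / 4 := by
    have h3 : 4 / 5 ≤ Real.exp (-(1 / 5)) := by
      have := Real.add_one_le_exp (-(1 / 5 : ℝ)); linarith
    rw [Real.exp_neg] at h3
    have h4 : Real.exp (1 / 5) ≤ 5 / 4 := by
      have hp := Real.exp_pos (1 / 5)
      have := mul_le_mul_of_nonneg_right h3 hp.le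
      rw [inv_mul_cancel₀ hp.ne'] at this
      linarith
    exact (Real.exp_le_exp.mpr h1).trans h4
  nlinarith [norm_nonneg ρ, Real.exp_pos s.re]

namespace PolarKernel

variable {K : ℂ → ℝ → ℂ} {δ : ℝ}

theorem nonneg (hK : PolarKernel K δ) : 0 ≤ δ :=
  (norm_nonneg _).trans (hK.bound 0 (by simp) 0)

/-- Cauchy's estimate for `s ↦ K (ρ exp s) φ` turns the sup bound on `K` into a Lipschitz bound. -/
theorem lipschitz (hK : PolarKernel K δ) {ρ s s' : ℂ} (hρ : ρ ∈ ball (0 : ℂ) (4 / 5))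
    (hs : ‖s‖ ≤ 1 / 10) (hs' : ‖s'‖ ≤ 1 / 10) (φ : ℝ) :
    ‖K (ρ * Complex.exp s) φ - K (ρ * Complex.exp s') φ‖ ≤ 10 * δ * ‖s - s'‖ := by
  have hd : DifferentiableOn ℂ (fun s => K (ρ * Complex.exp s) φ) (closedBall 0 (1 / 5)) := by
    refine (hK.diff φ).comp (f := fun s => ρ * Complex.exp s) (by fun_prop) ?_
    intro s hs
    exact mul_exp_mem_ball hρ (by simpa using hs)
  have hsub : ∀ w ∈ closedBall (0 : ℂ) (1 / 10), closedBall w (1 / 10) ⊆ closedBall (0 : ℂ) (1 / 5) := by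
    intro w hw
    refine closedBall_subset_closedBall' ?_
    rw [mem_closedBall] at hw; linarith
  have hda : ∀ w ∈ closedBall (0 : ℂ) (1 / 10),
      DifferentiableAt ℂ (fun s => K (ρ * Complex.exp s) φ) w := by
    intro w hw
    -- holomorphy holds on a ball slightly larger than `1/10`
    refine hd.differentiableAt (Filter.mem_of_superset (ball_mem_nhds w (ε := 1 / 10) (by norm_num)) ?_)
    exact ball_subset_closedBall.trans (hsub w hw)
  have hder : ∀ w ∈ closedBall (0 : ℂ) (1 / 10),
      ‖deriv (fun s => K (ρ * Complex.exp s) φ) w‖ ≤ 10 * δ := by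
    intro w hw
    have := Complex.norm_deriv_le_of_forall_mem_sphere_norm_le (c := w) (R := 1 / 10) (C := δ)
      (f := fun s => K (ρ * Complex.exp s) φ) (by norm_num)
      ((hd.mono (hsub w hw)).diffContOnCl_ball (subset_refl _)) (by
        intro z hz
        exact hK.bound _ (mul_exp_mem_ball hρ
          (by simpa using hsub w hw (sphere_subset_closedBall hz))) φ)
    linarith
  exact (convex_closedBall (0 : ℂ) (1 / 10)).norm_image_sub_le_of_norm_deriv_le
    hda hder (by simpa using hs') (by simpa using hs)

theorem continuous_comp (hK : PolarKernel K δ) {ρ : ℂ} (hρ : ρ ∈ ball (0 : ℂ) (4 / 5))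
    {s : ℝ → ℂ} (hs : Continuous s) (hb : ∀ φ, ‖s φ‖ ≤ 1 / 5) :
    Continuous fun φ => K (ρ * Complex.exp (s φ)) φ := by
  refine hK.cont.comp_continuous (f := fun φ => (ρ * Complex.exp (s φ), φ)) (by fun_prop) ?_
  intro φ
  exact ⟨mul_exp_mem_ball hρ (hb φ), trivial⟩

theorem norm_integral_le {f : ℝ → ℂ} {C : ℝ} (hC : 0 ≤ C) (hf : ∀ φ, ‖f φ‖ ≤ C) (θ : ℝ) :
    ‖∫ φ in (0 : ℝ)..clampAngle θ, f φ‖ ≤ 2 * π * C := by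
  refine (intervalIntegral.norm_integral_le_of_norm_le_const (C := C) fun φ _ => hf φ).trans ?_
  rw [sub_zero, abs_of_nonneg (clampAngle_nonneg θ), mul_comm]
  exact mul_le_mul_of_nonneg_right (clampAngle_le θ) hC

/-- The Picard iterates are continuous and stay so small that `ρ exp s` remains in the unit disc. -/
theorem picard_props (hK : PolarKernel K δ) {ρ : ℂ} (hρ : ρ ∈ ball (0 : ℂ) (4 / 5)) (n : ℕ) :
    Continuous (picardIter K n ρ) ∧ ∀ θ, ‖picardIter K n ρ θ‖ ≤ 2 * π * δ := by
  induction n with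
  | zero =>
    have h0 : picardIter K 0 ρ = fun _ => 0 := by funext θ; simp [picardIter]
    rw [h0]
    refine ⟨continuous_const, fun θ => ?_⟩
    rw [norm_zero]
    have := hK.nonneg
    positivity
  | succ n ih =>
    have hb : ∀ φ, ‖picardIter K n ρ φ‖ ≤ 1 / 5 := fun φ =>
      (ih.2 φ).trans (hK.small.trans (by norm_num))
    have hc := hK.continuous_comp hρ ih.1 hb
    have h1 : picardIter K (n + 1) ρ = fun θ => ∫ φ in (0 : ℝ)..clampAngle θ,
        K (ρ * Complex.exp (picardIter K n ρ φ)) φ := by funext θ; simp [picardIter]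
    rw [h1]
    refine ⟨?_, fun θ => norm_integral_le hK.nonneg
      (fun φ => hK.bound _ (mul_exp_mem_ball hρ (hb φ)) φ) θ⟩
    exact (intervalIntegral.continuous_primitive (fun a b => hc.intervalIntegrable a b) 0).comp
      continuous_clampAngle

/-- Differentiation under the integral sign in the holomorphic setting: only continuity in the
integration variable and a uniform bound are required, by Cauchy's estimate. -/
theorem differentiableOn_integral {F : ℂ → ℝ → ℂ} {r C b : ℝ}
    (hc : ∀ z ∈ ball (0 : ℂ) r, Continuous (F z))
    (hd : ∀ φ, DifferentiableOn ℂ (fun z => F z φ) (ball 0 r))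
    (hb : ∀ z ∈ ball (0 : ℂ) r, ∀ φ, ‖F z φ‖ ≤ C) :
    DifferentiableOn ℂ (fun z => ∫ φ in (0 : ℝ)..b, F z φ) (ball 0 r) := by
  intro z hz
  obtain ⟨ε, hε, hεs⟩ := Metric.isOpen_iff.1 isOpen_ball z hz
  have hsub : ∀ w ∈ ball z (ε / 2), closedBall w (ε / 4) ⊆ ball (0 : ℂ) r := by
    intro w hw x hx
    apply hεs
    rw [mem_ball] at *
    rw [mem_closedBall] at hx
    have := dist_triangle x w z
    linarith
  have hda : ∀ φ, ∀ w ∈ ball z (ε / 2), DifferentiableAt ℂ (fun z => F z φ) w := by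
    intro φ w hw
    refine (hd φ).differentiableAt (isOpen_ball.mem_nhds ?_)
    exact hsub w hw (mem_closedBall_self (by positivity))
  have key := intervalIntegral.hasDerivAt_integral_of_dominated_loc_of_deriv_le (μ := volume)
    (a := 0) (b := b) (F := F) (F' := fun w φ => deriv (fun z => F z φ) w) (x₀ := z)
    (s := ball z (ε / 2)) (bound := fun _ => C / (ε / 4)) (ball_mem_nhds z (by positivity))
    ?_ ((hc z hz).intervalIntegrable 0 b) ?_ ?_ (by simp) ?_
  · exact key.2.differentiableAt.differentiableWithinAt
  · filter_upwards [isOpen_ball.mem_nhds hz] with w hw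
    exact (hc w hw).aestronglyMeasurable
  · -- the derivative is a pointwise limit of continuous difference quotients
    have hu : Filter.Tendsto (fun n : ℕ => z + ((ε / 2) * (1 / ((n : ℝ) + 2)) : ℝ)) Filter.atTop
        (nhds z) := by
      have h1 : Filter.Tendsto (fun n : ℕ => (ε / 2) * (1 / ((n : ℝ) + 2))) Filter.atTop (nhds 0) := by
        have := (tendsto_one_div_add_atTop_nhds_zero_nat (𝕜 := ℝ)).comp (Filter.tendsto_add_atTop_nat 1)
        have h2 := this.const_mul (ε / 2)
        rw [mul_zero] at h2
        refine h2.congr fun n => ?_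
        simp only [Function.comp]; push_cast; ring
      have h3 := (Complex.continuous_ofReal.tendsto 0).comp h1
      simpa using h3.const_add z
    have hne : ∀ n : ℕ, z + ((ε / 2) * (1 / ((n : ℝ) + 2)) : ℝ) ≠ z := by
      intro n h
      have h1 : (ε / 2) * (1 / ((n : ℝ) + 2)) = 0 := by
        have := add_eq_left.1 h
        exact_mod_cast this
      have : 0 < (ε / 2) * (1 / ((n : ℝ) + 2)) := by positivity
      linarith
    have hmem : ∀ n : ℕ, z + ((ε / 2) * (1 / ((n : ℝ) + 2)) : ℝ) ∈ ball (0 : ℂ) r := by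
      intro n
      apply hεs
      rw [mem_ball, dist_eq_norm, add_sub_cancel_left, Complex.norm_real, Real.norm_eq_abs,
        abs_of_pos (by positivity)]
      have : 1 / ((n : ℝ) + 2) ≤ 1 := by
        rw [div_le_one (by positivity)]; linarith [Nat.cast_nonneg (α := ℝ) n]
      nlinarith
    refine aestronglyMeasurable_of_tendsto_ae Filter.atTop
      (f := fun (n : ℕ) φ => slope (fun z => F z φ) z (z + ((ε / 2) * (1 / ((n : ℝ) + 2)) : ℝ))) ?_ ?_
    · intro n
      simp only [slope, vsub_eq_sub]
      exact (Continuous.const_smul ((hc _ (hmem n)).sub (hc z hz)) ((z + ((ε / 2) * (1 / ((n : ℝ) + 2)) : ℝ) - z)⁻¹)).aestronglyMeasurable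
    · refine Filter.Eventually.of_forall fun φ => ?_
      have h := (hda φ z (mem_ball_self (by positivity))).hasDerivAt
      rw [hasDerivAt_iff_tendsto_slope] at h
      refine h.comp (tendsto_nhdsWithin_iff.2 ⟨hu, Filter.Eventually.of_forall fun n => hne n⟩)
  · refine Filter.Eventually.of_forall fun φ _ w hw => ?_
    exact Complex.norm_deriv_le_of_forall_mem_sphere_norm_le (by positivity)
      (((hd φ).mono (hsub w hw)).diffContOnCl_ball (subset_refl _))
      fun x hx => hb x (hsub w hw (sphere_subset_closedBall hx)) φ
  · exact Filter.Eventually.of_forall fun φ _ w hw => (hda φ w hw).hasDerivAt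

theorem picard_diff (hK : PolarKernel K δ) (n : ℕ) (θ : ℝ) :
    DifferentiableOn ℂ (fun ρ => picardIter K n ρ θ) (ball 0 (4 / 5)) := by
  induction n generalizing θ with
  | zero => simp only [picardIter]; exact differentiableOn_const _
  | succ n ih =>
    simp only [picardIter]
    have hb : ∀ ρ ∈ ball (0 : ℂ) (4 / 5), ∀ φ, ‖picardIter K n ρ φ‖ ≤ 1 / 5 := fun ρ hρ φ =>
      ((hK.picard_props hρ n).2 φ).trans (hK.small.trans (by norm_num))
    refine differentiableOn_integral (C := δ) (fun ρ hρ => ?_) (fun φ => ?_) (fun ρ hρ φ => ?_)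
    · exact hK.continuous_comp hρ (hK.picard_props hρ n).1 (hb ρ hρ)
    · refine (hK.diff φ).comp (f := fun ρ => ρ * Complex.exp (picardIter K n ρ φ)) ?_ ?_
      · exact differentiableOn_id.mul (ih φ).cexp
      · intro ρ hρ; exact mul_exp_mem_ball hρ (hb ρ hρ φ)
    · exact hK.bound _ (mul_exp_mem_ball hρ (hb ρ hρ φ)) φ

/-- Successive Picard iterates contract, the factor being `10 · 2πδ ≤ 5/8`. -/
theorem picard_dist (hK : PolarKernel K δ) {ρ : ℂ} (hρ : ρ ∈ ball (0 : ℂ) (4 / 5)) (n : ℕ) (θ : ℝ) :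
    ‖picardIter K (n + 1) ρ θ - picardIter K n ρ θ‖ ≤ (1 / 16) * (5 / 8) ^ n := by
  have hbd : ∀ n θ, ‖picardIter K n ρ θ‖ ≤ 1 / 16 := fun n φ =>
      ((hK.picard_props hρ n).2 φ).trans hK.small
  induction n generalizing θ with
  | zero => simpa [picardIter] using hbd 1 θ
  | succ n ih =>
    have hb : ∀ n φ, ‖picardIter K n ρ φ‖ ≤ 1 / 10 := fun n φ => (hbd n φ).trans (by norm_num)
    have hc : ∀ n, Continuous fun φ => K (ρ * Complex.exp (picardIter K n ρ φ)) φ := fun n =>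
      hK.continuous_comp hρ (hK.picard_props hρ n).1 fun φ => (hb n φ).trans (by norm_num)
    rw [picardIter, picardIter, ← intervalIntegral.integral_sub
      ((hc (n + 1)).intervalIntegrable _ _) ((hc n).intervalIntegrable _ _)]
    have h0 := hK.nonneg
    refine (norm_integral_le (C := 10 * δ * ((1 / 16) * (5 / 8) ^ n)) (by positivity)
      (fun φ => ?_) θ).trans ?_
    · refine (hK.lipschitz hρ (hb _ φ) (hb _ φ) φ).trans ?_
      gcongr
      exact ih φ
    · have := hK.small
      have h5 : (0 : ℝ) ≤ (5 / 8) ^ n := by positivity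
      rw [pow_succ]
      nlinarith

/-- Solution of `s' = K (ρ exp s) θ`, `s 0 = 0`, at angle `θ`, for `θ ∈ [0, 2π]` and `|ρ| < 4/5`; in
that range of `ρ` the limit exists. -/
noncomputable def sol (K : ℂ → ℝ → ℂ) (ρ : ℂ) (θ : ℝ) : ℂ :=
  Filter.limUnder Filter.atTop fun n => picardIter K n ρ θ

theorem tendsto_sol (hK : PolarKernel K δ) {ρ : ℂ} (hρ : ρ ∈ ball (0 : ℂ) (4 / 5)) (θ : ℝ) :
    Filter.Tendsto (fun n => picardIter K n ρ θ) Filter.atTop (nhds (sol K ρ θ)) := by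
  refine CauchySeq.tendsto_limUnder (cauchySeq_of_le_geometric (5 / 8) (1 / 16) (by norm_num) ?_)
  intro n
  rw [dist_comm, dist_eq_norm]
  exact hK.picard_dist hρ n θ

theorem sol_diff (hK : PolarKernel K δ) (θ : ℝ) :
    DifferentiableOn ℂ (fun ρ => sol K ρ θ) (ball 0 (4 / 5)) := by
  refine TendstoLocallyUniformlyOn.differentiableOn (φ := Filter.atTop)
    (F := fun n ρ => picardIter K n ρ θ) ?_ (Filter.Eventually.of_forall fun n => hK.picard_diff n θ)
    isOpen_ball
  refine TendstoUniformlyOn.tendstoLocallyUniformlyOn ?_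
  rw [Metric.tendstoUniformlyOn_iff]
  intro ε hε
  have h1 : Filter.Tendsto (fun n : ℕ => (1 / 16 : ℝ) * (5 / 8) ^ n / (1 - 5 / 8)) Filter.atTop
      (nhds 0) := by
    have := (tendsto_pow_atTop_nhds_zero_of_lt_one (r := (5 / 8 : ℝ)) (by norm_num)
      (by norm_num)).const_mul (1 / 16) |>.div_const (1 - 5 / 8)
    simpa using this
  filter_upwards [h1.eventually (gt_mem_nhds hε)] with n hn ρ hρ
  rw [dist_comm]
  refine lt_of_le_of_lt (dist_le_of_le_geometric_of_tendsto (5 / 8) (1 / 16) (by norm_num) ?_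
    (hK.tendsto_sol hρ θ) n) hn
  intro n
  rw [dist_comm, dist_eq_norm]
  exact hK.picard_dist hρ n θ

theorem sol_bound (hK : PolarKernel K δ) {ρ : ℂ} (hρ : ρ ∈ ball (0 : ℂ) (4 / 5)) (θ : ℝ) :
    ‖sol K ρ θ‖ ≤ 2 * π * δ :=
  le_of_tendsto (hK.tendsto_sol hρ θ).norm
    (Filter.Eventually.of_forall fun n => (hK.picard_props hρ n).2 θ)

/-- At `ρ = 0` the right-hand side does not depend on `s`. -/
theorem sol_zero (hK : PolarKernel K δ) :
    sol K 0 (2 * π) = ∫ φ in (0 : ℝ)..(2 * π), K 0 φ := by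
  refine tendsto_nhds_unique (hK.tendsto_sol (by simp) (2 * π)) ?_
  refine tendsto_const_nhds.congr' ?_
  filter_upwards [Filter.eventually_ge_atTop 1] with n hn
  obtain ⟨m, rfl⟩ := Nat.exists_eq_add_of_le' hn
  simp [picardIter, clampAngle_of_mem (show (0 : ℝ) ≤ 2 * π by positivity) le_rfl]

/-- Any genuine solution of the scalar equation for which `ρ exp c` stays in the unit disc
coincides with `sol` over one turn. -/
theorem sol_unique (hK : PolarKernel K δ) {ρ : ℂ} (hρ : ρ ∈ ball (0 : ℂ) (4 / 5))
    {c : ℝ → ℂ} (hc0 : c 0 = 0)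
    (hc : ∀ θ, HasDerivAt c (K (ρ * Complex.exp (c θ)) θ) θ)
    (hcb : ∀ θ, ρ * Complex.exp (c θ) ∈ ball (0 : ℂ) 1)
    {θ : ℝ} (h0 : 0 ≤ θ) (h1 : θ ≤ 2 * π) : sol K ρ θ = c θ := by
  have hcc : Continuous c := continuous_iff_continuousAt.2 fun θ => (hc θ).continuousAt
  have hkc : Continuous fun φ => K (ρ * Complex.exp (c φ)) φ :=
    hK.cont.comp_continuous (f := fun φ => (ρ * Complex.exp (c φ), φ)) (by fun_prop)
      fun φ => ⟨hcb φ, trivial⟩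
  have hcint : ∀ θ, c θ = ∫ φ in (0 : ℝ)..θ, K (ρ * Complex.exp (c φ)) φ := by
    intro θ
    rw [intervalIntegral.integral_eq_sub_of_hasDerivAt (fun x _ => hc x)
      (hkc.intervalIntegrable _ _), hc0, sub_zero]
  have h00 := hK.nonneg
  have hcbd : ∀ θ, 0 ≤ θ → θ ≤ 2 * π → ‖c θ‖ ≤ 1 / 16 := by
    intro θ h0 h1
    rw [hcint θ, ← clampAngle_of_mem h0 h1]
    exact (norm_integral_le h00 (fun φ => hK.bound _ (hcb φ) φ) θ).trans hK.small
  have hbd : ∀ n θ, ‖picardIter K n ρ θ‖ ≤ 1 / 16 := fun n φ =>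
      ((hK.picard_props hρ n).2 φ).trans hK.small
  have key : ∀ n : ℕ, ∀ θ, 0 ≤ θ → θ ≤ 2 * π →
      ‖picardIter K n ρ θ - c θ‖ ≤ (1 / 16) * (5 / 8) ^ n := by
    intro n
    induction n with
    | zero => intro θ h0 h1; simpa [picardIter] using hcbd θ h0 h1
    | succ n ih =>
      intro θ h0 h1
      have hcn : Continuous fun φ => K (ρ * Complex.exp (picardIter K n ρ φ)) φ :=
        hK.continuous_comp hρ (hK.picard_props hρ n).1 fun φ => (hbd n φ).trans (by norm_num)
      rw [picardIter, clampAngle_of_mem h0 h1, hcint θ, ← intervalIntegral.integral_sub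
        (hcn.intervalIntegrable _ _) (hkc.intervalIntegrable _ _)]
      refine (intervalIntegral.norm_integral_le_of_norm_le_const
        (C := 10 * δ * ((1 / 16) * (5 / 8) ^ n)) fun φ hφ => ?_).trans ?_
      · rw [Set.uIoc_of_le h0] at hφ
        refine (hK.lipschitz hρ ((hbd n φ).trans (by norm_num))
          ((hcbd φ hφ.1.le (hφ.2.trans h1)).trans (by norm_num)) φ).trans ?_
        gcongr
        exact ih φ hφ.1.le (hφ.2.trans h1)
      · rw [sub_zero, abs_of_nonneg h0]
        have h5 : (0 : ℝ) ≤ (5 / 8) ^ n := by positivity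
        have h6 : δ * θ ≤ 1 / 16 := by nlinarith [hK.small]
        rw [pow_succ]
        nlinarith
  refine tendsto_nhds_unique (hK.tendsto_sol hρ θ) ?_
  rw [tendsto_iff_norm_sub_tendsto_zero]
  refine squeeze_zero (fun _ => norm_nonneg _) (fun n => key n θ h0 h1) ?_
  have := (tendsto_pow_atTop_nhds_zero_of_lt_one (r := (5 / 8 : ℝ)) (by norm_num)
      (by norm_num)).const_mul (1 / 16)
  simpa using this

end PolarKernel

/-! ### Counting zeros by Jensen's formula -/

/-- Jensen's inequality for the zeros of `h` on the segment `(0, 1/2]`, applied on the circles of radii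
`1/2` and `3/4`, whose ratio is `3/2`. -/
theorem zeros_card_le {h : ℂ → ℂ} {M : ℝ} (hd : DifferentiableOn ℂ h (ball 0 (4 / 5)))
    (hM : 0 < M) (hb : ∀ z ∈ ball (0 : ℂ) (4 / 5), ‖h z‖ ≤ M) (h0 : h 0 ≠ 0)
    {Z : Set ℝ} (hZ : ∀ x ∈ Z, 0 < x ∧ x ≤ 1 / 2 ∧ h x = 0) :
    Z.Finite ∧ (Z.ncard : ℝ) ≤ Real.log (M / ‖h 0‖) / Real.log (3 / 2) := by
  set f : ℂ → ℂ := fun z => h z / M with hf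
  have hMc : (M : ℂ) ≠ 0 := by exact_mod_cast hM.ne'
  have hfd : DifferentiableOn ℂ f (ball 0 (4 / 5)) := hd.div_const _
  have hfa : AnalyticOnNhd ℂ f (closedBall 0 |3 / 4|) := by
    refine (hfd.analyticOnNhd isOpen_ball).mono (closedBall_subset_ball ?_)
    rw [abs_of_pos (by norm_num)]; norm_num
  have hfa2 : AnalyticOnNhd ℂ f (closedBall 0 |1 / 2|) := by
    refine hfa.mono (closedBall_subset_closedBall ?_)
    rw [abs_of_pos (by norm_num), abs_of_pos (by norm_num)]; norm_num
  have hf0 : f 0 ≠ 0 := div_ne_zero h0 hMc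
  have key := hfa.sum_divisor_le (r := 1 / 2) (R := 3 / 4) (M := 1) (by norm_num)
    (by norm_num [abs_of_pos]) le_rfl hf0 (by
      intro z hz
      have : z ∈ ball (0 : ℂ) (4 / 5) := by
        rw [mem_ball]; rw [mem_sphere, abs_of_pos (by norm_num)] at hz; rw [hz]; norm_num
      simp only [hf, norm_div, Complex.norm_real, Real.norm_eq_abs, abs_of_pos hM]
      exact (div_le_one hM).2 (hb z this))
  set D := MeromorphicOn.divisor f (closedBall 0 |1 / 2|) with hD
  have hfin : D.support.Finite := D.finiteSupport (isCompact_closedBall _ _)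
  have hnn : ∀ u, 0 ≤ D u := fun u => MeromorphicOn.AnalyticOnNhd.divisor_nonneg hfa2 u
  have hmem : ∀ x ∈ Z, 1 ≤ D (x : ℂ) := by
    intro x hx
    obtain ⟨h1, h2, h3⟩ := hZ x hx
    have hxm : (x : ℂ) ∈ closedBall (0 : ℂ) |1 / 2| := by
      rw [mem_closedBall_zero_iff, Complex.norm_real, Real.norm_eq_abs]
      exact abs_le_abs_of_nonneg h1.le h2
    rw [hD, MeromorphicOn.AnalyticOnNhd.divisor_apply hfa2 hxm]
    have hz0 : analyticOrderAt f x ≠ 0 := by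
      rw [(hfa2 x hxm).analyticOrderAt_ne_zero]
      simp [hf, h3]
    have hzt : analyticOrderAt f x ≠ ⊤ := by
      intro ht
      have hpc : IsPreconnected (closedBall (0 : ℂ) |1 / 2|) :=
        (convex_closedBall _ _).isPreconnected
      rw [analyticOrderAt_eq_top] at ht
      have := hfa2.eqOn_zero_of_preconnected_of_eventuallyEq_zero hpc hxm ht
      exact hf0 (this (mem_closedBall_self (abs_nonneg _)))
    obtain ⟨n, hn⟩ := ENat.ne_top_iff_exists.1 hzt
    rw [← hn] at hz0 ⊢
    have hn0 : n ≠ 0 := by exact_mod_cast hz0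
    simp only [ENat.map_natCast, WithTop.untop₀_coe]
    omega
  have hZfin : Z.Finite := by
    refine Set.Finite.of_finite_image (f := fun x : ℝ => (x : ℂ)) (hfin.subset ?_)
      (Complex.ofReal_injective.injOn)
    rintro _ ⟨x, hx, rfl⟩
    have := hmem x hx
    simp only [Function.mem_support]; omega
  refine ⟨hZfin, ?_⟩
  have h1 : ((Z.ncard : ℤ) : ℝ) ≤ ((∑ᶠ u, D u : ℤ) : ℝ) := by
    norm_cast
    rw [finsum_eq_sum_of_support_subset (s := hfin.toFinset) _ (by simp)]
    rw [Set.ncard_eq_toFinset_card Z hZfin, ← Finset.card_image_of_injective hZfin.toFinset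
      Complex.ofReal_injective, Finset.card_eq_sum_ones]
    push_cast
    refine (Finset.sum_le_sum (g := fun u => D u) ?_).trans
      (Finset.sum_le_sum_of_subset_of_nonneg ?_ fun u _ _ => hnn u)
    · intro u hu
      obtain ⟨x, hx, rfl⟩ := Finset.mem_image.1 hu
      exact hmem x (by simpa using hx)
    · intro u hu
      obtain ⟨x, hx, rfl⟩ := Finset.mem_image.1 hu
      have := hmem x (by simpa using hx)
      simp; omega
  push_cast at h1
  refine h1.trans (key.trans (le_of_eq ?_))
  have : (1 : ℝ) / ‖f 0‖ = M / ‖h 0‖ := by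
    simp [hf, abs_of_pos hM]
  rw [this]; norm_num

/-! ### Solutions which close up after several turns -/

namespace PolarKernel

variable {K : ℂ → ℝ → ℂ} {δ : ℝ}

/-- The displacement `ρ ↦ sol K ρ θ` is a contraction on the disc of radius `1/2`. -/
theorem sol_lipschitz (hK : PolarKernel K δ) {x y : ℂ} (hx : ‖x‖ ≤ 1 / 2) (hy : ‖y‖ ≤ 1 / 2) (θ : ℝ) :
    ‖sol K y θ - sol K x θ‖ ≤ 5 / 24 * ‖y - x‖ := by
  have hsub : ∀ w ∈ closedBall (0 : ℂ) (1 / 2), ball w (3 / 10) ⊆ ball (0 : ℂ) (4 / 5) := by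
    intro w hw
    refine ball_subset_ball' ?_
    rw [mem_closedBall] at hw; linarith
  have hder : ∀ w ∈ closedBall (0 : ℂ) (1 / 2), ‖deriv (fun ρ => sol K ρ θ) w‖ ≤ 5 / 24 := by
    intro w hw
    -- Cauchy's estimate on every radius below `3/10`
    have h1 : ∀ R : ℝ, 0 < R → R < 3 / 10 → ‖deriv (fun ρ => sol K ρ θ) w‖ * R ≤ 1 / 16 := by
      intro R hR hR'
      have hs : closedBall w R ⊆ ball (0 : ℂ) (4 / 5) :=
        (closedBall_subset_ball hR').trans (hsub w hw)
      have := Complex.norm_deriv_le_of_forall_mem_sphere_norm_le hR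
        (((hK.sol_diff θ).mono hs).diffContOnCl_ball (subset_refl _))
        (fun z hz => (hK.sol_bound (hs (sphere_subset_closedBall hz)) θ).trans hK.small)
      rwa [le_div_iff₀ hR] at this
    by_contra hcon
    push Not at hcon
    set D := ‖deriv (fun ρ => sol K ρ θ) w‖
    have hD : 0 < D := by linarith
    have h2 := h1 ((3 / 10 + 1 / 16 / D) / 2) (by positivity) (by
      have : 1 / 16 / D < 3 / 10 := by rw [div_lt_iff₀ hD]; linarith
      linarith)
    have h3 : D * ((3 / 10 + 1 / 16 / D) / 2) = (3 / 10 * D + 1 / 16) / 2 := by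
      field_simp
    rw [h3] at h2
    linarith
  refine (convex_closedBall (0 : ℂ) (1 / 2)).norm_image_sub_le_of_norm_deriv_le
    (f := fun ρ => sol K ρ θ) ?_ hder (by simpa using hx) (by simpa using hy)
  intro w hw
  exact (hK.sol_diff θ).differentiableAt (Filter.mem_of_superset (ball_mem_nhds w (by norm_num))
    (hsub w hw))

variable {l : ℝ → ℝ}

/-- After `j` full turns a solution is again governed by `sol`, with the new initial radius. -/
theorem sol_turn (hK : PolarKernel K δ) (hper : ∀ z, Function.Periodic (K z) (2 * π))
    (hl : ∀ θ, HasDerivAt (fun θ => (l θ : ℂ)) (K (Real.exp (l θ) : ℝ) θ) θ)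
    (hb : ∀ θ, Real.exp (l θ) ≤ 1 / 2) (j : ℕ) {θ : ℝ} (h0 : 0 ≤ θ) (h1 : θ ≤ 2 * π) :
    (l (θ + j * (2 * π)) : ℂ) = l (j * (2 * π)) + sol K (Real.exp (l (j * (2 * π))) : ℝ) θ := by
  have hexp : ∀ θ : ℝ, ((Real.exp (l (j * (2 * π))) : ℝ) : ℂ) *
      Complex.exp (l (θ + j * (2 * π)) - l (j * (2 * π))) = (Real.exp (l (θ + j * (2 * π))) : ℝ) := by
    intro θ
    rw [Complex.ofReal_exp, ← Complex.exp_add, Complex.ofReal_exp]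
    congr 1; ring
  have hnorm : ∀ x : ℝ, ‖((Real.exp (l x) : ℝ) : ℂ)‖ ≤ 1 / 2 := by
    intro x
    rw [Complex.norm_real, Real.norm_eq_abs, Real.abs_exp]; exact hb x
  rw [hK.sol_unique (c := fun θ => (l (θ + j * (2 * π)) - l (j * (2 * π)) : ℂ)) ?_ (by simp) ?_ ?_ h0 h1]
  · ring
  · rw [mem_ball_zero_iff]; linarith [hnorm (j * (2 * π))]
  · intro θ
    rw [hexp]
    have h2 : HasDerivAt (fun θ => (l (θ + j * (2 * π)) : ℂ))
        (K (Real.exp (l (θ + j * (2 * π))) : ℝ) (θ + j * (2 * π))) θ :=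
      HasDerivAt.comp_add_const θ (j * (2 * π)) (hl (θ + j * (2 * π)))
    rw [(hper _).nat_mul j θ] at h2
    exact h2.sub_const _
  · intro θ
    rw [hexp, mem_ball_zero_iff]
    linarith [hnorm (θ + j * (2 * π))]

/-- A solution that returns to its initial radius after some number of turns already does so after
one turn, and is then `2π`-periodic: by `sol_lipschitz` the increments of the successive log-radii all
keep the sign of the first one. -/
theorem sol_closed (hK : PolarKernel K δ) (hper : ∀ z, Function.Periodic (K z) (2 * π))
    (hl : ∀ θ, HasDerivAt (fun θ => (l θ : ℂ)) (K (Real.exp (l θ) : ℝ) θ) θ)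
    (hb : ∀ θ, Real.exp (l θ) ≤ 1 / 2) {k : ℕ} (hk : 0 < k) (hlk : l (k * (2 * π)) = l 0) :
    sol K (Real.exp (l 0) : ℝ) (2 * π) = 0 ∧
      ∀ j : ℕ, ∀ θ, 0 ≤ θ → θ ≤ 2 * π →
        (l (θ + j * (2 * π)) : ℂ) = l 0 + sol K (Real.exp (l 0) : ℝ) θ := by
  set x : ℕ → ℝ := fun j => l (j * (2 * π)) with hx
  have hx0 : x 0 = l 0 := by simp [hx]
  have hstep : ∀ j, ((x (j + 1) - x j : ℝ) : ℂ) = sol K (Real.exp (x j) : ℝ) (2 * π) := by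
    intro j
    have := hK.sol_turn hper hl hb j (θ := 2 * π) (by positivity) le_rfl
    have h2 : 2 * π + j * (2 * π) = ((j + 1 : ℕ) : ℝ) * (2 * π) := by push_cast; ring
    rw [h2] at this
    push_cast [hx] at this ⊢
    rw [this]; ring
  have hnorm : ∀ j, ‖((Real.exp (x j) : ℝ) : ℂ)‖ ≤ 1 / 2 := by
    intro j
    rw [Complex.norm_real, Real.norm_eq_abs, Real.abs_exp]; exact hb _
  have hsmall : ∀ j, |x (j + 1) - x j| ≤ 1 / 16 := by
    intro j
    rw [← Real.norm_eq_abs, ← Complex.norm_real, hstep]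
    exact (hK.sol_bound (by rw [mem_ball_zero_iff]; linarith [hnorm j]) _).trans hK.small
  have hinc : ∀ j, |(x (j + 2) - x (j + 1)) - (x (j + 1) - x j)| ≤ 5 / 24 * |x (j + 1) - x j| := by
    intro j
    have h1 := hK.sol_lipschitz (hnorm j) (hnorm (j + 1)) (2 * π)
    rw [← hstep, ← hstep, ← Complex.ofReal_sub, ← Complex.ofReal_sub, Complex.norm_real,
      Complex.norm_real, Real.norm_eq_abs, Real.norm_eq_abs] at h1
    refine h1.trans ?_
    have h2 : Real.exp (x (j + 1)) - Real.exp (x j)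
        = Real.exp (x j) * (Real.exp (x (j + 1) - x j) - 1) := by
      rw [mul_sub, ← Real.exp_add]; ring_nf
    rw [h2, abs_mul, Real.abs_exp]
    have h3 := Real.abs_exp_sub_one_le (x := x (j + 1) - x j) ((hsmall j).trans (by norm_num))
    have h4 : Real.exp (x j) ≤ 1 / 2 := hb _
    have h5 := abs_nonneg (Real.exp (x (j + 1) - x j) - 1)
    nlinarith [Real.exp_pos (x j)]
  have hzero : x 1 - x 0 = 0 := by
    rcases lt_trichotomy (x 1 - x 0) 0 with h | h | h
    · exfalso
      have hneg : ∀ j, x (j + 1) - x j < 0 := by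
        intro j
        induction j with
        | zero => exact h
        | succ j ih =>
          have := hinc j
          rw [abs_of_neg ih] at this
          have h6 := (abs_le.1 this).2
          show x (j + 2) - x (j + 1) < 0
          linarith
      have : StrictAnti x := strictAnti_nat_of_succ_lt fun j => by linarith [hneg j]
      have := this hk
      simp only [hx] at this
      simp [hlk] at this
    · exact h
    · exfalso
      have hpos : ∀ j, 0 < x (j + 1) - x j := by
        intro j
        induction j with
        | zero => exact h
        | succ j ih =>
          have := hinc j
          rw [abs_of_pos ih] at this
          have h6 := (abs_le.1 this).1
          show 0 < x (j + 2) - x (j + 1)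
          linarith
      have : StrictMono x := strictMono_nat_of_lt_succ fun j => by linarith [hpos j]
      have := this hk
      simp only [hx] at this
      simp [hlk] at this
  have hs0 : sol K (Real.exp (l 0) : ℝ) (2 * π) = 0 := by
    rw [← hx0, ← hstep, hzero, Complex.ofReal_zero]
  have hconst : ∀ j, x j = l 0 := by
    intro j
    induction j with
    | zero => exact hx0
    | succ j ih =>
      have := hstep j
      rw [ih, hs0] at this
      have h7 : x (j + 1) - l 0 = 0 := by exact_mod_cast this
      linarith
  refine ⟨hs0, fun j θ h0 h1 => ?_⟩
  have := hK.sol_turn hper hl hb j h0 h1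
  have h8 : l (j * (2 * π)) = l 0 := hconst j
  rw [this, h8]

end PolarKernel

/-- A real function whose derivative is at least `1/2` has a global differentiable inverse. -/
theorem exists_inverse {θ θ' : ℝ → ℝ} (h : ∀ t, HasDerivAt θ (θ' t) t) (h2 : ∀ t, 1 / 2 ≤ θ' t) :
    ∃ τ : ℝ → ℝ, (∀ s, θ (τ s) = s) ∧ (∀ t, τ (θ t) = t) ∧ StrictMono θ ∧
      ∀ s, HasDerivAt τ (θ' (τ s))⁻¹ s := by
  have hc : Continuous θ := continuous_iff_continuousAt.2 fun t => (h t).continuousAt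
  have hd : ∀ t, HasDerivAt (fun t => θ t - t / 2) (θ' t - 1 / 2) t := fun t =>
    (h t).sub ((hasDerivAt_id t).div_const 2)
  have hm : Monotone fun t => θ t - t / 2 := by
    refine monotone_of_deriv_nonneg (fun t => (hd t).differentiableAt) (fun t => ?_)
    rw [(hd t).deriv]; linarith [h2 t]
  have hsm : StrictMono θ := by
    intro a b hab
    have := hm hab.le
    simp only at this
    linarith
  have htop : Filter.Tendsto θ Filter.atTop Filter.atTop := by
    refine Filter.tendsto_atTop_mono' _ (f₁ := fun t => θ 0 + t / 2) ?_ ?_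
    · filter_upwards [Filter.eventually_ge_atTop 0] with t ht
      have := hm ht
      simp only at this
      linarith
    · exact Filter.tendsto_atTop_add_const_left _ _ (Filter.tendsto_id.atTop_div_const (by norm_num))
  have hbot : Filter.Tendsto θ Filter.atBot Filter.atBot := by
    refine Filter.tendsto_atBot_mono' _
      (?_ : θ ≤ᶠ[Filter.atBot] fun t => θ 0 + t / 2) ?_
    · filter_upwards [Filter.eventually_le_atBot 0] with t ht
      have := hm ht
      simp only at this
      linarith
    · exact Filter.tendsto_atBot_add_const_left _ _ (Filter.tendsto_id.atBot_div_const (by norm_num))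
  have hsurj : Function.Surjective θ := hc.surjective htop hbot
  let e := StrictMono.orderIsoOfSurjective θ hsm hsurj
  have he : ∀ t, e t = θ t := fun t => rfl
  refine ⟨e.symm, fun s => by rw [← he]; exact e.apply_symm_apply s,
    fun t => by rw [← he]; exact e.symm_apply_apply t, hsm, fun s => ?_⟩
  refine HasDerivAt.of_local_left_inverse (f := θ) ?_ (h _) (by linarith [h2 (e.symm s)])
    (Filter.Eventually.of_forall fun y => by rw [← he]; exact e.apply_symm_apply y)
  exact e.symm.continuous.continuousAt

/-! ### The polynomial system in polar coordinates -/

/-- Along the ray of angle `φ`, `Σ c_{ki} x^k y^i` is `r` times this polynomial in the radius `r`;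
the radius is allowed to be complex. -/
noncomputable def coefPart {d : ℕ} (c : ↥(coeffIdx d) → ℝ) (z : ℂ) (φ : ℝ) : ℂ :=
  ∑ p : ↥(coeffIdx d), (c p : ℂ) * (Real.cos φ : ℂ) ^ (p : ℕ × ℕ).2 *
    (Real.sin φ : ℂ) ^ (p : ℕ × ℕ).1 * z ^ ((p : ℕ × ℕ).1 + (p : ℕ × ℕ).2 - 1)

/-- `coefPart` at a real radius. -/
noncomputable def coefPartR {d : ℕ} (c : ↥(coeffIdx d) → ℝ) (r : ℝ) (φ : ℝ) : ℝ :=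
  ∑ p : ↥(coeffIdx d), c p * Real.cos φ ^ (p : ℕ × ℕ).2 *
    Real.sin φ ^ (p : ℕ × ℕ).1 * r ^ ((p : ℕ × ℕ).1 + (p : ℕ × ℕ).2 - 1)

/-- `ṙ / r` in polar coordinates, at a complex radius. -/
noncomputable def radialPart (d : ℕ) (v : CoefSpace d) (z : ℂ) (φ : ℝ) : ℂ :=
  (Real.cos φ : ℂ) * coefPart (fun p => v (Sum.inl p)) z φ +
    (Real.sin φ : ℂ) * coefPart (fun p => v (Sum.inr p)) z φ

/-- `θ̇ - 1` in polar coordinates, at a complex radius. -/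
noncomputable def angularPart (d : ℕ) (v : CoefSpace d) (z : ℂ) (φ : ℝ) : ℂ :=
  (Real.cos φ : ℂ) * coefPart (fun p => v (Sum.inr p)) z φ -
    (Real.sin φ : ℂ) * coefPart (fun p => v (Sum.inl p)) z φ

/-- `radialPart` at a real radius. -/
noncomputable def radialPartR (d : ℕ) (v : CoefSpace d) (r : ℝ) (φ : ℝ) : ℝ :=
  Real.cos φ * coefPartR (fun p => v (Sum.inl p)) r φ +
    Real.sin φ * coefPartR (fun p => v (Sum.inr p)) r φ

/-- `angularPart` at a real radius. -/
noncomputable def angularPartR (d : ℕ) (v : CoefSpace d) (r : ℝ) (φ : ℝ) : ℝ :=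
  Real.cos φ * coefPartR (fun p => v (Sum.inr p)) r φ -
    Real.sin φ * coefPartR (fun p => v (Sum.inl p)) r φ

/-- The logarithmic radius as a function of the angle satisfies `(log r)' = polarKernel r θ`. -/
noncomputable def polarKernel (d : ℕ) (v : CoefSpace d) (z : ℂ) (φ : ℝ) : ℂ :=
  radialPart d v z φ / (1 + angularPart d v z φ)

theorem coefPart_ofReal {d : ℕ} (c : ↥(coeffIdx d) → ℝ) (r φ : ℝ) :
    coefPart c (r : ℂ) φ = (coefPartR c r φ : ℝ) := by
  simp only [coefPart, coefPartR]; push_cast; rfl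

theorem radialPart_ofReal (d : ℕ) (v : CoefSpace d) (r φ : ℝ) :
    radialPart d v (r : ℂ) φ = (radialPartR d v r φ : ℝ) := by
  simp only [radialPart, radialPartR, coefPart_ofReal]; push_cast; rfl

theorem angularPart_ofReal (d : ℕ) (v : CoefSpace d) (r φ : ℝ) :
    angularPart d v (r : ℂ) φ = (angularPartR d v r φ : ℝ) := by
  simp only [angularPart, angularPartR, coefPart_ofReal]; push_cast; rfl

theorem polarKernel_ofReal (d : ℕ) (v : CoefSpace d) (r φ : ℝ) :
    polarKernel d v (r : ℂ) φ = (radialPartR d v r φ / (1 + angularPartR d v r φ) : ℝ) := by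
  simp only [polarKernel, radialPart_ofReal, angularPart_ofReal]; push_cast; rfl

theorem mem_coeffIdx {d : ℕ} {p : ℕ × ℕ} : p ∈ coeffIdx d ↔ 1 ≤ p.1 + p.2 ∧ p.1 + p.2 ≤ d := by
  simp only [coeffIdx, Finset.mem_filter, Finset.mem_product, Finset.mem_range]; omega

theorem polar_factor {d : ℕ} (c : ↥(coeffIdx d) → ℝ) (r φ : ℝ) :
    ∑ p : ↥(coeffIdx d), c p * (r * Real.cos φ) ^ (p : ℕ × ℕ).2 * (r * Real.sin φ) ^ (p : ℕ × ℕ).1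
      = r * coefPartR c r φ := by
  rw [coefPartR, Finset.mul_sum]
  refine Finset.sum_congr rfl fun p _ => ?_
  obtain ⟨m, hm⟩ := Nat.exists_eq_add_of_le' (mem_coeffIdx.1 p.2).1
  have h1 : r ^ (p : ℕ × ℕ).2 * r ^ (p : ℕ × ℕ).1 = r * r ^ m := by
    rw [← pow_add, add_comm, hm, pow_succ, mul_comm]
  rw [hm, Nat.add_sub_cancel, mul_pow, mul_pow]
  linear_combination c p * Real.cos φ ^ (p : ℕ × ℕ).2 * Real.sin φ ^ (p : ℕ × ℕ).1 * h1

/-- Each homogeneous degree contributes at most `(cos² + sin²)^n = 1`. -/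
theorem sum_trig_le (d : ℕ) (φ : ℝ) :
    ∑ p ∈ coeffIdx d, (Real.cos φ ^ 2) ^ p.2 * (Real.sin φ ^ 2) ^ p.1 ≤ d := by
  have hsub : coeffIdx d ⊆ (Finset.Icc 1 d).biUnion fun n => Finset.HasAntidiagonal.antidiagonal n := by
    intro p hp
    rw [mem_coeffIdx] at hp
    simp only [Finset.mem_biUnion, Finset.mem_Icc, Finset.HasAntidiagonal.mem_antidiagonal]
    exact ⟨_, hp, rfl⟩
  refine (Finset.sum_le_sum_of_subset_of_nonneg hsub fun p _ _ => by positivity).trans ?_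
  rw [Finset.sum_biUnion]
  · have : ∀ n ∈ Finset.Icc 1 d, ∑ p ∈ Finset.HasAntidiagonal.antidiagonal n,
        (Real.cos φ ^ 2) ^ p.2 * (Real.sin φ ^ 2) ^ p.1 ≤ 1 := by
      intro n _
      have h1 : (Real.sin φ ^ 2 + Real.cos φ ^ 2) ^ n = 1 := by
        rw [Real.sin_sq_add_cos_sq, one_pow]
      rw [← h1, (Commute.all _ _).add_pow']
      refine Finset.sum_le_sum fun p hp => ?_
      have h2 : 1 ≤ n.choose p.1 := by
        rw [Finset.HasAntidiagonal.mem_antidiagonal] at hp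
        exact Nat.choose_pos (by omega)
      rw [nsmul_eq_mul, mul_comm]
      refine le_mul_of_one_le_left (by positivity) (by exact_mod_cast h2)
    refine (Finset.sum_le_sum this).trans ?_
    simp
  · intro a _ b _ hab
    simp only [Function.onFun, Finset.disjoint_left, Finset.HasAntidiagonal.mem_antidiagonal]
    intro p h1 h2
    exact hab (h1.symm.trans h2)

theorem norm_coefPart_sq_le {d : ℕ} (c : ↥(coeffIdx d) → ℝ) {z : ℂ} (hz : ‖z‖ ≤ 1) (φ : ℝ) :
    ‖coefPart c z φ‖ ^ 2 ≤ (∑ p, c p ^ 2) * d := by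
  have h1 : ‖coefPart c z φ‖ ≤ ∑ p : ↥(coeffIdx d), |c p| *
      (|Real.cos φ| ^ (p : ℕ × ℕ).2 * |Real.sin φ| ^ (p : ℕ × ℕ).1) := by
    refine (norm_sum_le _ _).trans (Finset.sum_le_sum fun p _ => ?_)
    simp only [norm_mul, norm_pow, Complex.norm_real, Real.norm_eq_abs, ← mul_assoc]
    exact mul_le_of_le_one_right (by positivity) (pow_le_one₀ (norm_nonneg _) hz)
  have h2 := Finset.sum_mul_sq_le_sq_mul_sq Finset.univ (fun p : ↥(coeffIdx d) => |c p|)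
    (fun p => |Real.cos φ| ^ (p : ℕ × ℕ).2 * |Real.sin φ| ^ (p : ℕ × ℕ).1)
  refine (pow_le_pow_left₀ (norm_nonneg _) h1 2).trans (h2.trans ?_)
  simp only [sq_abs]
  refine mul_le_mul_of_nonneg_left ?_ (Finset.sum_nonneg fun p _ => sq_nonneg _)
  refine le_trans (le_of_eq ?_) (sum_trig_le d φ)
  rw [← Finset.sum_coe_sort (coeffIdx d)]
  refine Finset.sum_congr rfl fun p _ => ?_
  rw [mul_pow, ← pow_mul, ← pow_mul, mul_comm _ 2, mul_comm _ 2, pow_mul, pow_mul, sq_abs, sq_abs]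

theorem norm_sq_coef {d : ℕ} (v : CoefSpace d) :
    ‖v‖ ^ 2 = ∑ p, v (Sum.inl p) ^ 2 + ∑ p, v (Sum.inr p) ^ 2 := by
  rw [EuclideanSpace.norm_sq_eq, Fintype.sum_sum_type]
  simp

theorem norm_trig_comb_le (φ : ℝ) (a b : ℂ) :
    ‖(Real.cos φ : ℂ) * a + (Real.sin φ : ℂ) * b‖ ^ 2 ≤ ‖a‖ ^ 2 + ‖b‖ ^ 2 := by
  have h1 : ‖(Real.cos φ : ℂ) * a + (Real.sin φ : ℂ) * b‖ ≤
      |Real.cos φ| * ‖a‖ + |Real.sin φ| * ‖b‖ := by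
    refine (norm_add_le _ _).trans ?_
    simp [-Complex.ofReal_cos, -Complex.ofReal_sin]
  have h2 : |Real.cos φ| ^ 2 + |Real.sin φ| ^ 2 = 1 := by
    rw [sq_abs, sq_abs]; exact Real.cos_sq_add_sin_sq φ
  refine (pow_le_pow_left₀ (norm_nonneg _) h1 2).trans ?_
  nlinarith [sq_nonneg (|Real.cos φ| * ‖b‖ - |Real.sin φ| * ‖a‖)]

/-- By Cauchy-Schwarz the perturbation is small at every complex radius in the unit disc. -/
theorem norm_radialPart_le {d : ℕ} (v : CoefSpace d) {z : ℂ} (hz : ‖z‖ ≤ 1) (φ : ℝ) :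
    ‖radialPart d v z φ‖ ≤ ‖v‖ * Real.sqrt d := by
  refine le_of_sq_le_sq ?_ (by positivity)
  rw [mul_pow, Real.sq_sqrt (Nat.cast_nonneg d), norm_sq_coef, add_mul]
  exact (norm_trig_comb_le φ _ _).trans
    (add_le_add (norm_coefPart_sq_le _ hz φ) (norm_coefPart_sq_le _ hz φ))

theorem norm_angularPart_le {d : ℕ} (v : CoefSpace d) {z : ℂ} (hz : ‖z‖ ≤ 1) (φ : ℝ) :
    ‖angularPart d v z φ‖ ≤ ‖v‖ * Real.sqrt d := by
  refine le_of_sq_le_sq ?_ (by positivity)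
  rw [mul_pow, Real.sq_sqrt (Nat.cast_nonneg d), norm_sq_coef, add_mul, add_comm]
  have := norm_trig_comb_le φ (coefPart (fun p => v (Sum.inr p)) z φ)
    (-coefPart (fun p => v (Sum.inl p)) z φ)
  rw [mul_neg, ← sub_eq_add_neg, norm_neg] at this
  exact this.trans (add_le_add (norm_coefPart_sq_le _ hz φ) (norm_coefPart_sq_le _ hz φ))

theorem continuous_coefPart {d : ℕ} (c : ↥(coeffIdx d) → ℝ) :
    Continuous (Function.uncurry (coefPart c)) := by
  unfold Function.uncurry coefPart; fun_prop

theorem continuous_radialPart {d : ℕ} (v : CoefSpace d) :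
    Continuous (Function.uncurry (radialPart d v)) := by
  unfold Function.uncurry radialPart coefPart; fun_prop

theorem continuous_angularPart {d : ℕ} (v : CoefSpace d) :
    Continuous (Function.uncurry (angularPart d v)) := by
  unfold Function.uncurry angularPart coefPart; fun_prop

theorem eps_small {ε : ℝ} (hv : ε ≤ 1 / (40 * π)) : ε ≤ 1 / 120 := by
  refine hv.trans ?_
  apply one_div_le_one_div_of_le (by norm_num)
  linarith [Real.pi_gt_three]

theorem one_add_angularPart_ne {d : ℕ} {v : CoefSpace d} (hv : ‖v‖ * Real.sqrt d ≤ 1 / (40 * π))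
    {z : ℂ} (hz : ‖z‖ ≤ 1) (φ : ℝ) : 5 / 6 ≤ ‖1 + angularPart d v z φ‖ := by
  have h1 := norm_angularPart_le v hz φ
  have h2 := norm_sub_le (1 + angularPart d v z φ) (angularPart d v z φ)
  rw [add_sub_cancel_right, norm_one] at h2
  have := eps_small hv
  linarith

theorem polarKernel_isKernel {d : ℕ} {v : CoefSpace d}
    (hv : ‖v‖ * Real.sqrt d ≤ 1 / (40 * π)) :
    PolarKernel (polarKernel d v) (6 / 5 * (‖v‖ * Real.sqrt d)) where
  diff φ := by
    refine DifferentiableOn.div ?_ ?_ ?_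
    · unfold radialPart coefPart; fun_prop
    · unfold angularPart coefPart; fun_prop
    · intro z hz h
      have := one_add_angularPart_ne hv (mem_ball_zero_iff.1 hz).le φ
      rw [h, norm_zero] at this
      norm_num at this
  bound z hz φ := by
    have h := one_add_angularPart_ne hv (mem_ball_zero_iff.1 hz).le φ
    have h2 := norm_radialPart_le v (mem_ball_zero_iff.1 hz).le φ
    rw [polarKernel, norm_div, div_le_iff₀ (by linarith)]
    have : 0 ≤ ‖v‖ * Real.sqrt d := by positivity
    nlinarith
  cont := by
    refine ContinuousOn.div (f := Function.uncurry (radialPart d v))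
      (g := fun x => 1 + Function.uncurry (angularPart d v) x) (continuous_radialPart v).continuousOn
      (continuous_const.add (continuous_angularPart v)).continuousOn ?_
    rintro ⟨z, φ⟩ ⟨hz, -⟩ h
    have := one_add_angularPart_ne hv (mem_ball_zero_iff.1 hz).le φ
    simp only [Function.uncurry] at h
    rw [h, norm_zero] at this
    norm_num at this
  small := by
    have h1 := mul_le_mul_of_nonneg_left hv (show 0 ≤ 2 * π * (6 / 5) by positivity)
    have h2 : 2 * π * (6 / 5) * (1 / (40 * π)) = 3 / 50 := by
      field_simp; norm_num
    linarith

theorem polarKernel_periodic (d : ℕ) (v : CoefSpace d) (z : ℂ) :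
    Function.Periodic (polarKernel d v z) (2 * π) := by
  intro φ
  simp only [polarKernel, radialPart, angularPart, coefPart, Real.cos_add_two_pi,
    Real.sin_add_two_pi]

theorem mem01 {d : ℕ} (hd : 2 ≤ d) : ((0, 1) : ℕ × ℕ) ∈ coeffIdx d := by
  rw [mem_coeffIdx]; simp; omega

theorem mem10 {d : ℕ} (hd : 2 ≤ d) : ((1, 0) : ℕ × ℕ) ∈ coeffIdx d := by
  rw [mem_coeffIdx]; simp; omega

/-- The trace `a_{10} + b_{01}` of the linear part of the perturbation. -/
noncomputable def traceCoef {d : ℕ} (hd : 2 ≤ d) (v : CoefSpace d) : ℝ :=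
  v (Sum.inl ⟨(0, 1), mem01 hd⟩) + v (Sum.inr ⟨(1, 0), mem10 hd⟩)

theorem coefPartR_zero {d : ℕ} (hd : 2 ≤ d) (c : ↥(coeffIdx d) → ℝ) (φ : ℝ) :
    coefPartR c 0 φ = c ⟨(0, 1), mem01 hd⟩ * Real.cos φ + c ⟨(1, 0), mem10 hd⟩ * Real.sin φ := by
  rw [coefPartR, ← Finset.sum_subset (Finset.subset_univ
    {(⟨(0, 1), mem01 hd⟩ : ↥(coeffIdx d)), ⟨(1, 0), mem10 hd⟩})]
  · rw [Finset.sum_pair (by simp)]; simp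
  · rintro ⟨⟨i, k⟩, hp⟩ - hn
    rw [mem_coeffIdx] at hp
    simp only [Finset.mem_insert, Finset.mem_singleton, Subtype.mk.injEq, Prod.mk.injEq] at hn
    simp only at hp ⊢
    rw [zero_pow (by omega), mul_zero]

/-- At the origin, since `radialPart = trace/2 - (angularPart)'/2` on the linear part, the integral of
`polarKernel` over one turn is `(trace/2) ∫ 1/(1+angularPart)`. -/
theorem norm_integral_polarKernel_zero {d : ℕ} (hd : 2 ≤ d) {v : CoefSpace d}
    (hv : ‖v‖ * Real.sqrt d ≤ 1 / (40 * π)) :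
    π / 2 * |traceCoef hd v| ≤ ‖∫ φ in (0 : ℝ)..(2 * π), polarKernel d v 0 φ‖ := by
  set T := traceCoef hd v with hT
  set Q := fun φ => angularPartR d v 0 φ with hQ
  have hQb : ∀ φ, |Q φ| ≤ 1 / 2 := by
    intro φ
    have h1 := norm_angularPart_le v (z := ((0 : ℝ) : ℂ)) (by simp) φ
    rw [angularPart_ofReal, Complex.norm_real, Real.norm_eq_abs] at h1
    have := eps_small hv
    show |angularPartR d v 0 φ| ≤ 1 / 2
    linarith
  have hQd : ∀ φ, HasDerivAt Q (T - 2 * radialPartR d v 0 φ) φ := by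
    intro φ
    have hs := Real.hasDerivAt_sin φ
    have hc := Real.hasDerivAt_cos φ
    simp only [hQ, angularPartR, radialPartR, coefPartR_zero hd, hT, traceCoef]
    set a := v (Sum.inl ⟨(0, 1), mem01 hd⟩)
    set b := v (Sum.inl ⟨(1, 0), mem10 hd⟩)
    set a' := v (Sum.inr ⟨(0, 1), mem01 hd⟩)
    set b' := v (Sum.inr ⟨(1, 0), mem10 hd⟩)
    have h := (hc.mul ((hc.const_mul a').add (hs.const_mul b'))).sub
      (hs.mul ((hc.const_mul a).add (hs.const_mul b)))
    refine h.congr_deriv ?_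
    simp only [Pi.add_apply]
    linear_combination (a + b') * Real.sin_sq_add_cos_sq φ
  have hQc : Continuous Q := continuous_iff_continuousAt.2 fun φ => (hQd φ).continuousAt
  have hpos : ∀ φ, 0 < 1 + Q φ := fun φ => by linarith [(abs_le.1 (hQb φ)).1]
  have hRc : Continuous fun φ => radialPartR d v 0 φ := by
    simp only [radialPartR, coefPartR_zero hd]; fun_prop
  have hlog : ∫ φ in (0 : ℝ)..(2 * π), (T - 2 * radialPartR d v 0 φ) / (1 + Q φ) = 0 := by
    rw [intervalIntegral.integral_eq_sub_of_hasDerivAt (f := fun φ => Real.log (1 + Q φ))]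
    · have : Q (2 * π) = Q 0 := by
        simp only [hQ, angularPartR, coefPartR_zero hd]; simp
      rw [this, sub_self]
    · intro φ _
      exact ((hQd φ).const_add 1).log (hpos φ).ne'
    · refine Continuous.intervalIntegrable ?_ _ _
      exact (continuous_const.sub (continuous_const.mul hRc)).div (continuous_const.add hQc)
        fun φ => (hpos φ).ne'
  have hinvc : Continuous fun φ => (1 + Q φ)⁻¹ :=
    (continuous_const.add hQc).inv₀ fun φ => (hpos φ).ne'
  have hmain : ∫ φ in (0 : ℝ)..(2 * π), radialPartR d v 0 φ / (1 + Q φ)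
      = T / 2 * ∫ φ in (0 : ℝ)..(2 * π), (1 + Q φ)⁻¹ := by
    have h1 : ∀ φ, radialPartR d v 0 φ / (1 + Q φ)
        = T / 2 * (1 + Q φ)⁻¹ - 1 / 2 * ((T - 2 * radialPartR d v 0 φ) / (1 + Q φ)) := by
      intro φ; have := (hpos φ).ne'; field_simp; ring
    simp_rw [h1]
    rw [intervalIntegral.integral_sub, intervalIntegral.integral_const_mul,
      intervalIntegral.integral_const_mul, hlog, mul_zero, sub_zero]
    · exact (continuous_const.mul hinvc).intervalIntegrable _ _
    · refine Continuous.intervalIntegrable ?_ _ _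
      exact continuous_const.mul ((continuous_const.sub (continuous_const.mul hRc)).div
        (continuous_const.add hQc) fun φ => (hpos φ).ne')
  have hge : π ≤ ∫ φ in (0 : ℝ)..(2 * π), (1 + Q φ)⁻¹ := by
    have h1 : ∫ _ in (0 : ℝ)..(2 * π), (1 / 2 : ℝ) = π := by
      rw [intervalIntegral.integral_const, smul_eq_mul]; ring
    refine h1.symm.trans_le ?_
    refine intervalIntegral.integral_mono_on (by positivity)
      (continuous_const.intervalIntegrable _ _) (hinvc.intervalIntegrable _ _) fun φ _ => ?_
    rw [one_div]
    exact inv_anti₀ (hpos φ) (by linarith [(abs_le.1 (hQb φ)).2])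
  have hcast : ∫ φ in (0 : ℝ)..(2 * π), polarKernel d v 0 φ
      = ((∫ φ in (0 : ℝ)..(2 * π), radialPartR d v 0 φ / (1 + Q φ) : ℝ) : ℂ) := by
    rw [← intervalIntegral.integral_ofReal]
    refine intervalIntegral.integral_congr fun φ _ => ?_
    have := polarKernel_ofReal d v 0 φ
    rw [Complex.ofReal_zero] at this
    exact this
  rw [hcast, Complex.norm_real, Real.norm_eq_abs, hmain, abs_mul, abs_div, abs_of_pos
    (show (0 : ℝ) < 2 by norm_num), abs_of_nonneg (Real.pi_pos.le.trans hge)]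
  have := mul_le_mul_of_nonneg_left hge (show 0 ≤ |T| / 2 by positivity)
  linarith

/-! ### Periodic orbits and zeros of the displacement -/

/-- The vector field in polar coordinates: `ż / z = radialPart + i (1 + angularPart)`. -/
theorem vecField_polar (d : ℕ) (v : CoefSpace d) (r φ : ℝ) :
    vecField d v (r * Real.cos φ, r * Real.sin φ) =
      (r * (Real.cos φ * radialPartR d v r φ - Real.sin φ * (1 + angularPartR d v r φ)),
        r * (Real.sin φ * radialPartR d v r φ + Real.cos φ * (1 + angularPartR d v r φ))) := by
  have h := Real.sin_sq_add_cos_sq φ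
  simp only [vecField, Fpoly, Gpoly, polar_factor (fun p => v (Sum.inl p)),
    polar_factor (fun p => v (Sum.inr p)), radialPartR, angularPartR]
  ext
  · simp only; linear_combination (-r * coefPartR (fun p => v (Sum.inl p)) r φ) * h
  · simp only; linear_combination (-r * coefPartR (fun p => v (Sum.inr p)) r φ) * h

/-- The complex number with given Cartesian coordinates. -/
noncomputable def toC (q : ℝ × ℝ) : ℂ := ⟨q.1, q.2⟩

/-- `vecField_polar` in complex notation. -/
theorem toC_vecField_polar (d : ℕ) (v : CoefSpace d) (q : ℝ × ℝ) (r φ : ℝ)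
    (hq : toC q = r * Complex.exp (φ * Complex.I)) :
    toC (vecField d v q) =
      toC q * ((radialPartR d v r φ : ℝ) + (1 + angularPartR d v r φ : ℝ) * Complex.I) := by
  have hq' : q = (r * Real.cos φ, r * Real.sin φ) := by
    rw [Complex.exp_mul_I] at hq
    have h1 := congrArg Complex.re hq
    have h2 := congrArg Complex.im hq
    simp [toC, -Complex.ofReal_cos, -Complex.ofReal_sin] at h1 h2
    exact Prod.ext h1 h2
  rw [hq', vecField_polar]
  apply Complex.ext <;> simp [toC] <;> ring

theorem continuous_vecField (d : ℕ) (v : CoefSpace d) : Continuous (vecField d v) := by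
  unfold vecField Fpoly Gpoly; fun_prop

theorem HasDerivAt.toC {s : ℝ → ℝ × ℝ} {s' : ℝ × ℝ} {t : ℝ} (h : HasDerivAt s s' t) :
    HasDerivAt (fun t => _root_.toC (s t)) (_root_.toC s') t := by
  have h1 : HasDerivAt (fun t => (s t).1) s'.1 t :=
    (ContinuousLinearMap.fst ℝ ℝ ℝ).hasFDerivAt.comp_hasDerivAt t h
  have h2 : HasDerivAt (fun t => (s t).2) s'.2 t :=
    (ContinuousLinearMap.snd ℝ ℝ ℝ).hasFDerivAt.comp_hasDerivAt t h
  have h3 := h1.ofReal_comp.add (h2.ofReal_comp.mul_const Complex.I)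
  have he : ∀ q : ℝ × ℝ, _root_.toC q = q.1 + q.2 * Complex.I := fun q => by
    rw [_root_.toC, Complex.mk_eq_add_mul_I]
  simp_rw [he]
  exact h3

/-- A nowhere vanishing curve in `ℂ` has a differentiable logarithm. -/
theorem exists_log_lift {z z' : ℝ → ℂ} (hz : ∀ t, HasDerivAt z (z' t) t) (hc : Continuous z')
    (hne : ∀ t, z t ≠ 0) :
    ∃ L : ℝ → ℂ, (∀ t, HasDerivAt L (z' t / z t) t) ∧ ∀ t, z t = Complex.exp (L t) := by
  have hzc : Continuous z := continuous_iff_continuousAt.2 fun t => (hz t).continuousAt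
  have hq : Continuous fun t => z' t / z t := hc.div hzc hne
  set L : ℝ → ℂ := fun t => Complex.log (z 0) + ∫ s in (0 : ℝ)..t, z' s / z s with hL
  have hd : ∀ t, HasDerivAt L (z' t / z t) t := fun t =>
    (intervalIntegral.integral_hasDerivAt_right (hq.intervalIntegrable _ _)
      (hq.stronglyMeasurableAtFilter _ _) hq.continuousAt).const_add _
  refine ⟨L, hd, fun t => ?_⟩
  have hg : ∀ t, HasDerivAt (fun t => z t * Complex.exp (-L t)) 0 t := by
    intro t
    refine ((hz t).mul (hd t).neg.cexp).congr_deriv ?_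
    have := hne t
    field_simp
    ring
  have h1 := is_const_of_deriv_eq_zero (fun t => (hg t).differentiableAt)
    (fun t => (hg t).deriv) t 0
  have h2 : L 0 = Complex.log (z 0) := by simp [hL]
  simp only [h2, Complex.exp_neg, Complex.exp_log (hne 0)] at h1
  rw [mul_inv_cancel₀ (hne 0)] at h1
  have := Complex.exp_ne_zero (L t)
  field_simp at h1
  exact h1

/-- A curve with `‖ż‖ ≤ 2‖z‖` that vanishes somewhere vanishes at all later times. -/
theorem eq_zero_of_eq_zero {z z' : ℝ → ℂ} (hz : ∀ t, HasDerivAt z (z' t) t)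
    (hb : ∀ t, ‖z' t‖ ≤ 2 * ‖z t‖) {a b : ℝ} (hab : a ≤ b) (ha : z a = 0) : z b = 0 := by
  have := norm_le_gronwallBound_of_norm_deriv_right_le (f := z) (f' := z') (δ := 0) (K := 2)
    (ε := 0) (a := a) (b := b) (fun t _ => (hz t).continuousAt.continuousWithinAt)
    (fun t _ => (hz t).hasDerivWithinAt) (by simp [ha]) (fun t _ => by simpa using hb t) b
    (Set.right_mem_Icc.2 hab)
  rw [gronwallBound_ε0_δ0] at this
  exact norm_le_zero_iff.1 this

/-- The image over one turn of the solution curve starting at radius `ρ` on the positive `x`-axis. -/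
noncomputable def orbitCurve (d : ℕ) (v : CoefSpace d) (ρ : ℝ) : Set (ℝ × ℝ) :=
  (fun θ : ℝ =>
    (ρ * Real.exp (PolarKernel.sol (polarKernel d v) ρ θ).re * Real.cos θ,
      ρ * Real.exp (PolarKernel.sol (polarKernel d v) ρ θ).re * Real.sin θ)) '' Set.Icc 0 (2 * π)

/-- Periodic orbits in `D_{1/2}` come from zeros in `(0, 1/2]` of `ρ ↦ sol K ρ (2π)`. -/
theorem periodicOrbit_eq_orbitCurve {d : ℕ} {v : CoefSpace d}
    (hv : ‖v‖ * Real.sqrt d ≤ 1 / (40 * π)) {Γ : Set (ℝ × ℝ)}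
    (hΓ : IsPeriodicOrbit (vecField d v) Γ) (hD : Γ ⊆ {q : ℝ × ℝ | q.1 ^ 2 + q.2 ^ 2 ≤ 1 / 4}) :
    ∃ ρ : ℝ, (0 < ρ ∧ ρ ≤ 1 / 2 ∧ PolarKernel.sol (polarKernel d v) ρ (2 * π) = 0) ∧
      Γ = orbitCurve d v ρ := by
  obtain ⟨sol, T, hT, hsol, hper, ⟨t₁, t₂, hne⟩, rfl⟩ := hΓ
  set z : ℝ → ℂ := fun t => toC (sol t) with hzdef
  have hz : ∀ t, HasDerivAt z (toC (vecField d v (sol t))) t := fun t => (hsol t).toC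
  have hzb : ∀ t, ‖z t‖ ≤ 1 / 2 := by
    intro t
    have h : (sol t).1 ^ 2 + (sol t).2 ^ 2 ≤ 1 / 4 := hD ⟨t, rfl⟩
    refine le_of_sq_le_sq ?_ (by norm_num)
    rw [Complex.sq_norm, Complex.normSq_apply]
    simp only [hzdef, toC]
    linarith
  have hε := eps_small hv
  have hPQ : ∀ r φ : ℝ, |r| ≤ 1 / 2 →
      |radialPartR d v r φ| ≤ 1 / 120 ∧ |angularPartR d v r φ| ≤ 1 / 120 := by
    intro r φ hr
    have hr' : ‖(r : ℂ)‖ ≤ 1 := by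
      rw [Complex.norm_real, Real.norm_eq_abs]; linarith
    have h1 := norm_radialPart_le v hr' φ
    have h2 := norm_angularPart_le v hr' φ
    rw [radialPart_ofReal, Complex.norm_real, Real.norm_eq_abs] at h1
    rw [angularPart_ofReal, Complex.norm_real, Real.norm_eq_abs] at h2
    exact ⟨h1.trans hε, h2.trans hε⟩
  have hper' : ∀ (n : ℕ) t, sol (t + n * T) = sol t := by
    intro n
    induction n with
    | zero => intro t; simp
    | succ n ih =>
      intro t
      have := hper (t + n * T)
      rw [ih] at this
      rw [← this]; congr 1; push_cast; ring
  have hlate : ∀ a t : ℝ, ∃ n : ℕ, a ≤ t + n * T := by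
    intro a t
    obtain ⟨n, hn⟩ := exists_nat_ge ((a - t) / T)
    refine ⟨n, ?_⟩
    rw [div_le_iff₀ hT] at hn
    linarith
  -- The origin is an equilibrium, so the orbit avoids it.
  have hz0 : ∀ t, z t ≠ 0 := by
    intro a ha
    have hgr : ∀ t, ‖toC (vecField d v (sol t))‖ ≤ 2 * ‖z t‖ := by
      intro t
      have h1 := toC_vecField_polar d v (sol t) ‖z t‖ (z t).arg
        (Complex.norm_mul_exp_arg_mul_I (z t)).symm
      obtain ⟨h2, h3⟩ := hPQ ‖z t‖ (z t).arg (by rw [abs_norm]; exact hzb t)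
      rw [h1, norm_mul, mul_comm]
      refine mul_le_mul_of_nonneg_right ((norm_add_le _ _).trans ?_) (norm_nonneg _)
      rw [norm_mul, Complex.norm_I, mul_one, Complex.norm_real, Complex.norm_real,
        Real.norm_eq_abs, Real.norm_eq_abs]
      have := abs_add_le 1 (angularPartR d v ‖z t‖ (z t).arg)
      rw [abs_one] at this
      linarith
    have hall : ∀ t, sol t = (0, 0) := by
      intro t
      obtain ⟨n, hn⟩ := hlate a t
      have h := eq_zero_of_eq_zero hz hgr hn ha
      simp only [hzdef, hper'] at h
      exact Prod.ext (congrArg Complex.re h) (congrArg Complex.im h)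
    exact hne (by rw [hall, hall])
  obtain ⟨L, hL, hexp⟩ := exists_log_lift hz (by
    have h1 : Continuous sol := continuous_iff_continuousAt.2 fun t => (hsol t).continuousAt
    have h2 : Continuous toC := by
      have : toC = fun q : ℝ × ℝ => (q.1 : ℂ) + q.2 * Complex.I := by
        funext q; rw [toC, Complex.mk_eq_add_mul_I]
      rw [this]; fun_prop
    exact h2.comp ((continuous_vecField d v).comp h1)) hz0
  set u : ℝ → ℝ := fun t => (L t).re with hu
  set θ : ℝ → ℝ := fun t => (L t).im with hθ
  have hzpol : ∀ t, z t = (Real.exp (u t) : ℝ) * Complex.exp (θ t * Complex.I) := by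
    intro t
    rw [hexp, Complex.ofReal_exp, ← Complex.exp_add, Complex.re_add_im]
  have hsolpol : ∀ t, sol t = (Real.exp (u t) * Real.cos (θ t), Real.exp (u t) * Real.sin (θ t)) := by
    intro t
    have h := hzpol t
    rw [Complex.exp_mul_I] at h
    have h1 := congrArg Complex.re h
    have h2 := congrArg Complex.im h
    simp [hzdef, toC, -Complex.ofReal_cos,
      -Complex.ofReal_sin, -Complex.ofReal_exp] at h1 h2
    exact Prod.ext h1 h2
  have hub : ∀ t, Real.exp (u t) ≤ 1 / 2 := by
    intro t
    have h := hzb t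
    rwa [hexp, Complex.norm_exp] at h
  have hLd : ∀ t, HasDerivAt L ((radialPartR d v (Real.exp (u t)) (θ t) : ℝ) +
      (1 + angularPartR d v (Real.exp (u t)) (θ t) : ℝ) * Complex.I) t := by
    intro t
    refine (hL t).congr_deriv ?_
    rw [toC_vecField_polar d v (sol t) _ _ (hzpol t)]
    exact mul_div_cancel_left₀ _ (hz0 t)
  have hud : ∀ t, HasDerivAt u (radialPartR d v (Real.exp (u t)) (θ t)) t := by
    intro t
    have := Complex.reCLM.hasFDerivAt.comp_hasDerivAt t (hLd t)
    exact this.congr_deriv (by simp)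
  have hθd : ∀ t, HasDerivAt θ (1 + angularPartR d v (Real.exp (u t)) (θ t)) t := by
    intro t
    have := Complex.imCLM.hasFDerivAt.comp_hasDerivAt t (hLd t)
    exact this.congr_deriv (by simp)
  have hQ : ∀ t, 1 / 2 ≤ 1 + angularPartR d v (Real.exp (u t)) (θ t) := by
    intro t
    have := (abs_le.1 (hPQ (Real.exp (u t)) (θ t)
      (by rw [abs_of_pos (Real.exp_pos _)]; exact hub t)).2).1
    linarith
  obtain ⟨τ, hτ1, hτ2, hmono, hτd⟩ := exists_inverse hθd hQ
  set l : ℝ → ℝ := fun s => u (τ s) with hl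
  have hld : ∀ s, HasDerivAt (fun s => (l s : ℂ)) (polarKernel d v (Real.exp (l s) : ℝ) s) s := by
    intro s
    have h := ((hud (τ s)).comp s (hτd s)).ofReal_comp
    rw [hτ1, ← div_eq_mul_inv] at h
    rw [polarKernel_ofReal]
    exact h
  -- One period of the orbit is an integer number of turns.
  obtain ⟨k, hk, hlk⟩ : ∃ k : ℕ, 0 < k ∧ l (k * (2 * π)) = l 0 := by
    have h1 : Complex.exp (L (τ 0 + T)) = Complex.exp (L (τ 0)) := by
      rw [← hexp, ← hexp]; simp only [hzdef, hper]
    obtain ⟨n, hn⟩ := Complex.exp_eq_exp_iff_exists_int.1 h1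
    have hre : u (τ 0 + T) = u (τ 0) := by
      have := congrArg Complex.re hn
      simpa [hu] using this
    have him : θ (τ 0 + T) = n * (2 * π) := by
      have := congrArg Complex.im hn
      have h0 : (L (τ 0)).im = 0 := hτ1 0
      simpa [hθ, h0] using this
    have hpos : 0 < θ (τ 0 + T) := by
      have := hmono (show τ 0 < τ 0 + T by linarith)
      rwa [hτ1] at this
    rw [him] at hpos
    have hn0 : 0 < n := by
      have := pos_of_mul_pos_left hpos (by positivity)
      exact_mod_cast this
    obtain ⟨k, rfl⟩ := Int.eq_ofNat_of_zero_le hn0.le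
    refine ⟨k, by exact_mod_cast hn0, ?_⟩
    have : τ (k * (2 * π)) = τ 0 + T := by
      rw [← hτ2 (τ 0 + T), him]; simp
    simp only [hl, this, hre]
  obtain ⟨hclosed, hform⟩ := (polarKernel_isKernel hv).sol_closed (polarKernel_periodic d v) hld
    (fun s => hub _) hk hlk
  have hform' : ∀ j : ℕ, ∀ φ, 0 ≤ φ → φ ≤ 2 * π → Real.exp (l (φ + j * (2 * π))) =
      Real.exp (l 0) * Real.exp (PolarKernel.sol (polarKernel d v) (Real.exp (l 0) : ℝ) φ).re := by
    intro j φ h0 h1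
    have := congrArg Complex.re (hform j φ h0 h1)
    rw [Complex.ofReal_re, Complex.add_re, Complex.ofReal_re] at this
    rw [this, Real.exp_add]
  refine ⟨Real.exp (l 0), ⟨Real.exp_pos _, hub _, hclosed⟩, ?_⟩
  ext q
  constructor
  · rintro ⟨t, rfl⟩
    obtain ⟨n, hn⟩ := hlate (τ 0) t
    set s := θ (t + n * T) with hs
    have hs0 : 0 ≤ s := by
      have := hmono.monotone hn
      rwa [hτ1] at this
    set j := ⌊s / (2 * π)⌋₊ with hj
    have hp : 0 < 2 * π := by positivity
    have hj1 : j * (2 * π) ≤ s := by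
      rw [← le_div_iff₀ hp]; exact Nat.floor_le (by positivity)
    have hj2 : s ≤ (j + 1) * (2 * π) := by
      rw [← div_le_iff₀ hp]; exact (Nat.lt_floor_add_one _).le
    refine ⟨s - j * (2 * π), ⟨by linarith, by linarith⟩, ?_⟩
    have hf := hform' j (s - j * (2 * π)) (by linarith) (by linarith)
    rw [sub_add_cancel] at hf
    have hls : l s = u (t + n * T) := by simp only [hl, hs, hτ2]
    simp only
    rw [← hf, Real.cos_sub_nat_mul_two_pi, Real.sin_sub_nat_mul_two_pi, hls, hs, ← hsolpol, hper']
  · rintro ⟨φ, ⟨h0, h1⟩, rfl⟩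
    refine ⟨τ φ, ?_⟩
    have hf := hform' 0 φ h0 h1
    rw [Nat.cast_zero, zero_mul, add_zero] at hf
    simp only
    rw [← hf, hsolpol, hτ1]

/-- Jensen's bound for the number of limit cycles in terms of the trace of the linear part. -/
theorem limitCycleCount_le {d : ℕ} (hd : 2 ≤ d) {v : CoefSpace d} {N : ℝ} (hN : ‖v‖ ≤ N)
    (hNd : N * Real.sqrt d ≤ 1 / (40 * π)) (ht : traceCoef hd v ≠ 0) :
    limitCycleCount d v ≤ ENNReal.ofReal
      (Real.log (5 * N * Real.sqrt d / |traceCoef hd v|) / Real.log (3 / 2)) := by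
  have hv : ‖v‖ * Real.sqrt d ≤ 1 / (40 * π) :=
    (mul_le_mul_of_nonneg_right hN (Real.sqrt_nonneg _)).trans hNd
  have hK := polarKernel_isKernel hv
  have hv0 : 0 < ‖v‖ := by
    rw [norm_pos_iff]
    rintro rfl
    exact ht (by simp [traceCoef])
  have hsd : 0 < Real.sqrt d := Real.sqrt_pos.2 (by exact_mod_cast (by omega : 0 < d))
  set h : ℂ → ℂ := fun ρ => PolarKernel.sol (polarKernel d v) ρ (2 * π) with hh
  set M := 2 * π * (6 / 5 * (‖v‖ * Real.sqrt d)) with hM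
  have hMpos : 0 < M := by positivity
  have htp : 0 < |traceCoef hd v| := abs_pos.2 ht
  have h0ge : π / 2 * |traceCoef hd v| ≤ ‖h 0‖ := by
    simp only [hh]
    rw [hK.sol_zero]
    exact norm_integral_polarKernel_zero hd hv
  have h0pos : 0 < ‖h 0‖ := lt_of_lt_of_le (by positivity) h0ge
  set Z : Set ℝ := {ρ | 0 < ρ ∧ ρ ≤ 1 / 2 ∧ h ρ = 0} with hZ
  obtain ⟨hfin, hcard⟩ := zeros_card_le (hK.sol_diff (2 * π)) hMpos
    (fun z hz => hK.sol_bound hz _) (norm_pos_iff.1 h0pos) (Z := Z) fun x hx => hx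
  have hsub : {Γ : Set (ℝ × ℝ) | IsLimitCycle (vecField d v) Γ ∧
      Γ ⊆ {q : ℝ × ℝ | q.1 ^ 2 + q.2 ^ 2 ≤ 1 / 4}} ⊆ orbitCurve d v '' Z := by
    rintro Γ ⟨⟨hΓ, -⟩, hD⟩
    obtain ⟨ρ, hρ, rfl⟩ := periodicOrbit_eq_orbitCurve hv hΓ hD
    exact ⟨ρ, hρ, rfl⟩
  have henc := (Set.encard_le_encard hsub).trans (Set.encard_image_le _ _)
  rw [← hfin.cast_ncard_eq] at henc
  have hle : limitCycleCount d v ≤ (Z.ncard : ℝ≥0∞) := by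
    have := ENat.toENNReal_le.2 henc
    simpa [limitCycleCount] using this
  refine hle.trans ?_
  rw [← ENNReal.ofReal_natCast]
  refine ENNReal.ofReal_le_ofReal (hcard.trans ?_)
  refine div_le_div_of_nonneg_right ?_ (Real.log_nonneg (by norm_num))
  refine Real.log_le_log (by positivity) ?_
  rw [div_le_div_iff₀ h0pos htp, hM]
  have h1 : ‖v‖ * Real.sqrt d ≤ N * Real.sqrt d := mul_le_mul_of_nonneg_right hN hsd.le
  calc 2 * π * (6 / 5 * (‖v‖ * √d)) * |traceCoef hd v|
      = 24 / 5 * (‖v‖ * √d) * (π / 2 * |traceCoef hd v|) := by ring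
    _ ≤ 5 * (N * √d) * ‖h 0‖ := by
        refine mul_le_mul ?_ h0ge (by positivity) (by nlinarith [mul_pos hv0 hsd])
        nlinarith [mul_pos hv0 hsd]
    _ = _ := by ring

/-! ### Averaging over the ball of coefficients -/

/-- A ball of dimension `s` meets the slab `|ℓ| ≤ t` in a proportion `O(s t / N)`: disjoint
translates of the intersection fit in the ball of radius `N (1 + 1/s)`, whose volume is at most
`e` times as large. -/
theorem measure_slab_le {E : Type*} [NormedAddCommGroup E] [NormedSpace ℝ E] [MeasurableSpace E]
    [BorelSpace E] [FiniteDimensional ℝ E] (μ : Measure E) [μ.IsAddHaarMeasure]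
    (ℓ : E →L[ℝ] ℝ) {e : E} (he : ‖e‖ ≤ 1) (hℓ : ℓ e = 1) {s : ℕ} (hs : 0 < s)
    (hdim : Module.finrank ℝ E = s) {N t : ℝ} (hN : 0 < N) (ht : 0 < t) :
    μ ({v | |ℓ v| ≤ t} ∩ ball 0 N) ≤ ENNReal.ofReal (18 * t * s / N) * μ (ball 0 N) := by
  have hsr : (0 : ℝ) < s := by exact_mod_cast hs
  by_cases hbig : 1 ≤ 18 * t * s / N
  · refine (measure_mono Set.inter_subset_right).trans ?_
    exact le_mul_of_one_le_left (zero_le) (ENNReal.one_le_ofReal.2 hbig)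
  push Not at hbig
  set A := {v | |ℓ v| ≤ t} ∩ ball (0 : E) N with hA
  have hAm : MeasurableSet A :=
    (measurableSet_le (by fun_prop) measurable_const).inter measurableSet_ball
  set x := N / (3 * t * s) with hx
  have hx0 : 0 < x := by positivity
  have hx6 : 6 < x := by
    rw [hx, lt_div_iff₀ (by positivity)]
    rw [div_lt_one hN] at hbig
    linarith
  -- The number of translates, by multiples of `3t` along `e`, that cost at most `N/s` in radius.
  set m := ⌊x⌋₊ with hm
  have hm1 : (m : ℝ) ≤ x := Nat.floor_le hx0.le
  have hm2 : x / 2 ≤ m := by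
    have := Nat.lt_floor_add_one x
    linarith
  have hmt : 3 * t * m ≤ N / s := by
    have h1 := mul_le_mul_of_nonneg_left hm1 (show 0 ≤ 3 * t by positivity)
    refine h1.trans (le_of_eq ?_)
    rw [hx]; field_simp
  have hdisj : (↑(Finset.range m) : Set ℕ).PairwiseDisjoint
      fun j => (fun v => v + (-(3 * t * j)) • e) ⁻¹' A := by
    intro i _ j _ hij
    rw [Function.onFun, Set.disjoint_left]
    rintro v ⟨h1, -⟩ ⟨h2, -⟩
    simp only [Set.mem_ofPred_eq, map_add, map_smul, hℓ, smul_eq_mul, mul_one, abs_le] at h1 h2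
    rcases lt_or_gt_of_ne hij with h | h
    · have : (i : ℝ) + 1 ≤ j := by exact_mod_cast h
      have := mul_le_mul_of_nonneg_left this ht.le
      linarith
    · have : (j : ℝ) + 1 ≤ i := by exact_mod_cast h
      have := mul_le_mul_of_nonneg_left this ht.le
      linarith
  have hsub : (⋃ j ∈ Finset.range m, (fun v => v + (-(3 * t * j)) • e) ⁻¹' A) ⊆
      ball (0 : E) (N * (1 + 1 / s)) := by
    refine Set.iUnion₂_subset fun j hj v hv => ?_
    have hj' : (j : ℝ) ≤ m := by exact_mod_cast (Finset.mem_range.1 hj).le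
    have h1 : ‖v + (-(3 * t * j)) • e‖ < N := mem_ball_zero_iff.1 hv.2
    rw [mem_ball_zero_iff]
    have h2 := norm_sub_le (v + (-(3 * t * j)) • e) ((-(3 * t * j)) • e)
    rw [add_sub_cancel_right] at h2
    have h3 : ‖(-(3 * t * j)) • e‖ ≤ 3 * t * j := by
      rw [norm_smul, norm_neg, Real.norm_of_nonneg (by positivity)]
      exact mul_le_of_le_one_right (by positivity) he
    have h4 := mul_le_mul_of_nonneg_left hj' (show 0 ≤ 3 * t by positivity)
    have h5 : N * (1 + 1 / s) = N + N / s := by ring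
    linarith
  have hmeas := measure_mono (μ := μ) hsub
  rw [measure_biUnion_finset hdisj fun j _ => (measurable_add_const _) hAm] at hmeas
  simp only [measure_preimage_add_right, Finset.sum_const, Finset.card_range, nsmul_eq_mul] at hmeas
  have hvol : μ (ball (0 : E) (N * (1 + 1 / s))) ≤ ENNReal.ofReal 3 * μ (ball 0 N) := by
    rw [mul_comm N, Measure.addHaar_ball_mul_of_pos μ 0 (by positivity), hdim]
    gcongr
    have h1 : (1 + 1 / (s : ℝ)) ^ s ≤ Real.exp (1 / s) ^ s :=
      pow_le_pow_left₀ (by positivity) (by linarith [Real.add_one_le_exp (1 / (s : ℝ))]) _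
    rw [← Real.exp_nat_mul, mul_one_div_cancel hsr.ne'] at h1
    linarith [Real.exp_one_lt_d9]
  have hmpos : (0 : ℝ) < m := by linarith
  have h1 : ENNReal.ofReal m * μ A ≤ ENNReal.ofReal 3 * μ (ball 0 N) := by
    rw [ENNReal.ofReal_natCast]; exact hmeas.trans hvol
  have h2 : μ A = ENNReal.ofReal (1 / m) * (ENNReal.ofReal m * μ A) := by
    rw [← mul_assoc, ← ENNReal.ofReal_mul (by positivity), one_div_mul_cancel hmpos.ne',
      ENNReal.ofReal_one, one_mul]
  rw [h2]
  refine (mul_le_mul_right h1 _).trans ?_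
  rw [← mul_assoc, ← ENNReal.ofReal_mul (by positivity)]
  gcongr
  have h3 : (1 : ℝ) / m ≤ 1 / (x / 2) := one_div_le_one_div_of_le (by positivity) hm2
  have h4 : 18 * t * s / N = 1 / (x / 2) * 3 := by rw [hx]; field_simp; norm_num
  rw [h4]
  linarith

/-- The logarithm is dominated by the number of powers of two below its argument. -/
theorem ofReal_log_le_tsum {y : ℝ} (hy : 0 < y) :
    ENNReal.ofReal (Real.log y) ≤ ∑' n : ℕ, if (2 : ℝ) ^ n ≤ y then 1 else 0 := by
  rcases lt_or_ge y 1 with h | h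
  · rw [ENNReal.ofReal_of_nonpos (Real.log_nonpos hy.le h.le)]; exact zero_le
  obtain ⟨n, hn1, hn2⟩ := exists_nat_pow_near h one_lt_two
  refine le_trans ?_ (ENNReal.sum_le_tsum (Finset.range (n + 1)))
  rw [Finset.sum_congr rfl (g := fun _ => (1 : ℝ≥0∞)) fun j hj => ?_]
  · simp only [Finset.sum_const, Finset.card_range, nsmul_eq_mul, mul_one]
    rw [← ENNReal.ofReal_natCast]
    refine ENNReal.ofReal_le_ofReal ?_
    have h1 := Real.log_le_log hy hn2.le
    rw [Real.log_pow] at h1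
    have h2 : Real.log 2 ≤ 1 := by linarith [Real.log_two_lt_d9]
    exact h1.trans (mul_le_of_le_one_right (by positivity) h2)
  · rw [if_pos]
    exact (pow_le_pow_right₀ one_le_two (Nat.lt_succ_iff.1 (Finset.mem_range.1 hj))).trans hn1

/-- `traceCoef` as a continuous linear form. -/
noncomputable def traceL {d : ℕ} (hd : 2 ≤ d) : CoefSpace d →L[ℝ] ℝ :=
  EuclideanSpace.proj (Sum.inl ⟨(0, 1), mem01 hd⟩) +
    EuclideanSpace.proj (Sum.inr ⟨(1, 0), mem10 hd⟩)

theorem traceL_apply {d : ℕ} (hd : 2 ≤ d) (v : CoefSpace d) : traceL hd v = traceCoef hd v := rfl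

theorem traceL_single {d : ℕ} (hd : 2 ≤ d) :
    traceL hd (EuclideanSpace.single (Sum.inl ⟨(0, 1), mem01 hd⟩) 1) = 1 := by
  simp [traceL]

theorem finrank_coefSpace_pos {d : ℕ} (hd : 2 ≤ d) : 0 < Module.finrank ℝ (CoefSpace d) := by
  rw [finrank_euclideanSpace]
  exact Fintype.card_pos_iff.2 ⟨Sum.inl ⟨(0, 1), mem01 hd⟩⟩

theorem finrank_coefSpace_le (d : ℕ) : Module.finrank ℝ (CoefSpace d) ≤ 2 * (d + 1) ^ 2 := by
  rw [finrank_euclideanSpace, Fintype.card_sum, Fintype.card_coe]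
  have h : (coeffIdx d).card ≤ (d + 1) * (d + 1) := by
    refine (Finset.card_filter_le _ _).trans ?_
    simp
  nlinarith

theorem ae_traceCoef_ne {d : ℕ} (hd : 2 ≤ d) :
    ∀ᵐ v : CoefSpace d, traceCoef hd v ≠ 0 := by
  have h := Measure.addHaar_submodule (volume : Measure (CoefSpace d))
    (LinearMap.ker (traceL hd).toLinearMap) (by
      intro h
      have h1 : EuclideanSpace.single (Sum.inl ⟨(0, 1), mem01 hd⟩) (1 : ℝ) ∈
        LinearMap.ker (traceL hd).toLinearMap := by rw [h]; trivial
      have h2 := traceL_single hd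
      rw [LinearMap.mem_ker] at h1
      exact one_ne_zero (h2.symm.trans h1))
  rw [ae_iff]
  refine measure_mono_null (fun v hv => ?_) h
  simp only [ne_eq, not_not, Set.mem_ofPred_eq] at hv
  exact hv

/-- The proportion of the ball on which `5 N √d / |traceCoef|` exceeds `2^n` decays
geometrically once `n` passes a multiple of `log d`. -/
theorem measure_dyadic_le {d : ℕ} (hd : 2 ≤ d) {N : ℝ} (hN : 0 < N) (n : ℕ) :
    volume ({v | |traceL hd v| ≤ 5 * N * Real.sqrt d / 2 ^ n} ∩ ball (0 : CoefSpace d) N) ≤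
      ENNReal.ofReal (2 ^ (12 * (Nat.log 2 d + 1)) / 2 ^ n) * volume (ball (0 : CoefSpace d) N) := by
  have hd0 : (0 : ℝ) < d := by exact_mod_cast (by omega : 0 < d)
  have hd2 : (2 : ℝ) ≤ d := by exact_mod_cast hd
  have hsd : 0 < Real.sqrt d := Real.sqrt_pos.2 hd0
  refine (measure_slab_le volume (traceL hd) (by simp) (traceL_single hd)
    (finrank_coefSpace_pos hd) rfl hN (by positivity)).trans ?_
  refine mul_le_mul' (ENNReal.ofReal_le_ofReal ?_) le_rfl
  set s : ℝ := (Module.finrank ℝ (CoefSpace d) : ℝ) with hs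
  have h1 : 18 * (5 * N * √d / 2 ^ n) * s / N = 90 * s * √d / 2 ^ n := by
    field_simp; ring
  rw [h1]
  gcongr
  have hs1 : s ≤ 2 * (d + 1) ^ 2 := by
    rw [hs]; exact_mod_cast finrank_coefSpace_le d
  have hs0 : 0 ≤ s := by positivity
  have hsq : √d ≤ d := by
    rw [Real.sqrt_le_left hd0.le]; nlinarith
  have h2 : 90 * s * √d ≤ 2 ^ 9 * d ^ 3 := by
    calc 90 * s * √d ≤ 90 * (2 * (d + 1) ^ 2) * d := by gcongr
      _ ≤ 90 * (2 * (9 / 4 * d ^ 2)) * d := by gcongr; nlinarith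
      _ ≤ 2 ^ 9 * d ^ 3 := by nlinarith [pow_pos hd0 3]
  have h3 : (2 : ℝ) ^ 9 * d ^ 3 ≤ (d : ℝ) ^ 12 := by
    calc (2 : ℝ) ^ 9 * d ^ 3 ≤ (d : ℝ) ^ 9 * d ^ 3 := by gcongr
      _ = (d : ℝ) ^ 12 := by ring
  have h4 : (d : ℝ) ≤ 2 ^ (Nat.log 2 d + 1) := by
    exact_mod_cast (Nat.lt_pow_succ_log_self one_lt_two d).le
  calc 90 * s * √d ≤ d ^ 12 := h2.trans h3
    _ ≤ (2 ^ (Nat.log 2 d + 1)) ^ 12 := by gcongr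
    _ = 2 ^ (12 * (Nat.log 2 d + 1)) := by rw [← pow_mul, mul_comm]

/-- Summing `min (1, 2^n₀ / 2^n)`: the first `n₀` terms are at most `1`, the others sum to `2`. -/
theorem tsum_min_geometric_le (n₀ : ℕ) {a : ℕ → ℝ≥0∞} {b : ℝ≥0∞} (h1 : ∀ n, a n ≤ b)
    (h2 : ∀ n, a n ≤ ENNReal.ofReal (2 ^ n₀ / 2 ^ n) * b) : ∑' n, a n ≤ (n₀ + 2 : ℝ≥0∞) * b := by
  rw [← Summable.sum_add_tsum_nat_add' (k := n₀) ENNReal.summable, add_mul]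
  refine add_le_add ?_ ?_
  · refine (Finset.sum_le_card_nsmul _ _ b fun n _ => h1 n).trans ?_
    simp
  · have h3 : ∀ n, a (n + n₀) ≤ (2⁻¹ : ℝ≥0∞) ^ n * b := by
      intro n
      refine (h2 _).trans (le_of_eq ?_)
      have : (2 : ℝ) ^ n₀ / 2 ^ (n + n₀) = (2⁻¹) ^ n := by
        rw [pow_add, inv_pow]; field_simp
      rw [this, ENNReal.ofReal_pow (by norm_num), ENNReal.ofReal_inv_of_pos (by norm_num)]
      simp
    refine (ENNReal.tsum_le_tsum h3).trans ?_
    rw [ENNReal.tsum_mul_right, ENNReal.tsum_geometric, ENNReal.one_sub_inv_two, inv_inv]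

theorem lintegral_limitCycleCount_le {d : ℕ} (hd : 2 ≤ d) {N : ℝ} (hN : 0 < N)
    (hNd : N * Real.sqrt d ≤ 1 / (40 * π)) :
    ∫⁻ v in ball (0 : CoefSpace d) N, limitCycleCount d v ≤
      ENNReal.ofReal (1 / Real.log (3 / 2)) *
        (((12 * (Nat.log 2 d + 1) : ℕ) + 2 : ℝ≥0∞) * volume (ball (0 : CoefSpace d) N)) := by
  have hd0 : (0 : ℝ) < d := by exact_mod_cast (by omega : 0 < d)
  have hsd : 0 < Real.sqrt d := Real.sqrt_pos.2 hd0
  have hlog : 0 < Real.log (3 / 2) := Real.log_pos (by norm_num)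
  set S : ℕ → Set (CoefSpace d) := fun n => {v | |traceL hd v| ≤ 5 * N * Real.sqrt d / 2 ^ n} with hS
  have hSm : ∀ n, MeasurableSet (S n) := fun n =>
    measurableSet_le (by fun_prop) measurable_const
  have hpt : ∀ᵐ v : CoefSpace d, v ∈ ball (0 : CoefSpace d) N → limitCycleCount d v ≤
      ENNReal.ofReal (1 / Real.log (3 / 2)) * ∑' n, (S n).indicator (fun _ => (1 : ℝ≥0∞)) v := by
    filter_upwards [ae_traceCoef_ne hd] with v hv hvN
    have htp : 0 < |traceCoef hd v| := abs_pos.2 hv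
    refine (limitCycleCount_le hd (mem_ball_zero_iff.1 hvN).le hNd hv).trans ?_
    rw [div_eq_mul_one_div, mul_comm, ENNReal.ofReal_mul (by positivity)]
    gcongr
    refine (ofReal_log_le_tsum (by positivity)).trans (le_of_eq (tsum_congr fun n => ?_))
    have : ((2 : ℝ) ^ n ≤ 5 * N * √d / |traceCoef hd v|) ↔ v ∈ S n := by
      simp only [hS, Set.mem_ofPred_eq, traceL_apply]
      rw [le_div_iff₀ htp, le_div_iff₀ (by positivity), mul_comm]
    simp only [this, Set.indicator]
  refine (setLIntegral_mono_ae' measurableSet_ball hpt).trans ?_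
  have hSi : ∀ n, Measurable ((S n).indicator fun _ => (1 : ℝ≥0∞)) := fun n =>
    measurable_const.indicator (hSm n)
  rw [lintegral_const_mul _ (Measurable.tsum hSi), lintegral_tsum fun n => (hSi n).aemeasurable]
  gcongr
  refine tsum_min_geometric_le _ (fun n => ?_) fun n => ?_
  · refine (lintegral_indicator_one_le _).trans ?_
    rw [Measure.restrict_apply (hSm n)]
    exact measure_mono Set.inter_subset_right
  · refine (lintegral_indicator_one_le _).trans ?_
    rw [Measure.restrict_apply (hSm n)]
    exact measure_dyadic_le hd hN n

/-- there is an absolute constant `c > 0` such that for `d ≥ 2`,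
`s = d(d+3)` and `N ≤ 1/(40π√d)`, the average number of limit cycles in `D_{1/2}` over
the ball `E(s,N)` of coefficient vectors is at most `c (log d)²`. -/
theorem statement2 :
    ∃ c : ℝ, 0 < c ∧
      ∀ d : ℕ, 2 ≤ d → ∀ N : ℝ, N ≤ 1 / (40 * π * Real.sqrt d) →
        ∫⁻ v in ball (0 : CoefSpace d) N, limitCycleCount d v
          ≤ ENNReal.ofReal (c * Real.log d ^ 2) * volume (ball (0 : CoefSpace d) N) := by
  have hlog2 : 0 < Real.log 2 := Real.log_pos one_lt_two
  have hlog : 0 < Real.log (3 / 2) := Real.log_pos (by norm_num)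
  refine ⟨26 / (Real.log 2 ^ 2 * Real.log (3 / 2)), by positivity, fun d hd N hN => ?_⟩
  rcases le_or_gt N 0 with hN0 | hN0
  · rw [ball_eq_empty.2 hN0]; simp
  have hd0 : (0 : ℝ) < d := by exact_mod_cast (by omega : 0 < d)
  have hsd : 0 < Real.sqrt d := Real.sqrt_pos.2 hd0
  have hNd : N * Real.sqrt d ≤ 1 / (40 * π) := by
    rw [le_div_iff₀ (by positivity)] at hN ⊢
    linarith
  refine (lintegral_limitCycleCount_le hd hN0 hNd).trans ?_
  rw [← mul_assoc]
  gcongr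
  have hcast : (((12 * (Nat.log 2 d + 1) : ℕ) + 2 : ℝ≥0∞)) =
      ENNReal.ofReal ((12 * (Nat.log 2 d + 1) + 2 : ℕ)) := by
    rw [ENNReal.ofReal_natCast]; push_cast; rfl
  rw [hcast, ← ENNReal.ofReal_mul (by positivity)]
  refine ENNReal.ofReal_le_ofReal ?_
  set L := Nat.log 2 d with hL
  have hL1 : 1 ≤ L := Nat.log_pos one_lt_two hd
  have hL1' : (1 : ℝ) ≤ L := by exact_mod_cast hL1
  have hLd : L * Real.log 2 ≤ Real.log d := by
    rw [← Real.log_pow]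
    refine Real.log_le_log (by positivity) ?_
    exact_mod_cast Nat.pow_log_le_self 2 (by omega)
  have hdd : Real.log 2 ≤ Real.log d := Real.log_le_log two_pos (by exact_mod_cast hd)
  have h1 : L * Real.log 2 ^ 2 ≤ Real.log d ^ 2 := by
    calc L * Real.log 2 ^ 2 = L * Real.log 2 * Real.log 2 := by ring
      _ ≤ Real.log d * Real.log d := mul_le_mul hLd hdd hlog2.le (by positivity)
      _ = Real.log d ^ 2 := by ring
  calc 1 / Real.log (3 / 2) * ((12 * (L + 1) + 2 : ℕ) : ℝ)
      ≤ 1 / Real.log (3 / 2) * (26 * L) := by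
        gcongr; push_cast; linarith
    _ = 26 / (Real.log 2 ^ 2 * Real.log (3 / 2)) * (L * Real.log 2 ^ 2) := by
        field_simp
    _ ≤ _ := by gcongr
end
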